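/- Let A_Γ be a 2-dimensional Artin group. Let e1 and e2 be edges of Γ with labels ≥ 3 and let g1, g2 ∈ A_Γ. If the cosets g1·⟨Δ_{e1}⟩ and g2·⟨Δ_{e2}⟩ are at finite Hausdorff distance with respect to the word metric, then g1·A_{e1} = g2·A_{e2}, where A_{e_i} is the subgroup generated by the two endpoints of e_i (parallel diamond lines lie in the same block). Moreover, for any vertex a of Γ and any g ∈ A_Γ, the coset g·⟨a⟩ is not at finite Hausdorff distance from g1·⟨Δ_{e1}⟩ (parallel singular lines are of the same type). -/

import Mathlib

/-- The alternating product `x y x y ⋯` with `n` factors. -/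
def altProd {G : Type*} [Monoid G] : ℕ → G → G → G
  | 0, _, _ => 1
  | n + 1, x, y => x * altProd n y x

/-- A simple graph with each edge labeled by an integer `≥ 2`. -/
structure LabeledGraph (V : Type*) where
  graph : SimpleGraph V
  label : V → V → ℕ
  label_symm : ∀ a b, label a b = label b a
  two_le_label : ∀ ⦃a b⦄, graph.Adj a b → 2 ≤ label a b

namespace LabeledGraph

variable {V : Type*} (Γ : LabeledGraph V)

/-- The Artin relations `prod(a,b;m) = prod(b,a;m)` associated to a labeled graph,
as elements of the free group on the vertices. -/
def artinRels : Set (FreeGroup V) :=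
  { r | ∃ a b, Γ.graph.Adj a b ∧
      r = altProd (Γ.label a b) (FreeGroup.of a) (FreeGroup.of b) *
          (altProd (Γ.label a b) (FreeGroup.of b) (FreeGroup.of a))⁻¹ }

end LabeledGraph

/-- The Artin group with defining labeled graph `Γ`. -/
abbrev ArtinGroup {V : Type*} (Γ : LabeledGraph V) :=
  PresentedGroup Γ.artinRels

/-- The standard generator of the Artin group corresponding to a vertex. -/
def artinGen {V : Type*} (Γ : LabeledGraph V) (v : V) : ArtinGroup Γ :=
  PresentedGroup.of v

/-- Word length of a group element with respect to a set `S` of generators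
(words may use generators and their inverses). -/
noncomputable def wordLength {G : Type*} [Group G] (S : Set G) (g : G) : ℕ :=
  sInf { n | ∃ l : List G, l.length = n ∧ (∀ x ∈ l, x ∈ S ∨ x⁻¹ ∈ S) ∧ l.prod = g }

/-- Word metric with respect to a generating set `S`. -/
noncomputable def wordDist {G : Type*} [Group G] (S : Set G) (g h : G) : ℝ :=
  (wordLength S (g⁻¹ * h) : ℝ)

/-- The word metric on an Artin group with respect to the standard generators. -/
noncomputable def artinDist {V : Type*} (Γ : LabeledGraph V) :
    ArtinGroup Γ → ArtinGroup Γ → ℝ :=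
  wordDist (Set.range (artinGen Γ))

/-- `(L,A)`-quasi-isometric embedding between spaces with distance functions. -/
def IsQIEmbedding {X Y : Type*} (L A : ℝ) (dX : X → X → ℝ) (dY : Y → Y → ℝ)
    (q : X → Y) : Prop :=
  ∀ x x', dX x x' / L - A ≤ dY (q x) (q x') ∧ dY (q x) (q x') ≤ L * dX x x' + A

/-- `(L,A)`-quasi-isometry: an `(L,A)`-quasi-isometric embedding with `A`-dense image. -/
def IsQuasiIsometry {X Y : Type*} (L A : ℝ) (dX : X → X → ℝ) (dY : Y → Y → ℝ)
    (q : X → Y) : Prop :=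
  IsQIEmbedding L A dX dY q ∧ ∀ y : Y, ∃ x : X, dY (q x) y ≤ A

/-- CLTTF: connected with at least three vertices, large type, triangle free. -/
def LabeledGraph.CLTTF {V : Type*} (Γ : LabeledGraph V) : Prop :=
  Γ.graph.Connected ∧ 3 ≤ Nat.card V ∧
    (∀ ⦃a b⦄, Γ.graph.Adj a b → 3 ≤ Γ.label a b) ∧ Γ.graph.CliqueFree 3

/-- A decomposition of `Γ` as a union of two full subgraphs (given by vertex sets
`S₁`, `S₂`, each different from `T`) intersecting along `T`. -/
def LabeledGraph.IsSepDecomp {V : Type*} (Γ : LabeledGraph V) (S₁ S₂ T : Set V) : Prop :=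
  S₁ ∪ S₂ = Set.univ ∧ S₁ ∩ S₂ = T ∧ S₁ ≠ T ∧ S₂ ≠ T ∧
    ∀ ⦃a b⦄, Γ.graph.Adj a b → (a ∈ S₁ ∧ b ∈ S₁) ∨ (a ∈ S₂ ∧ b ∈ S₂)

/-- `Γ` has a separating vertex or a separating edge. -/
def LabeledGraph.HasSeparatingVertexOrEdge {V : Type*} (Γ : LabeledGraph V) : Prop :=
  (∃ v : V, ∃ S₁ S₂ : Set V, Γ.IsSepDecomp S₁ S₂ {v}) ∨
    ∃ a b : V, Γ.graph.Adj a b ∧ ∃ S₁ S₂ : Set V, Γ.IsSepDecomp S₁ S₂ {a, b}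

/-- An isomorphism of labeled graphs: a graph isomorphism preserving edge labels. -/
structure LabeledGraphIso {V V' : Type*} (Γ : LabeledGraph V) (Γ' : LabeledGraph V') where
  toEquiv : V ≃ V'
  adj_iff : ∀ a b, Γ'.graph.Adj (toEquiv a) (toEquiv b) ↔ Γ.graph.Adj a b
  label_eq : ∀ ⦃a b⦄, Γ.graph.Adj a b → Γ'.label (toEquiv a) (toEquiv b) = Γ.label a b

/-- `f` is an isometry for the distance function `d`. -/
def IsIsometryOf {X : Type*} (d : X → X → ℝ) (f : X → X) : Prop :=
  ∀ x y, d (f x) (f y) = d x y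

/-- The left coset `g•H` as a set. -/
def leftCosetSet {G : Type*} [Group G] (g : G) (H : Subgroup G) : Set G :=
  (fun x => g * x) '' (H : Set G)

/-- The standard subgroup generated by the two endpoints of an edge. -/
def edgeSubgroup {V : Type*} (Γ : LabeledGraph V) (a b : V) : Subgroup (ArtinGroup Γ) :=
  Subgroup.closure {artinGen Γ a, artinGen Γ b}

/-- The standard subgroup generated by a set of vertices. -/
def standardSubgroup {V : Type*} (Γ : LabeledGraph V) (S : Set V) :
    Subgroup (ArtinGroup Γ) :=
  Subgroup.closure (artinGen Γ '' S)

/-- The element `Δ_e = prod(a,b;m)` associated to an edge `e = {a,b}` of label `m`. -/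
def artinDelta {V : Type*} (Γ : LabeledGraph V) (a b : V) : ArtinGroup Γ :=
  altProd (Γ.label a b) (artinGen Γ a) (artinGen Γ b)

/-- A leaf of a graph: a vertex with a unique neighbour. -/
def LabeledGraph.IsLeaf {V : Type*} (Γ : LabeledGraph V) (a : V) : Prop :=
  ∃! b, Γ.graph.Adj a b

/-- A stable vertex: not a leaf, or a leaf whose unique incident edge has odd label
and whose other endpoint is not a leaf. -/
def LabeledGraph.StableVertex {V : Type*} (Γ : LabeledGraph V) (a : V) : Prop :=
  ¬ Γ.IsLeaf a ∨
    (Γ.IsLeaf a ∧ ∃ b, Γ.graph.Adj a b ∧ Odd (Γ.label a b) ∧ ¬ Γ.IsLeaf b)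

/-- Stable cosets: left cosets of cyclic subgroups `⟨Δ_e⟩` for an edge `e`, or `⟨a⟩`
for a stable vertex `a`. -/
def StableCoset {V : Type*} (Γ : LabeledGraph V) (C : Set (ArtinGroup Γ)) : Prop :=
  (∃ (g : ArtinGroup Γ) (a b : V), Γ.graph.Adj a b ∧
      C = leftCosetSet g (Subgroup.zpowers (artinDelta Γ a b))) ∨
    ∃ (g : ArtinGroup Γ) (a : V), Γ.StableVertex a ∧
      C = leftCosetSet g (Subgroup.zpowers (artinGen Γ a))

/-- The Hausdorff distance between `A` and `B` (w.r.t. the distance function `d`)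
is less than `D`. -/
def HausdorffClose {X : Type*} (d : X → X → ℝ) (D : ℝ) (A B : Set X) : Prop :=
  (∀ a ∈ A, ∃ b ∈ B, d a b < D) ∧ ∀ b ∈ B, ∃ a ∈ A, d a b < D

/-- Two subsets are parallel if they are at finite Hausdorff distance. -/
def CoarseParallel {X : Type*} (d : X → X → ℝ) (A B : Set X) : Prop :=
  ∃ D : ℝ, HausdorffClose d D A B

/-- A `2`-dimensional Artin group: every triangle with labels `p, q, r` satisfies
`1/p + 1/q + 1/r ≤ 1`. -/
def LabeledGraph.TwoDimensional {V : Type*} (Γ : LabeledGraph V) : Prop :=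
  ∀ a b c : V, Γ.graph.Adj a b → Γ.graph.Adj b c → Γ.graph.Adj a c →
    (1 / (Γ.label a b : ℚ)) + 1 / (Γ.label b c : ℚ) + 1 / (Γ.label a c : ℚ) ≤ 1

/-!
Two coarsely parallel cosets of `⟨x⟩` and `⟨y⟩` are close at infinitely many points, so by
pigeonhole a nontrivial power of `x` is conjugate to a power of `y`. Suppose that a power `z ≠ 1` of
`Δ²`, for an edge `e₁` of label at least `3`, is conjugate to an element of the subgroup of an edge
or to a power of a generator. The van Kampen diagrams of the conjugacy close up to a diagram on the
sphere. Its vertices of one colour read words in the Artin groups of edges, those of the other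
colour powers of single generators, and only two of them, the defects, read nontrivial elements.
The cosets of `⟨z⟩` at which the vertices lie tell the two defects apart, unless the second one is a
word in `A_{e₁}` read over the same coset of `A_{e₁}`, which is the conclusion sought.

Reducing the diagram never merges defects that are told apart, and it ends with an irreducible
diagram. There the curvature is nonpositive away from the two defects and less than `4π` in total
at these: around an edge of label `m` one reads at least `2m` syllables, because shorter
alternating words are nontrivial in the dihedral Artin group, as a representation in `SL₂(ℝ)` shows;
and the corners of a triangular face satisfy `1/p + 1/q + 1/r ≤ 1`. This contradicts Gauss–Bonnet.
-/

namespace Hypermap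

open Equiv
open Equiv.Perm hiding Disjoint

section Cycles

variable {S : Type*}

/-- The finite set `O` is mapped into itself by the permutation `p`. -/
def Invariant (O : Finset S) (p : Perm S) : Prop := ∀ s ∈ O, p s ∈ O

/-- The cycle of `p` through `s`, fixed points being cycles of length one. -/
def cycle (p : Perm S) (s : S) : Set S := {t | p.SameCycle s t}

/-- The number of cycles of `p` meeting `O`. -/
noncomputable def cycleCount (O : Finset S) (p : Perm S) : ℕ := (cycle p '' O).ncard

theorem mem_cycle {p : Perm S} {s t : S} : t ∈ cycle p s ↔ p.SameCycle s t := Iff.rfl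

theorem cycle_eq_iff {p : Perm S} {s t : S} : cycle p s = cycle p t ↔ p.SameCycle s t :=
  ⟨fun h => mem_cycle.1 (h ▸ SameCycle.refl p t),
    fun h => Set.ext fun _ => ⟨h.symm.trans, h.trans⟩⟩

theorem sameCycle_apply (p : Perm S) (s : S) : p.SameCycle s (p s) :=
  sameCycle_apply_right.2 (.refl p s)

theorem sameCycle_inv_apply (p : Perm S) (s : S) : p.SameCycle s (p⁻¹ s) := by
  simpa using (sameCycle_apply p (p⁻¹ s)).symm

theorem Invariant.mul {O : Finset S} {p q : Perm S} (hp : Invariant O p) (hq : Invariant O q) :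
    Invariant O (p * q) :=
  fun s hs => hp _ (hq s hs)

theorem mul_swap_mul_swap [DecidableEq S] (q : Perm S) (x y : S) :
    q * swap x y * swap x y = q := by
  rw [mul_assoc, swap_mul_self, mul_one]

theorem Invariant.union [DecidableEq S] {O A : Finset S} {p : Perm S} (hO : Invariant O p)
    (hA : Invariant A p) : Invariant (O ∪ A) p :=
  fun s hs => Finset.mem_union.2 ((Finset.mem_union.1 hs).imp (hO s) (hA s))

theorem invariant_swap [DecidableEq S] {O : Finset S} {x y : S} (h : x ∈ O ↔ y ∈ O) :
    Invariant O (swap x y) := by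
  intro s hs
  rw [swap_apply_def]
  grind

theorem Invariant.mul_swap [DecidableEq S] {O : Finset S} {q : Perm S} (hq : Invariant O q)
    {x y : S} (h : x ∈ O ↔ y ∈ O) : Invariant O (q * swap x y) :=
  hq.mul (invariant_swap h)

theorem Invariant.of_mul_swap [DecidableEq S] {O : Finset S} {q : Perm S} {x y : S}
    (hq : Invariant O (q * swap x y)) (h : x ∈ O ↔ y ∈ O) : Invariant O q :=
  mul_swap_mul_swap q x y ▸ hq.mul_swap h

theorem cycleCount_inv (O : Finset S) (p : Perm S) : cycleCount O p⁻¹ = cycleCount O p := by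
  have h : cycle p⁻¹ = cycle p := funext fun s => Set.ext fun t => sameCycle_inv
  rw [cycleCount, h, cycleCount]

theorem cycleCount_of_fixed {O : Finset S} {q : Perm S} (h : ∀ s ∈ O, q s = s) :
    cycleCount O q = O.card := by
  rw [cycleCount, Set.InjOn.ncard_image, Set.ncard_coe_finset]
  exact fun s hs t _ hst => (cycle_eq_iff.1 hst).eq_of_left (h s hs)

theorem cycleCount_eq_one {O : Finset S} {p : Perm S} (hO : O.Nonempty)
    (h : ∀ s ∈ O, ∀ t ∈ O, p.SameCycle s t) : cycleCount O p = 1 := by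
  obtain ⟨s, hs⟩ := hO
  rw [cycleCount, Set.ncard_eq_one]
  exact ⟨cycle p s, Set.eq_singleton_iff_unique_mem.2
    ⟨⟨s, hs, rfl⟩, by rintro _ ⟨t, ht, rfl⟩; exact cycle_eq_iff.2 (h t ht s hs)⟩⟩

variable [Finite S]

theorem mem_of_sameCycle {p : Perm S} {A : Set S} (hA : ∀ s ∈ A, p s ∈ A) {s t : S}
    (h : p.SameCycle s t) (hs : s ∈ A) : t ∈ A := by
  obtain ⟨n, rfl⟩ := h.exists_nat_pow_eq
  exact iterate_eq_pow p n ▸ Set.MapsTo.iterate hA n hs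

theorem Invariant.mem_of_sameCycle {O : Finset S} {p : Perm S} (h : Invariant O p) {s t : S}
    (hst : p.SameCycle s t) (hs : s ∈ O) : t ∈ O :=
  Hypermap.mem_of_sameCycle (A := (O : Set S)) h hst hs

theorem Invariant.apply_mem_iff {O : Finset S} {p : Perm S} (h : Invariant O p) {s : S} :
    p s ∈ O ↔ s ∈ O :=
  ⟨h.mem_of_sameCycle (sameCycle_apply p s).symm, h s⟩

theorem Invariant.inv {O : Finset S} {p : Perm S} (h : Invariant O p) : Invariant O p⁻¹ :=
  fun s hs => h.mem_of_sameCycle (sameCycle_inv_apply p s) hs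

theorem Invariant.sdiff [DecidableEq S] {O A : Finset S} {p : Perm S} (hO : Invariant O p)
    (hA : Invariant A p) : Invariant (O \ A) p := by
  intro s hs
  rw [Finset.mem_sdiff] at hs ⊢
  exact ⟨hO s hs.1, fun h => hs.2 (hA.apply_mem_iff.1 h)⟩

theorem sameCycle_of_eqOn {p q : Perm S} {A : Set S} (hA : ∀ s ∈ A, p s ∈ A)
    (hpq : ∀ s ∈ A, p s = q s) {s t : S} (hs : s ∈ A) (h : p.SameCycle s t) :
    q.SameCycle s t := by
  refine (mem_of_sameCycle (A := {u | u ∈ A ∧ q.SameCycle s u}) (fun u hu => ⟨hA u hu.1, ?_⟩)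
    h ⟨hs, .refl _ _⟩).2
  rw [hpq u hu.1]
  exact sameCycle_apply_right.2 hu.2

theorem sameCycle_congr {p q : Perm S} {A : Set S} (hA : ∀ s ∈ A, p s ∈ A)
    (hpq : ∀ s ∈ A, p s = q s) {s t : S} (hs : s ∈ A) : p.SameCycle s t ↔ q.SameCycle s t :=
  ⟨sameCycle_of_eqOn hA hpq hs,
    sameCycle_of_eqOn (fun u hu => hpq u hu ▸ hA u hu) (fun u hu => (hpq u hu).symm) hs⟩

theorem cycleCount_congr {p q : Perm S} {O : Finset S} (hO : Invariant O p)
    (hpq : ∀ s ∈ O, p s = q s) : cycleCount O p = cycleCount O q := by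
  have h : cycle p '' O = cycle q '' O :=
    Set.image_congr fun s hs => Set.ext fun _ => sameCycle_congr hO hpq hs
  rw [cycleCount, h, cycleCount]

theorem cycleCount_union [DecidableEq S] {O₁ O₂ : Finset S} {p : Perm S} (h₁ : Invariant O₁ p)
    (hd : Disjoint O₁ O₂) :
    cycleCount (O₁ ∪ O₂) p = cycleCount O₁ p + cycleCount O₂ p := by
  rw [cycleCount, Finset.coe_union, Set.image_union, Set.ncard_union_eq, cycleCount, cycleCount]
  rw [Set.disjoint_left]
  rintro _ ⟨s, hs, rfl⟩ ⟨t, ht, h⟩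
  exact Finset.disjoint_left.1 hd (h₁.mem_of_sameCycle (cycle_eq_iff.1 h.symm) hs) ht

variable [DecidableEq S]

/-! ### Multiplying a permutation by a transposition -/

theorem sameCycle_mul_swap {q : Perm S} {x y : S} (h : ¬ q.SameCycle x y) :
    (q * swap x y).SameCycle x y := by
  have step : (q * swap x y).SameCycle x (q y) := by
    simpa using sameCycle_apply (q * swap x y) x
  by_contra hn
  refine hn (mem_of_sameCycle (p := q) (s := q y)
    (A := {u | (q * swap x y).SameCycle x u ∧ q.SameCycle y u})
    (fun u hu => ⟨?_, sameCycle_apply_right.2 hu.2⟩) (sameCycle_apply q y).symm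
    ⟨step, sameCycle_apply q y⟩).1
  have hux : u ≠ x := fun e => h (e ▸ hu.2).symm
  have huy : u ≠ y := fun e => hn (e ▸ hu.1)
  simpa [swap_apply_of_ne_of_ne hux huy] using sameCycle_apply_right.2 hu.1

theorem sameCycle_mul_swap_iff_or {q : Perm S} {x y : S} (h : ¬ q.SameCycle x y) {u : S} :
    (q * swap x y).SameCycle x u ↔ q.SameCycle x u ∨ q.SameCycle y u := by
  have hxy := sameCycle_mul_swap h
  constructor
  · refine fun hu => mem_of_sameCycle (A := {u | q.SameCycle x u ∨ q.SameCycle y u})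
      (fun v hv => ?_) hu (Or.inl (.refl _ _))
    simp only [Set.mem_ofPred_eq, Perm.mul_apply, sameCycle_apply_right]
    rcases eq_or_ne v x with rfl | hvx
    · rw [swap_apply_left]
      exact Or.inr (.refl _ _)
    rcases eq_or_ne v y with rfl | hvy
    · rw [swap_apply_right]
      exact Or.inl (.refl _ _)
    rwa [swap_apply_of_ne_of_ne hvx hvy]
  · have hq : ∀ v ∈ cycle (q * swap x y) x, q v ∈ cycle (q * swap x y) x := by
      intro v hv
      have hswap : (q * swap x y).SameCycle x (swap x y v) := by
        rw [swap_apply_def]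
        split_ifs
        exacts [hxy, .refl _ _, hv]
      simpa [mem_cycle] using sameCycle_apply_right.2 hswap
    rintro (hu | hu)
    exacts [mem_of_sameCycle hq hu (.refl _ _), mem_of_sameCycle hq hu hxy]

theorem sameCycle_mul_swap_iff {q : Perm S} {x y u v : S} (hx : ¬ q.SameCycle u x)
    (hy : ¬ q.SameCycle u y) : (q * swap x y).SameCycle u v ↔ q.SameCycle u v := by
  refine (sameCycle_congr (A := cycle q u) (fun v hv => sameCycle_apply_right.2 hv)
    (fun v hv => ?_) (.refl _ _)).symm
  have hvx : v ≠ x := by rintro rfl; exact hx hv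
  have hvy : v ≠ y := by rintro rfl; exact hy hv
  rw [Perm.mul_apply, swap_apply_of_ne_of_ne hvx hvy]

theorem not_sameCycle_mul_swap {q : Perm S} {x y : S} (hne : x ≠ y) (h : q.SameCycle x y) :
    ¬ (q * swap x y).SameCycle x y := by
  have hex : ∃ n, (q ^ n) x = y := h.exists_nat_pow_eq
  set n := Nat.find hex
  have hn : (q ^ n) x = y := Nat.find_spec hex
  have hmin : ∀ i < n, (q ^ i) x ≠ y := fun i hi => Nat.find_min hex hi
  have hn0 : n ≠ 0 := fun h0 => hne (by simpa [h0] using hn)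
  have hx : ∀ i, 1 ≤ i → i ≤ n → (q ^ i) x ≠ x := by
    intro i h1 hi hix
    refine hmin (n - i) (by omega) ?_
    conv_lhs => rw [← hix]
    rw [← Perm.mul_apply, ← pow_add, Nat.sub_add_cancel hi, hn]
  -- The arc `q x, q² x, …, y` of the cycle is closed under `q * swap x y` and avoids `x`.
  intro hs
  obtain ⟨i, h1, hi, hix⟩ : x ∈ {u | ∃ i, 1 ≤ i ∧ i ≤ n ∧ (q ^ i) x = u} := by
    refine mem_of_sameCycle (p := q * swap x y) ?_ hs.symm ⟨n, by omega, le_rfl, hn⟩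
    rintro _ ⟨i, h1, hi, rfl⟩
    rcases hi.lt_or_eq with hi | rfl
    · refine ⟨i + 1, by omega, by omega, ?_⟩
      rw [Perm.mul_apply, swap_apply_of_ne_of_ne (hx i h1 hi.le) (hmin i hi), pow_succ',
        Perm.mul_apply]
    · refine ⟨1, le_rfl, by omega, ?_⟩
      rw [hn, Perm.mul_apply, swap_apply_right, pow_one]
  exact hx i h1 hi hix

theorem cycle_mul_swap_image {O : Finset S} {q : Perm S} {x y : S} (hx : x ∈ O)
    (h : ¬ q.SameCycle x y) : cycle (q * swap x y) '' O =
      insert (cycle (q * swap x y) x) (cycle q '' O \ {cycle q x, cycle q y}) := by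
  have hout : ∀ u, ¬ q.SameCycle u x → ¬ q.SameCycle u y →
      cycle (q * swap x y) u = cycle q u :=
    fun u h1 h2 => Set.ext fun v => sameCycle_mul_swap_iff h1 h2
  ext c
  simp only [Set.mem_image, Set.mem_insert_iff, Set.mem_sdiff, Set.mem_singleton_iff, not_or]
  constructor
  · rintro ⟨u, hu, rfl⟩
    by_cases h1 : q.SameCycle u x
    · exact Or.inl (cycle_eq_iff.2 ((sameCycle_mul_swap_iff_or h).2 (Or.inl h1.symm)).symm)
    by_cases h2 : q.SameCycle u y
    · exact Or.inl (cycle_eq_iff.2 ((sameCycle_mul_swap_iff_or h).2 (Or.inr h2.symm)).symm)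
    rw [hout u h1 h2, cycle_eq_iff, cycle_eq_iff]
    exact Or.inr ⟨⟨u, hu, rfl⟩, h1, h2⟩
  · rintro (rfl | ⟨⟨u, hu, rfl⟩, h1, h2⟩)
    · exact ⟨x, hx, rfl⟩
    · rw [cycle_eq_iff] at h1 h2
      exact ⟨u, hu, hout u h1 h2⟩

theorem cycleCount_mul_swap_of_not {O : Finset S} {q : Perm S} {x y : S} (hx : x ∈ O)
    (hy : y ∈ O) (h : ¬ q.SameCycle x y) :
    cycleCount O (q * swap x y) + 1 = cycleCount O q := by
  have hnot : cycle (q * swap x y) x ∉ cycle q '' O \ {cycle q x, cycle q y} := by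
    rintro ⟨⟨u, -, hu⟩, -⟩
    have hux : q.SameCycle u x := by rw [← mem_cycle, hu]; exact .refl _ _
    have huy : q.SameCycle u y := by rw [← mem_cycle, hu]; exact sameCycle_mul_swap h
    exact h (hux.symm.trans huy)
  have hsub : {cycle q x, cycle q y} ⊆ cycle q '' O :=
    Set.insert_subset ⟨x, hx, rfl⟩ (Set.singleton_subset_iff.2 ⟨y, hy, rfl⟩)
  have hcard := Set.ncard_sdiff_add_ncard_of_subset hsub
  rw [Set.ncard_pair fun e => h (cycle_eq_iff.1 e)] at hcard
  rw [cycleCount, cycleCount, cycle_mul_swap_image hx h, Set.ncard_insert_of_notMem hnot, ← hcard]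

theorem cycleCount_mul_swap_of_sameCycle {O : Finset S} {q : Perm S} {x y : S} (hx : x ∈ O)
    (hy : y ∈ O) (hne : x ≠ y) (h : q.SameCycle x y) :
    cycleCount O (q * swap x y) = cycleCount O q + 1 := by
  have := cycleCount_mul_swap_of_not hx hy (not_sameCycle_mul_swap hne h)
  rwa [mul_swap_mul_swap, eq_comm] at this

end Cycles

end Hypermap

namespace Hypermap

open Equiv
open Equiv.Perm hiding Disjoint

section Genus

variable {S : Type*}

/-- `O` is an orbit of the group generated by the permutations `f` and `g`, characterised as a
minimal nonempty invariant set. -/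
structure IsOrbit (O : Finset S) (f g : Perm S) : Prop where
  nonempty : O.Nonempty
  left : Invariant O f
  right : Invariant O g
  eq_of_subset : ∀ A ⊆ O, A.Nonempty → Invariant A f → Invariant A g → A = O

/-- The Euler characteristic of the hypermap on the sides `O` whose two kinds of vertices are the
cycles of `f` and `g` and whose faces are the cycles of `f⁻¹ * g`. -/
noncomputable def eulerChar (O : Finset S) (f g : Perm S) : ℤ :=
  cycleCount O f + cycleCount O g + cycleCount O (f⁻¹ * g) - O.card

/-- The hypermap on the sides `O` given by `f` and `g` is a connected map on the sphere. -/
structure Planar (O : Finset S) (f g : Perm S) : Prop extends IsOrbit O f g where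
  eulerChar_eq : eulerChar O f g = 2

theorem eulerChar_comm (O : Finset S) (f g : Perm S) : eulerChar O g f = eulerChar O f g := by
  rw [eulerChar, eulerChar, ← cycleCount_inv O (g⁻¹ * f), mul_inv_rev, inv_inv]
  ring

theorem Planar.symm {O : Finset S} {f g : Perm S} (h : Planar O f g) : Planar O g f where
  nonempty := h.nonempty
  left := h.right
  right := h.left
  eq_of_subset A hA hn hg hf := h.eq_of_subset A hA hn hf hg
  eulerChar_eq := (eulerChar_comm O f g).trans h.eulerChar_eq

theorem IsOrbit.congr {O : Finset S} {f g f' g' : Perm S} (h : IsOrbit O f g)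
    (hf : ∀ s ∈ O, f s = f' s) (hg : ∀ s ∈ O, g s = g' s) : IsOrbit O f' g' where
  nonempty := h.nonempty
  left s hs := hf s hs ▸ h.left s hs
  right s hs := hg s hs ▸ h.right s hs
  eq_of_subset A hA hn hAf hAg := h.eq_of_subset A hA hn
    (fun s hs => hf s (hA hs) ▸ hAf s hs) (fun s hs => hg s (hA hs) ▸ hAg s hs)

/-- The permutation obtained from `g` by removing `t` from its cycle and fixing it. -/
def cut [DecidableEq S] (g : Perm S) (t : S) : Perm S := g * swap t (g⁻¹ t)

theorem cut_apply_self [DecidableEq S] (g : Perm S) (t : S) : cut g t t = t := by simp [cut]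

theorem cut_apply_of_notMem [DecidableEq S] {O : Finset S} {g : Perm S} (hg : Invariant O g)
    {s t : S} (hs : s ∈ O) (ht : t ∉ O) : cut g t s = g s := by
  rw [cut, Perm.mul_apply, swap_apply_of_ne_of_ne]
  · rintro rfl
    exact ht hs
  · rintro rfl
    exact ht (by simpa using hg _ hs)

variable [Finite S]

theorem Planar.congr {O : Finset S} {f g f' g' : Perm S} (h : Planar O f g)
    (hf : ∀ s ∈ O, f s = f' s) (hg : ∀ s ∈ O, g s = g' s) : Planar O f' g' where
  toIsOrbit := h.toIsOrbit.congr hf hg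
  eulerChar_eq := by
    have hfg : ∀ s ∈ O, (f⁻¹ * g) s = (f'⁻¹ * g') s := fun s hs => by
      have hmem := h.left.inv _ (h.right s hs)
      rw [Perm.mul_apply, Perm.mul_apply, Perm.eq_inv_iff_eq, ← hf _ hmem, ← hg s hs]
      exact f.apply_symm_apply _
    rw [← h.eulerChar_eq, eulerChar, eulerChar, cycleCount_congr h.left hf,
      cycleCount_congr h.right hg, cycleCount_congr (h.left.inv.mul h.right) hfg]

theorem exists_isOrbit {O : Finset S} {f g : Perm S} (hf : Invariant O f) (hg : Invariant O g)
    {x : S} (hx : x ∈ O) : ∃ A ⊆ O, x ∈ A ∧ IsOrbit A f g := by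
  classical
  obtain ⟨A, hAO, ⟨hxA, hAf, hAg⟩, hmin⟩ := exists_minimal_le_of_wellFoundedLT
    (fun A : Finset S => x ∈ A ∧ Invariant A f ∧ Invariant A g) O ⟨hx, hf, hg⟩
  refine ⟨A, hAO, hxA, ⟨x, hxA⟩, hAf, hAg, fun B hB hBn hBf hBg => ?_⟩
  by_cases hxB : x ∈ B
  · exact hB.antisymm (hmin ⟨hxB, hBf, hBg⟩ hB)
  · obtain ⟨b, hb⟩ := hBn
    have hle := hmin ⟨Finset.mem_sdiff.2 ⟨hxA, hxB⟩, hAf.sdiff hBf, hAg.sdiff hBg⟩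
      Finset.sdiff_subset
    exact absurd hb (Finset.mem_sdiff.1 (hle (hB hb))).2

theorem IsOrbit.eulerChar_of_fixed {O : Finset S} {f g : Perm S} (h : IsOrbit O f g)
    (hg : ∀ s ∈ O, g s = s) : eulerChar O f g = 2 := by
  classical
  have hcycle : ∀ s ∈ O, ∀ t ∈ O, f.SameCycle s t := fun s hs t ht => by
    have hA : O.filter (f.SameCycle s) = O := by
      refine h.eq_of_subset _ (Finset.filter_subset _ _) ⟨s, by simp [hs, SameCycle.refl]⟩
        (fun u hu => ?_) fun u hu => by rwa [hg u (Finset.mem_filter.1 hu).1]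
      rw [Finset.mem_filter] at hu ⊢
      exact ⟨h.left u hu.1, sameCycle_apply_right.2 hu.2⟩
    exact (Finset.mem_filter.1 (hA.symm ▸ ht)).2
  have hcorner : cycleCount O (f⁻¹ * g) = cycleCount O f := by
    rw [← cycleCount_inv O f]
    exact cycleCount_congr (h.left.inv.mul h.right) fun s hs => by rw [Perm.mul_apply, hg s hs]
  rw [eulerChar, hcorner, cycleCount_eq_one h.nonempty hcycle, cycleCount_of_fixed hg]
  ring

theorem eulerChar_union [DecidableEq S] {O₁ O₂ : Finset S} {f g : Perm S} (h : IsOrbit O₁ f g)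
    (hd : Disjoint O₁ O₂) :
    eulerChar (O₁ ∪ O₂) f g = eulerChar O₁ f g + eulerChar O₂ f g := by
  rw [eulerChar, eulerChar, eulerChar, cycleCount_union h.left hd, cycleCount_union h.right hd,
    cycleCount_union (h.left.inv.mul h.right) hd, Finset.card_union_of_disjoint hd]
  push_cast
  ring

open scoped Classical in
theorem cycleCount_mul_swap [DecidableEq S] {O : Finset S} (q : Perm S) {x y : S}
    (hx : x ∈ O) (hy : y ∈ O) (hne : x ≠ y) : (cycleCount O (q * swap x y) : ℤ) =
      cycleCount O q + if q.SameCycle x y then 1 else -1 := by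
  split_ifs with h
  · rw [cycleCount_mul_swap_of_sameCycle hx hy hne h]
    push_cast
    rfl
  · rw [← cycleCount_mul_swap_of_not hx hy h]
    push_cast
    ring

open scoped Classical in
theorem eulerChar_mul_swap [DecidableEq S] {O : Finset S} (f g : Perm S) {x y : S}
    (hx : x ∈ O) (hy : y ∈ O) (hne : x ≠ y) : eulerChar O f (g * swap x y) = eulerChar O f g +
      (if g.SameCycle x y then 1 else -1) + if (f⁻¹ * g).SameCycle x y then 1 else -1 := by
  rw [eulerChar, eulerChar, ← mul_assoc, cycleCount_mul_swap g hx hy hne,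
    cycleCount_mul_swap (f⁻¹ * g) hx hy hne]
  ring

theorem Invariant.sameCycle_of_mul_swap [DecidableEq S] {A : Finset S} {q : Perm S} {x y : S}
    (hA : Invariant A (q * swap x y)) (hx : x ∈ A) (hy : y ∉ A) : q.SameCycle x y := by
  by_contra h
  exact hy (hA.mem_of_sameCycle (sameCycle_mul_swap h) hx)

theorem IsOrbit.sameCycle_of_mul_swap [DecidableEq S] {O : Finset S} {f g : Perm S} {x y : S}
    (h : IsOrbit O f (g * swap x y)) (hx : x ∈ O) (hy : y ∉ O) :
    g.SameCycle x y ∧ (f⁻¹ * g).SameCycle x y :=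
  ⟨h.right.sameCycle_of_mul_swap hx hy, Invariant.sameCycle_of_mul_swap
    (mul_assoc f⁻¹ g _ ▸ h.left.inv.mul h.right) hx hy⟩

theorem IsOrbit.mul_swap [DecidableEq S] {O : Finset S} {f g : Perm S} (h : IsOrbit O f g) {x y : S}
    (hx : x ∈ O) (hy : y ∈ O) : IsOrbit O f (g * swap x y) ∨
      ∃ O₁ O₂, x ∈ O₁ ∧ y ∈ O₂ ∧ Disjoint O₁ O₂ ∧ O₁ ∪ O₂ = O ∧
        IsOrbit O₁ f (g * swap x y) ∧ IsOrbit O₂ f (g * swap x y) := by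
  have hg : Invariant O (g * swap x y) := h.right.mul_swap (iff_of_true hx hy)
  have eq_of_iff : ∀ A ⊆ O, A.Nonempty → Invariant A f → Invariant A (g * swap x y) →
      (x ∈ A ↔ y ∈ A) → A = O := fun A hA hn hAf hAg hxy =>
    h.eq_of_subset A hA hn hAf (hAg.of_mul_swap hxy)
  obtain ⟨O₁, hO₁, hx₁, h₁⟩ := exists_isOrbit h.left hg hx
  by_cases hy₁ : y ∈ O₁
  · exact Or.inl (eq_of_iff O₁ hO₁ ⟨x, hx₁⟩ h₁.left h₁.right (iff_of_true hx₁ hy₁) ▸ h₁)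
  obtain ⟨O₂, hO₂, hy₂, h₂⟩ := exists_isOrbit (h.left.sdiff h₁.left) (hg.sdiff h₁.right)
    (Finset.mem_sdiff.2 ⟨hy, hy₁⟩)
  refine Or.inr ⟨O₁, O₂, hx₁, hy₂, Finset.disjoint_sdiff.mono_right hO₂, ?_, h₁, h₂⟩
  refine eq_of_iff _ (Finset.union_subset hO₁ (hO₂.trans Finset.sdiff_subset))
    (h₁.nonempty.mono Finset.subset_union_left) (h₁.left.union h₂.left) (h₁.right.union h₂.right)
    (iff_of_true (Finset.mem_union_left _ hx₁) (Finset.mem_union_right _ hy₂))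

theorem eulerChar_le_two {O : Finset S} {f g : Perm S} (h : IsOrbit O f g) :
    eulerChar O f g ≤ 2 := by
  classical
  cases nonempty_fintype S
  induction hn : g.support.card using Nat.strong_induction_on generalizing g O with
  | _ n ih =>
  by_cases hfix : ∀ s ∈ O, g s = s
  · exact (h.eulerChar_of_fixed hfix).le
  push Not at hfix
  obtain ⟨x, hx, hgx⟩ := hfix
  have hlt : (g * swap x (g x)).support.card < n := by
    rw [mul_swap_eq_swap_mul, ← hn]
    exact card_support_swap_mul fun h => hgx (g.injective h)
  have hχ := eulerChar_mul_swap f g hx (h.right x hx) hgx.symm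
  rw [if_pos (sameCycle_apply g x)] at hχ
  rcases h.mul_swap hx (h.right x hx) with h' | ⟨O₁, O₂, hx₁, hy₂, hd, rfl, h₁, h₂⟩
  · have := ih _ hlt h' rfl
    split_ifs at hχ <;> omega
  · have hc := (h₁.sameCycle_of_mul_swap hx₁ (Finset.disjoint_right.1 hd hy₂)).2
    rw [if_pos hc, eulerChar_union h₁ hd] at hχ
    have := ih _ hlt h₁ rfl
    have := ih _ hlt h₂ rfl
    omega

theorem Planar.mul_swap [DecidableEq S] {O : Finset S} {f g : Perm S} (h : Planar O f g) {x y : S}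
    (hx : x ∈ O) (hy : y ∈ O) (hne : x ≠ y)
    (hxy : g.SameCycle x y ∨ (f⁻¹ * g).SameCycle x y) :
    (¬ (g.SameCycle x y ∧ (f⁻¹ * g).SameCycle x y) ∧ Planar O f (g * swap x y)) ∨
    (g.SameCycle x y ∧ (f⁻¹ * g).SameCycle x y ∧
      ∃ O₁ O₂, x ∈ O₁ ∧ y ∈ O₂ ∧ Disjoint O₁ O₂ ∧ O₁ ∪ O₂ = O ∧
        Planar O₁ f (g * swap x y) ∧ Planar O₂ f (g * swap x y)) := by
  have hχ := eulerChar_mul_swap f g hx hy hne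
  rw [h.eulerChar_eq] at hχ
  rcases h.toIsOrbit.mul_swap hx hy with h' | ⟨O₁, O₂, hx₁, hy₂, hd, rfl, h₁, h₂⟩
  · have hle := eulerChar_le_two h'
    refine Or.inl ⟨fun hboth => ?_, h', ?_⟩
    · rw [if_pos hboth.1, if_pos hboth.2] at hχ
      omega
    · split_ifs at hχ <;> first | omega | tauto
  · obtain ⟨hg, hc⟩ := h₁.sameCycle_of_mul_swap hx₁ (Finset.disjoint_right.1 hd hy₂)
    rw [if_pos hg, if_pos hc, eulerChar_union h₁ hd] at hχ
    have hle₁ := eulerChar_le_two h₁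
    have hle₂ := eulerChar_le_two h₂
    exact Or.inr ⟨hg, hc, O₁, O₂, hx₁, hy₂, hd, rfl, ⟨h₁, by omega⟩, ⟨h₂, by omega⟩⟩

theorem Planar.cut_right [DecidableEq S] {O : Finset S} {f g : Perm S} (h : Planar O f g)
    (t : S) {u : S} (hu : u ∈ O) : ∃ C ⊆ O, u ∈ C ∧ Planar C f (cut g t) := by
  by_cases ht : t ∈ O
  swap
  · exact ⟨O, subset_rfl, hu, h.congr (fun _ _ => rfl) fun s hs =>
      (cut_apply_of_notMem h.right hs ht).symm⟩
  by_cases hne : t = g⁻¹ t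
  · refine ⟨O, subset_rfl, hu, ?_⟩
    rwa [Hypermap.cut, ← hne, swap_self, ← Perm.one_def, mul_one]
  rcases h.mul_swap ht (h.right.inv t ht) hne (Or.inl (sameCycle_inv_apply _ _)) with
    ⟨-, h'⟩ | ⟨-, -, O₁, O₂, -, -, -, rfl, h₁, h₂⟩
  · exact ⟨O, subset_rfl, hu, h'⟩
  rcases Finset.mem_union.1 hu with hu | hu
  · exact ⟨O₁, Finset.subset_union_left, hu, h₁⟩
  · exact ⟨O₂, Finset.subset_union_right, hu, h₂⟩

theorem Planar.cut [DecidableEq S] {O : Finset S} {f g : Perm S} (h : Planar O f g) {t u : S}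
    (hu : u ∈ O) (hut : u ≠ t) : ∃ C ⊆ O, u ∈ C ∧ t ∉ C ∧ Planar C (cut f t) (cut g t) := by
  obtain ⟨C, hC, huC, hp⟩ := h.cut_right t hu
  obtain ⟨C', hC', huC', hp'⟩ := hp.symm.cut_right t huC
  refine ⟨C', hC'.trans hC, huC', fun ht => ?_, hp'.symm⟩
  have hfix : ∀ q : Perm S, Invariant {t} (Hypermap.cut q t) := fun q s hs => by
    rw [Finset.mem_singleton] at hs ⊢
    rw [hs, cut_apply_self]
  have hC't := hp'.eq_of_subset {t} (by simpa) ⟨t, by simp⟩ (hfix g) (hfix f)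
  rw [← hC't, Finset.mem_singleton] at huC'
  exact hut huC'

end Genus

end Hypermap

namespace Hypermap

open Equiv
open Equiv.Perm hiding Disjoint

section Holonomy

variable {S : Type*} {L : Type*} [Group L]

/-- The product of the weights `b` along the cycle of `g` through `s` is trivial. It is expressed
by a potential `Q` on the cycle, which avoids choosing a starting point. -/
def TrivialHolonomy (g : Perm S) (b : S → L) (s : S) : Prop :=
  ∃ Q : S → L, ∀ x, g.SameCycle s x → Q (g x) = Q x * b x

theorem TrivialHolonomy.sameCycle {g : Perm S} {b : S → L} {s t : S} (h : TrivialHolonomy g b s)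
    (hst : g.SameCycle s t) : TrivialHolonomy g b t := by
  obtain ⟨Q, hQ⟩ := h
  exact ⟨Q, fun x hx => hQ x (hst.trans hx)⟩

theorem trivialHolonomy_iff_of_sameCycle {g : Perm S} {b : S → L} {s t : S}
    (hst : g.SameCycle s t) : TrivialHolonomy g b s ↔ TrivialHolonomy g b t :=
  ⟨fun h => h.sameCycle hst, fun h => h.sameCycle hst.symm⟩

theorem cut_apply_of_ne [DecidableEq S] {g : Perm S} {t u : S} (h : u ≠ t) (h' : g u ≠ t) :
    cut g t u = g u := by
  rw [cut, Perm.mul_apply, swap_apply_of_ne_of_ne h]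
  rintro rfl
  simp at h'

theorem cut_apply_inv [DecidableEq S] (g : Perm S) (t : S) : cut g t (g⁻¹ t) = g t := by
  rw [cut, Perm.mul_apply, swap_apply_right]

theorem cut_apply_of_apply_eq [DecidableEq S] {g : Perm S} {t u : S} (h : g u = t) :
    cut g t u = g t := by
  rw [← cut_apply_inv g t, Perm.inv_eq_iff_eq.2 h.symm]

theorem ne_of_sameCycle_cut [DecidableEq S] {g : Perm S} {t u v : S} (hu : u ≠ t)
    (h : (cut g t).SameCycle u v) : v ≠ t := by
  rintro rfl
  exact hu (h.eq_of_right (cut_apply_self g v))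

variable [Finite S]

/-- The quotient of `Q` by a potential on the whole cycle is constant along the cycle. -/
theorem TrivialHolonomy.apply_eq {g : Perm S} {b : S → L} {x : S} (h : TrivialHolonomy g b x)
    {Q : S → L} (hQ : ∀ u, g.SameCycle x u → u ≠ x → Q (g u) = Q u * b u) :
    Q (g x) = Q x * b x := by
  obtain ⟨R, hR⟩ := h
  have hconst : Q x * (R x)⁻¹ = Q (g x) * (R (g x))⁻¹ := by
    refine (mem_of_sameCycle (p := g)
      (A := {u | g.SameCycle x u ∧ Q u * (R u)⁻¹ = Q (g x) * (R (g x))⁻¹})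
      (fun u hu => ⟨sameCycle_apply_right.2 hu.1, ?_⟩) (sameCycle_apply g x).symm
      ⟨sameCycle_apply g x, rfl⟩).2
    rcases eq_or_ne u x with rfl | hux
    · rfl
    · rw [← hu.2, hQ u hu.1 hux, hR u hu.1]
      group
  rw [hR x (.refl _ _), mul_inv_rev, mul_inv_eq_iff_eq_mul] at hconst
  rw [hconst]
  group

theorem trivialHolonomy_congr {g g' : Perm S} {b b' : S → L} {s : S}
    (hg : ∀ u, g.SameCycle s u → g u = g' u) (hb : ∀ u, g.SameCycle s u → b u = b' u) :
    TrivialHolonomy g b s ↔ TrivialHolonomy g' b' s := by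
  have hsc : ∀ u, g.SameCycle s u ↔ g'.SameCycle s u := fun u =>
    sameCycle_congr (A := cycle g s) (fun v hv => sameCycle_apply_right.2 hv) hg (.refl g s)
  refine exists_congr fun Q => forall_congr' fun x => ?_
  rw [← hsc]
  exact imp_congr_right fun hx => by rw [hg x hx, hb x hx]

variable [DecidableEq S]

theorem TrivialHolonomy.of_mul_swap {g : Perm S} {b : S → L} {x y : S} (hn : ¬ g.SameCycle x y)
    (h : TrivialHolonomy (g * swap x y) b x) (hx : TrivialHolonomy g b x) :
    TrivialHolonomy g b y := by
  obtain ⟨Q, hQ⟩ := h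
  have hiff := fun u => sameCycle_mul_swap_iff_or hn (u := u)
  have hgx : (g * swap x y) x = g y := by rw [Perm.mul_apply, swap_apply_left]
  have hgy : (g * swap x y) y = g x := by rw [Perm.mul_apply, swap_apply_right]
  have hQ_ne : ∀ u, u ≠ x → u ≠ y → (g.SameCycle x u ∨ g.SameCycle y u) →
      Q (g u) = Q u * b u := fun u hux huy hu => by
    simpa [swap_apply_of_ne_of_ne hux huy] using hQ u ((hiff u).2 hu)
  have hQx : Q (g x) = Q x * b x := hx.apply_eq fun u hu hux =>
    hQ_ne u hux (by rintro rfl; exact hn hu) (Or.inl hu)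
  have hQxy : Q x = Q y * b y * (b x)⁻¹ := by
    rw [eq_mul_inv_iff_mul_eq, ← hQx, ← hgy, hQ y (sameCycle_mul_swap hn)]
  refine ⟨Q, fun u hu => ?_⟩
  rcases eq_or_ne u y with rfl | huy
  · rw [← hgx, hQ x (.refl _ _), hQxy, inv_mul_cancel_right]
  · exact hQ_ne u (by rintro rfl; exact hn hu.symm) huy (Or.inr hu)

theorem TrivialHolonomy.join {g : Perm S} {b : S → L} {x y : S} (hn : ¬ g.SameCycle x y)
    (hx : TrivialHolonomy g b x) (hy : TrivialHolonomy g b y) :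
    TrivialHolonomy (g * swap x y) b x := by
  classical
  obtain ⟨Q, hQ⟩ := hx
  obtain ⟨R, hR⟩ := hy
  set c := Q x * b x * (R y * b y)⁻¹ with hc
  have hgx : Q (g x) = Q x * b x := hQ x (.refl _ _)
  have hgy : R (g y) = R y * b y := hR y (.refl _ _)
  refine ⟨fun u => if g.SameCycle x u then Q u else c * R u, fun u hu => ?_⟩
  rcases eq_or_ne u x with rfl | hux
  · rw [Perm.mul_apply, swap_apply_left]
    simp only [sameCycle_apply_right, hn, if_false, SameCycle.refl, if_true]
    rw [hgy, hc]
    group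
  rcases eq_or_ne u y with rfl | huy
  · rw [Perm.mul_apply, swap_apply_right]
    simp only [sameCycle_apply_right, hn, if_false, SameCycle.refl, if_true]
    rw [hgx, hc]
    group
  rw [Perm.mul_apply, swap_apply_of_ne_of_ne hux huy]
  simp only [sameCycle_apply_right]
  split_ifs with hxu
  · exact hQ u hxu
  · rw [hR u (((sameCycle_mul_swap_iff_or hn).1 hu).resolve_left hxu), ← mul_assoc]

theorem trivialHolonomy_mul_swap_iff_right {g : Perm S} {b : S → L} {x y : S}
    (hn : ¬ g.SameCycle x y) (hx : TrivialHolonomy g b x) :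
    TrivialHolonomy (g * swap x y) b x ↔ TrivialHolonomy g b y :=
  ⟨fun h => h.of_mul_swap hn hx, hx.join hn⟩

theorem trivialHolonomy_mul_swap_iff_left {g : Perm S} {b : S → L} {x y : S}
    (hn : ¬ g.SameCycle x y) (hy : TrivialHolonomy g b y) :
    TrivialHolonomy (g * swap x y) b x ↔ TrivialHolonomy g b x := by
  refine ⟨fun h => .of_mul_swap (fun hs => hn hs.symm) ?_ hy, fun hx => hx.join hn hy⟩
  rw [swap_comm]
  exact h.sameCycle (sameCycle_mul_swap hn)

theorem trivialHolonomy_mul_swap_iff {g : Perm S} {b : S → L} {x y u : S}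
    (hx : ¬ g.SameCycle u x) (hy : ¬ g.SameCycle u y) :
    TrivialHolonomy (g * swap x y) b u ↔ TrivialHolonomy g b u := by
  refine (trivialHolonomy_congr (fun v hv => ?_) fun _ _ => rfl).symm
  rw [Perm.mul_apply, swap_apply_of_ne_of_ne] <;> rintro rfl <;> contradiction

theorem SameCycle.of_cut {g : Perm S} {t u v : S} (h : (cut g t).SameCycle u v) :
    g.SameCycle u v := by
  refine mem_of_sameCycle (A := cycle g u) (fun w hw => ?_) h (.refl _ _)
  rcases eq_or_ne w t with rfl | hwt
  · rwa [cut_apply_self]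
  by_cases hgw : g w = t
  · rw [cut_apply_of_apply_eq hgw, ← hgw]
    exact sameCycle_apply_right.2 (sameCycle_apply_right.2 hw)
  · rw [cut_apply_of_ne hwt hgw]
    exact sameCycle_apply_right.2 hw

theorem sameCycle_cut_iff {g : Perm S} {t u v : S} (hu : u ≠ t) (hv : v ≠ t) :
    (cut g t).SameCycle u v ↔ g.SameCycle u v := by
  refine ⟨SameCycle.of_cut, fun h => ?_⟩
  have hmem := mem_of_sameCycle
    (A := {w | if w = t then (cut g t).SameCycle u (g⁻¹ t) else (cut g t).SameCycle u w})
    (fun w hw => ?_) h (by simp [hu, SameCycle.refl])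
  · simpa [hv] using hmem
  simp only [Set.mem_ofPred_eq] at hw ⊢
  rcases eq_or_ne w t with rfl | hwt
  · rw [if_pos rfl] at hw
    split_ifs with hgw
    · exact hw
    · simpa only [cut_apply_inv] using sameCycle_apply_right.2 hw
  · rw [if_neg hwt] at hw
    split_ifs with hgw
    · rwa [Perm.inv_eq_iff_eq.2 hgw.symm]
    · simpa only [cut_apply_of_ne hwt hgw] using sameCycle_apply_right.2 hw

theorem trivialHolonomy_of_cut {g : Perm S} {t u : S} {b b' : S → L} (hu : u ≠ t)
    (hb : ∀ v, v ≠ t → g v ≠ t → b' v = b v) (hbt : ∀ v, v ≠ t → g v = t → b' v = b v * b t)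
    (h : TrivialHolonomy (cut g t) b' u) : TrivialHolonomy g b u := by
  obtain ⟨Q, hQ⟩ := h
  refine ⟨fun v => if v = t then Q (g⁻¹ t) * b (g⁻¹ t) else Q v, fun v hv => ?_⟩
  have hQ_ne : v ≠ t → g v ≠ t → Q (g v) = Q v * b v := fun hvt hgv => by
    rw [← cut_apply_of_ne hvt hgv, hQ v ((sameCycle_cut_iff hu hvt).2 hv), hb v hvt hgv]
  rcases eq_or_ne v t with rfl | hvt
  · have hgv : g v ≠ v := fun h => hu (hv.eq_of_right h)
    have hpv : g⁻¹ v ≠ v := fun h => hgv (Perm.inv_eq_iff_eq.1 h).symm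
    have hup := (sameCycle_cut_iff hu hpv).2 (hv.trans (sameCycle_inv_apply _ _))
    simp only [hgv, if_true, if_false]
    rw [← cut_apply_inv, hQ _ hup, hbt _ hpv (by simp), mul_assoc]
  by_cases hgv : g v = t
  · simp only [hgv, hvt, if_true, if_false]
    rw [← hgv]
    simp
  · simpa only [hgv, hvt, if_false] using hQ_ne hvt hgv

theorem TrivialHolonomy.cut {g : Perm S} {t u : S} {b b' : S → L} (hu : u ≠ t)
    (hb : ∀ v, v ≠ t → g v ≠ t → b' v = b v) (hbt : ∀ v, v ≠ t → g v = t → b' v = b v * b t)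
    (h : TrivialHolonomy g b u) : TrivialHolonomy (cut g t) b' u := by
  obtain ⟨Q, hQ⟩ := h
  refine ⟨Q, fun v hv => ?_⟩
  have hvt := ne_of_sameCycle_cut hu hv
  have hQv := hQ v (SameCycle.of_cut hv)
  by_cases hgv : g v = t
  · have hut : g.SameCycle u t := hgv ▸ sameCycle_apply_right.2 (SameCycle.of_cut hv)
    rw [cut_apply_of_apply_eq hgv, hbt v hvt hgv, ← mul_assoc, ← hQv, hgv, hQ t hut]
  · rw [cut_apply_of_ne hvt hgv, hb v hvt hgv, hQv]

theorem trivialHolonomy_cut_iff {g : Perm S} {t u : S} {b b' : S → L} (hu : u ≠ t)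
    (hb : ∀ v, v ≠ t → g v ≠ t → b' v = b v) (hbt : ∀ v, v ≠ t → g v = t → b' v = b v * b t) :
    TrivialHolonomy (Hypermap.cut g t) b' u ↔ TrivialHolonomy g b u :=
  ⟨trivialHolonomy_of_cut hu hb hbt, .cut hu hb hbt⟩

end Holonomy

end Hypermap

namespace Hypermap

open Equiv
open Equiv.Perm hiding Disjoint

/-- Rules for labelling a hypermap: a vertex of colour `i` has a kind in `Kind i`, a label is
evaluated at a vertex of kind `k` in the group `Local i k`, and the position of a vertex determines
its class. `Adm k b` says that `b` may label a side between vertices of kinds `k false` and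
`k true`, and `Mergeable i k` that consecutive sides at vertices of kind `k` may be merged. -/
structure LocalSystem.{u, v, w} (F : Type v) (X : Type w) [Group F] [MulAction F X] where
  Kind : Bool → Type u
  Local : ∀ i, Kind i → Type u
  group : ∀ i k, Group (Local i k)
  eval : ∀ i k, F →* Local i k
  Adm : (∀ i, Kind i) → F → Prop
  adm_one : ∀ k, Adm k 1
  adm_mul : ∀ k b c, Adm k b → Adm k c → Adm k (b * c)
  Mergeable : ∀ i, Kind i → Prop
  cls : ∀ i, Kind i → X → Bool
  cls_smul : ∀ i k b x, Adm k b → cls i (k i) (b⁻¹ • x) = cls i (k i) x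

attribute [instance] LocalSystem.group

variable {F X : Type*} [Group F] [MulAction F X]

/-- A hypermap on the sides `S`, given by the permutations `f i` whose cycles are the vertices of
colour `i`, with labels in `F` and positions in `X` obeying the rules of `Y`. -/
structure Decoration (Y : LocalSystem F X) (S : Type*) where
  f : Bool → Perm S
  kind : S → ∀ i, Y.Kind i
  label : S → F
  pos : S → X
  kind_f : ∀ i s, kind (f i s) i = kind s i
  label_adm : ∀ s, Y.Adm (kind s) (label s)
  pos_f : ∀ i s, pos (f i s) = (label s)⁻¹ • pos s

namespace Decoration

variable {Y : LocalSystem F X} {S : Type*}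

/-- The labels of the sides, evaluated at a vertex of colour `i` and kind `k`. -/
def weight (D : Decoration Y S) (i : Bool) (k : Y.Kind i) (s : S) : Y.Local i k :=
  Y.eval i k (D.label s)

/-- The vertex of colour `i` at `s` has nontrivial holonomy. -/
def IsDefect (D : Decoration Y S) (i : Bool) (s : S) : Prop :=
  ¬ TrivialHolonomy (D.f i) (D.weight i (D.kind s i)) s

/-- The class of the vertex of colour `i` at `s`. -/
def cls (D : Decoration Y S) (i : Bool) (s : S) : Bool := Y.cls i (D.kind s i) (D.pos s)

/-- `O` carries a connected spherical piece of the hypermap. -/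
def IsPlanar (D : Decoration Y S) (O : Finset S) : Prop := Planar O (D.f false) (D.f true)

/-- Defects exist in `O`, distinct ones have different classes, and their kinds are mergeable. -/
structure Separated (D : Decoration Y S) (O : Finset S) : Prop where
  unique : ∀ i j, ∀ s ∈ O, ∀ t ∈ O, D.IsDefect i s → D.IsDefect j t → D.cls i s = D.cls j t →
    i = j ∧ (D.f i).SameCycle s t
  exists_defect : ∃ i, ∃ s ∈ O, D.IsDefect i s
  mergeable : ∀ i, ∀ s ∈ O, D.IsDefect i s → Y.Mergeable i (D.kind s i)

/-- Some separated spherical piece decorated by `Y` has fewer sides than `O`. -/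
def ExistsSmaller (Y : LocalSystem F X) (O : Finset S) : Prop :=
  ∃ (D : Decoration Y S) (O' : Finset S), O'.card < O.card ∧ D.IsPlanar O' ∧ D.Separated O'

theorem isPlanar_iff (D : Decoration Y S) (O : Finset S) (i : Bool) :
    D.IsPlanar O ↔ Planar O (D.f i) (D.f (!i)) := by
  cases i
  exacts [Iff.rfl, ⟨Planar.symm, Planar.symm⟩]

theorem IsPlanar.invariant {D : Decoration Y S} {O : Finset S} (h : D.IsPlanar O) (i : Bool) :
    Invariant O (D.f i) := by
  cases i
  exacts [h.left, h.right]

theorem IsDefect.apply_ne {D : Decoration Y S} {i : Bool} {s : S} (hs : D.IsDefect i s)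
    (h : D.f i s = s → D.label s = 1) : D.f i s ≠ s := by
  intro hfs
  refine hs ⟨fun _ => 1, fun x hx => ?_⟩
  obtain rfl : x = s := (hx.eq_of_left hfs).symm
  simp [weight, h hfs]

variable [Finite S]

theorem kind_sameCycle (D : Decoration Y S) {i : Bool} {s t : S} (h : (D.f i).SameCycle s t) :
    D.kind t i = D.kind s i :=
  mem_of_sameCycle (A := {t | D.kind t i = D.kind s i}) (fun u hu => (D.kind_f i u).trans hu) h rfl

theorem cls_sameCycle (D : Decoration Y S) {i : Bool} {s t : S} (h : (D.f i).SameCycle s t) :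
    D.cls i t = D.cls i s := by
  refine mem_of_sameCycle (A := {t | D.cls i t = D.cls i s}) (fun u hu => Eq.trans ?_ hu) h rfl
  rw [cls, D.kind_f, D.pos_f]
  exact Y.cls_smul _ _ _ _ (D.label_adm u)

theorem IsDefect.sameCycle {D : Decoration Y S} {i : Bool} {s t : S} (h : D.IsDefect i s)
    (hst : (D.f i).SameCycle s t) : D.IsDefect i t := by
  intro ht
  rw [D.kind_sameCycle hst] at ht
  exact h (ht.sameCycle hst.symm)

theorem Separated.transfer {D D' : Decoration Y S} {O O' : Finset S} (hD : D.Separated O)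
    (hsub : O' ⊆ O) (hkind : D'.kind = D.kind) (hpos : D'.pos = D.pos)
    (hcycle : ∀ i, ∀ s ∈ O', ∀ t ∈ O', (D.f i).SameCycle s t → (D'.f i).SameCycle s t)
    (hdefect : ∀ i, ∀ s ∈ O', D'.IsDefect i s →
      ∃ s' ∈ O', D.IsDefect i s' ∧ (D'.f i).SameCycle s s')
    (hex : ∃ i, ∃ s ∈ O', D'.IsDefect i s) : D'.Separated O' := by
  have hcls : ∀ i s, D'.cls i s = D.cls i s := fun i s => by rw [cls, cls, hkind, hpos]
  refine ⟨fun i j s hs t ht hds hdt hst => ?_, hex, fun i s hs hds => ?_⟩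
  · obtain ⟨s', hs', hds', hss'⟩ := hdefect i s hs hds
    obtain ⟨t', ht', hdt', htt'⟩ := hdefect j t ht hdt
    rw [← D'.cls_sameCycle hss', ← D'.cls_sameCycle htt', hcls, hcls] at hst
    obtain ⟨rfl, h⟩ := hD.unique i j s' (hsub hs') t' (hsub ht') hds' hdt' hst
    exact ⟨rfl, hss'.trans ((hcycle i s' hs' t' ht' h).trans htt'.symm)⟩
  · obtain ⟨s', hs', hds', hss'⟩ := hdefect i s hs hds
    rw [← D'.kind_sameCycle hss', hkind]
    exact hD.mergeable i s' (hsub hs') hds'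

/-! ### Removing a side -/

/-- The labels `b` arise from those of `D` when the side `t` is removed and its label is absorbed
by the sides preceding it. -/
structure IsAbsorption (D : Decoration Y S) (t : S) (b : S → F) : Prop where
  adm : ∀ s, Y.Adm (D.kind s) (b s)
  of_ne : ∀ i s, s ≠ t → D.f i s ≠ t → b s = D.label s
  of_eq : ∀ i s, s ≠ t → D.f i s = t → b s = D.label s * D.label t
  self : b t = 1

section Remove

variable {D : Decoration Y S} {t : S} {b : S → F}

/-- The decoration obtained by removing the side `t`, which stays behind as a fixed point. -/
def remove [DecidableEq S] (D : Decoration Y S) (t : S) (b : S → F)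
    (h : D.IsAbsorption t b) : Decoration Y S where
  f i := cut (D.f i) t
  kind := D.kind
  label := b
  pos := D.pos
  kind_f i s := by
    by_cases hs : s = t
    · rw [hs, cut_apply_self]
    by_cases hg : D.f i s = t
    · rw [cut_apply_of_apply_eq hg, D.kind_f, ← hg, D.kind_f]
    · rw [cut_apply_of_ne hs hg, D.kind_f]
  label_adm := h.adm
  pos_f i s := by
    by_cases hs : s = t
    · rw [hs, cut_apply_self, h.self, inv_one, one_smul]
    by_cases hg : D.f i s = t
    · rw [cut_apply_of_apply_eq hg, D.pos_f, h.of_eq i s hs hg, mul_inv_rev, mul_smul,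
        ← D.pos_f i s, hg]
    · rw [cut_apply_of_ne hs hg, D.pos_f, h.of_ne i s hs hg]

theorem isDefect_remove_iff [DecidableEq S] (h : D.IsAbsorption t b) {i : Bool} {u : S}
    (hu : u ≠ t) :
    (D.remove t b h).IsDefect i u ↔ D.IsDefect i u := by
  refine not_congr (trivialHolonomy_cut_iff hu (fun v hv hv' => ?_) (fun v hv hv' => ?_))
  · exact congrArg (Y.eval i (D.kind u i)) (h.of_ne i v hv hv')
  · exact (congrArg (Y.eval i (D.kind u i)) (h.of_eq i v hv hv')).trans (map_mul _ _ _)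

theorem existsSmaller_of_isAbsorption {O : Finset S} (hP : D.IsPlanar O) (hD : D.Separated O)
    (ht : t ∈ O) (h : D.IsAbsorption t b) (hfix : ∀ i, D.f i t = t → D.label t = 1) :
    ExistsSmaller Y O := by
  classical
  obtain ⟨i, u, hu, hut, hdu⟩ : ∃ i, ∃ u ∈ O, u ≠ t ∧ D.IsDefect i u := by
    obtain ⟨i, u, hu, hdu⟩ := hD.exists_defect
    by_cases hut : u = t
    · subst hut
      exact ⟨i, D.f i u, hP.invariant i u hu, hdu.apply_ne (hfix i),
        hdu.sameCycle (sameCycle_apply _ _)⟩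
    · exact ⟨i, u, hu, hut, hdu⟩
  obtain ⟨C, hC, huC, htC, hCP⟩ := Planar.cut hP hu hut
  have hne : ∀ s ∈ C, s ≠ t := fun s hs hst => htC (hst ▸ hs)
  refine ⟨D.remove t b h, C, Finset.card_lt_card ⟨hC, fun hO => htC (hO ht)⟩, hCP,
    hD.transfer hC rfl rfl (fun j s hs r hr => (sameCycle_cut_iff (hne s hs) (hne r hr)).2)
      (fun j s hs hds => ⟨s, hs, (isDefect_remove_iff h (hne s hs)).1 hds, .refl _ _⟩)
      ⟨i, u, huC, (isDefect_remove_iff h hut).2 hdu⟩⟩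

theorem existsSmaller_of_bigon {O : Finset S} {s : S} (hP : D.IsPlanar O) (hD : D.Separated O)
    (hs : s ∈ O) (hst : s ≠ t) (h : ∀ i, D.f i s = t) : ExistsSmaller Y O := by
  classical
  have huniq : ∀ i u, D.f i u = t → u = s := fun i u hu =>
    (D.f i).injective (hu.trans (h i).symm)
  have hkind : D.kind t = D.kind s := funext fun i => by rw [← h i, D.kind_f]
  refine existsSmaller_of_isAbsorption hP hD (h false ▸ hP.invariant false s hs)
    (b := Function.update (Function.update D.label s (D.label s * D.label t)) t 1)
    ⟨fun u => ?_, fun i u hut hu => ?_, fun i u hut hu => ?_, Function.update_self ..⟩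
    fun i hi => absurd (huniq i t hi).symm hst
  · rcases eq_or_ne u t with rfl | hut
    · simpa using Y.adm_one _
    rcases eq_or_ne u s with rfl | hus
    · simpa [hut] using Y.adm_mul _ _ _ (D.label_adm u) (hkind ▸ D.label_adm t)
    · simpa [hut, hus] using D.label_adm u
  · have hus : u ≠ s := fun hus => hu (hus ▸ h i)
    simp [hut, hus]
  · obtain rfl := huniq i u hu
    simp [hut]

end Remove

end Decoration

end Hypermap

namespace Hypermap

open Equiv
open Equiv.Perm hiding Disjoint

namespace Decoration

variable {F X : Type*} [Group F] [MulAction F X] {Y : LocalSystem F X} {S : Type*}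

/-- The sides `x` and `y` may be exchanged at colour `j`: their vertices of that colour have the
same kind and the sides end at the same position. -/
structure Exchangeable (D : Decoration Y S) (j : Bool) (x y : S) : Prop where
  kind_eq : D.kind x j = D.kind y j
  pos_eq : (D.label x)⁻¹ • D.pos x = (D.label y)⁻¹ • D.pos y

variable {D : Decoration Y S} {j : Bool} {x y : S}

theorem Exchangeable.symm (h : D.Exchangeable j x y) : D.Exchangeable j y x :=
  ⟨h.kind_eq.symm, h.pos_eq.symm⟩

theorem Exchangeable.cls_eq (h : D.Exchangeable j x y) : D.cls j x = D.cls j y := by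
  rw [cls, cls, ← Y.cls_smul _ _ _ _ (D.label_adm x), h.pos_eq, h.kind_eq,
    Y.cls_smul _ _ _ _ (D.label_adm y)]

variable [DecidableEq S]

theorem Exchangeable.kind_swap (h : D.Exchangeable j x y) (s : S) :
    D.kind (swap x y s) j = D.kind s j := by
  rw [swap_apply_def]
  split_ifs with hx hy
  exacts [hx ▸ h.kind_eq.symm, hy ▸ h.kind_eq, rfl]

theorem Exchangeable.pos_swap (h : D.Exchangeable j x y) (s : S) :
    (D.label (swap x y s))⁻¹ • D.pos (swap x y s) = (D.label s)⁻¹ • D.pos s := by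
  rw [swap_apply_def]
  split_ifs with hx hy
  exacts [hx ▸ h.pos_eq.symm, hy ▸ h.pos_eq, rfl]

/-- The decoration obtained by letting the sides `x` and `y` trade their successors at colour `j`.
This joins two vertices of that colour or splits one. -/
def exchange (D : Decoration Y S) (h : D.Exchangeable j x y) : Decoration Y S where
  f := Function.update D.f j (D.f j * swap x y)
  kind := D.kind
  label := D.label
  pos := D.pos
  kind_f i s := by
    rcases eq_or_ne i j with rfl | hij
    · rw [Function.update_self, Perm.mul_apply, D.kind_f, h.kind_swap]
    · rw [Function.update_of_ne hij, D.kind_f]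
  label_adm := D.label_adm
  pos_f i s := by
    rcases eq_or_ne i j with rfl | hij
    · rw [Function.update_self, Perm.mul_apply, D.pos_f, h.pos_swap]
    · rw [Function.update_of_ne hij, D.pos_f]

theorem exchange_f_self (h : D.Exchangeable j x y) :
    (D.exchange h).f j = D.f j * swap x y := Function.update_self ..

theorem exchange_f_of_ne (h : D.Exchangeable j x y) {i : Bool} (hij : i ≠ j) :
    (D.exchange h).f i = D.f i := Function.update_of_ne hij ..

theorem Exchangeable.exchange (h : D.Exchangeable j x y) : (D.exchange h).Exchangeable j x y :=
  ⟨h.kind_eq, h.pos_eq⟩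

theorem exchange_exchange (h : D.Exchangeable j x y) :
    (D.exchange h).exchange h.exchange = D := by
  obtain ⟨f, _, _, _, _, _, _⟩ := D
  simp [Decoration.exchange]

theorem exchange_symm (h : D.Exchangeable j x y) : D.exchange h.symm = D.exchange h := by
  simp [exchange, swap_comm]

theorem isPlanar_exchange_iff (h : D.Exchangeable j x y) {O : Finset S} :
    (D.exchange h).IsPlanar O ↔ Planar O (D.f (!j)) (D.f j * swap x y) := by
  rw [isPlanar_iff _ _ (!j), Bool.not_not, exchange_f_self, exchange_f_of_ne h (by simp)]

variable [Finite S]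

theorem sameCycle_exchange_iff (h : D.Exchangeable j x y) {i : Bool} {s t : S}
    (hx : i = j → ¬ (D.f j).SameCycle s x) (hy : i = j → ¬ (D.f j).SameCycle s y) :
    ((D.exchange h).f i).SameCycle s t ↔ (D.f i).SameCycle s t := by
  rcases eq_or_ne i j with rfl | hij
  · rw [exchange_f_self, sameCycle_mul_swap_iff (hx rfl) (hy rfl)]
  · rw [exchange_f_of_ne h hij]

theorem isDefect_exchange_iff (h : D.Exchangeable j x y) {i : Bool} {s : S}
    (hx : i = j → ¬ (D.f j).SameCycle s x) (hy : i = j → ¬ (D.f j).SameCycle s y) :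
    (D.exchange h).IsDefect i s ↔ D.IsDefect i s := by
  rcases eq_or_ne i j with rfl | hij
  · exact not_congr (by rw [exchange_f_self, trivialHolonomy_mul_swap_iff (hx rfl) (hy rfl)]; rfl)
  · exact not_congr (by rw [exchange_f_of_ne h hij]; rfl)

/-! ### Joining two vertices -/

theorem isDefect_exchange_iff_right (h : D.Exchangeable j x y) (hn : ¬ (D.f j).SameCycle x y)
    (hx : ¬ D.IsDefect j x) : (D.exchange h).IsDefect j x ↔ D.IsDefect j y := by
  refine not_congr ?_
  rw [exchange_f_self, ← h.kind_eq]
  exact trivialHolonomy_mul_swap_iff_right hn (not_not.1 hx)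

theorem isDefect_exchange_iff_left (h : D.Exchangeable j x y) (hn : ¬ (D.f j).SameCycle x y)
    (hy : ¬ D.IsDefect j y) : (D.exchange h).IsDefect j x ↔ D.IsDefect j x := by
  refine not_congr ?_
  rw [exchange_f_self]
  rw [IsDefect, ← h.kind_eq] at hy
  exact trivialHolonomy_mul_swap_iff_left hn (not_not.1 hy)

theorem sameCycle_exchange_self_iff (h : D.Exchangeable j x y) (hn : ¬ (D.f j).SameCycle x y)
    {s : S} : ((D.exchange h).f j).SameCycle x s ↔
      (D.f j).SameCycle x s ∨ (D.f j).SameCycle y s := by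
  rw [exchange_f_self, sameCycle_mul_swap_iff_or hn]

theorem sameCycle_exchange_of_not (h : D.Exchangeable j x y) (hn : ¬ (D.f j).SameCycle x y)
    {i : Bool} {s t : S} (hst : (D.f i).SameCycle s t) :
    ((D.exchange h).f i).SameCycle s t := by
  by_cases hs : i = j ∧ ((D.f j).SameCycle x s ∨ (D.f j).SameCycle y s)
  · obtain ⟨rfl, hs⟩ := hs
    have hiff := fun {u} => sameCycle_exchange_self_iff h hn (s := u)
    exact (hiff.2 hs).symm.trans (hiff.2 (hs.imp (·.trans hst) (·.trans hst)))
  · push Not at hs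
    exact (sameCycle_exchange_iff h (fun hij hx => (hs hij).1 hx.symm)
      fun hij hy => (hs hij).2 hy.symm).2 hst

theorem Separated.exists_defect_exchange {O : Finset S} (hD : D.Separated O)
    (h : D.Exchangeable j x y) (hx : x ∈ O) (hy : y ∈ O) (hn : ¬ (D.f j).SameCycle x y) :
    ∃ i, ∃ s ∈ O, (D.exchange h).IsDefect i s := by
  obtain ⟨i, u, hu, hdu⟩ := hD.exists_defect
  by_cases hxy : D.IsDefect j x ∨ D.IsDefect j y
  · refine ⟨j, x, hx, ?_⟩
    have hnot : ¬ (D.IsDefect j x ∧ D.IsDefect j y) := fun hd =>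
      hn (hD.unique j j x hx y hy hd.1 hd.2 h.cls_eq).2
    rcases hxy with hdx | hdy
    · exact (isDefect_exchange_iff_left h hn fun hdy => hnot ⟨hdx, hdy⟩).2 hdx
    · exact (isDefect_exchange_iff_right h hn fun hdx => hnot ⟨hdx, hdy⟩).2 hdy
  · push Not at hxy
    refine ⟨i, u, hu, (isDefect_exchange_iff h ?_ ?_).2 hdu⟩ <;> rintro rfl hs
    exacts [hxy.1 (hdu.sameCycle hs), hxy.2 (hdu.sameCycle hs)]

theorem Separated.exchange_of_not {O : Finset S} (hD : D.Separated O) (h : D.Exchangeable j x y)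
    (hx : x ∈ O) (hy : y ∈ O) (hn : ¬ (D.f j).SameCycle x y) : (D.exchange h).Separated O := by
  refine hD.transfer subset_rfl rfl rfl (fun i s _ t _ => sameCycle_exchange_of_not h hn)
    (fun i s hs hds => ?_) (hD.exists_defect_exchange h hx hy hn)
  by_cases hsx : i = j ∧ ((D.exchange h).f j).SameCycle s x
  · obtain ⟨rfl, hsx⟩ := hsx
    by_cases hdx : D.IsDefect i x
    · exact ⟨x, hx, hdx, hsx⟩
    · exact ⟨y, hy, (isDefect_exchange_iff_right h hn hdx).1 (hds.sameCycle hsx),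
        hsx.trans ((sameCycle_exchange_self_iff h hn).2 (Or.inr (.refl _ _)))⟩
  · push Not at hsx
    refine ⟨s, hs, (isDefect_exchange_iff h ?_ ?_).1 hds, .refl _ _⟩ <;>
      refine fun hij hst => hsx hij ((sameCycle_exchange_self_iff h hn).2 ?_).symm
    exacts [Or.inl hst.symm, Or.inr hst.symm]

/-! ### Splitting a vertex -/

theorem not_sameCycle_exchange (h : D.Exchangeable j x y) (hne : x ≠ y)
    (hxy : (D.f j).SameCycle x y) : ¬ ((D.exchange h).f j).SameCycle x y := by
  rw [exchange_f_self]
  exact not_sameCycle_mul_swap hne hxy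

theorem isDefect_iff_of_not_exchange_left (h : D.Exchangeable j x y) (hne : x ≠ y)
    (hxy : (D.f j).SameCycle x y) (hx : ¬ (D.exchange h).IsDefect j x) :
    D.IsDefect j x ↔ (D.exchange h).IsDefect j y := by
  have := isDefect_exchange_iff_right h.exchange (not_sameCycle_exchange h hne hxy) hx
  rwa [exchange_exchange] at this

theorem isDefect_iff_of_not_exchange_right (h : D.Exchangeable j x y) (hne : x ≠ y)
    (hxy : (D.f j).SameCycle x y) (hy : ¬ (D.exchange h).IsDefect j y) :
    D.IsDefect j x ↔ (D.exchange h).IsDefect j x := by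
  have := isDefect_exchange_iff_left h.exchange (not_sameCycle_exchange h hne hxy) hy
  rwa [exchange_exchange] at this

section Split

variable {O O₁ : Finset S}

theorem sameCycle_exchange_left (h : D.Exchangeable j x y) (hne : x ≠ y)
    (hxy : (D.f j).SameCycle x y) (hinv : Invariant O₁ ((D.exchange h).f j)) (hy : y ∉ O₁)
    {s : S} (hs : s ∈ O₁) (hxs : (D.f j).SameCycle x s) :
    ((D.exchange h).f j).SameCycle x s := by
  have hor := sameCycle_exchange_self_iff h.exchange (not_sameCycle_exchange h hne hxy) (s := s)
  rw [exchange_exchange] at hor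
  exact (hor.1 hxs).resolve_right fun hys => hy (hinv.mem_of_sameCycle hys.symm hs)

theorem sameCycle_exchange_of_mem (h : D.Exchangeable j x y) (hne : x ≠ y)
    (hxy : (D.f j).SameCycle x y) (hinv : Invariant O₁ ((D.exchange h).f j)) (hy : y ∉ O₁)
    {i : Bool} {s t : S} (hs : s ∈ O₁) (ht : t ∈ O₁) (hst : (D.f i).SameCycle s t) :
    ((D.exchange h).f i).SameCycle s t := by
  by_cases hxs : i = j ∧ (D.f j).SameCycle x s
  · obtain ⟨rfl, hxs⟩ := hxs
    have hleft := fun {u} => sameCycle_exchange_left h hne hxy hinv hy (s := u)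
    exact (hleft hs hxs).symm.trans (hleft ht (hxs.trans hst))
  · push Not at hxs
    exact (sameCycle_exchange_iff h (fun hij hsx => hxs hij hsx.symm)
      fun hij hsy => hxs hij (hxy.trans hsy.symm)).2 hst

theorem IsDefect.of_exchange (h : D.Exchangeable j x y) (hne : x ≠ y)
    (hxy : (D.f j).SameCycle x y) (hinv : Invariant O₁ ((D.exchange h).f j)) (hy : y ∉ O₁)
    {i : Bool} {s : S} (hs : s ∈ O₁) (hds : (D.exchange h).IsDefect i s) :
    (i = j ∧ (D.f j).SameCycle x s ∧ ((D.exchange h).f j).SameCycle x s) ∨ D.IsDefect i s := by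
  by_cases hxs : i = j ∧ (D.f j).SameCycle x s
  · exact Or.inl ⟨hxs.1, hxs.2, sameCycle_exchange_left h hne hxy hinv hy hs hxs.2⟩
  · push Not at hxs
    exact Or.inr ((isDefect_exchange_iff h (fun hij hsx => hxs hij hsx.symm)
      fun hij hsy => hxs hij (hxy.trans hsy.symm)).1 hds)

theorem Separated.exchange_of_imp (hD : D.Separated O) (h : D.Exchangeable j x y) (hsub : O₁ ⊆ O)
    (hne : x ≠ y) (hxy : (D.f j).SameCycle x y) (hinv : Invariant O₁ ((D.exchange h).f j))
    (hy : y ∉ O₁) (hx : (D.exchange h).IsDefect j x → D.IsDefect j x)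
    (hex : ∃ i, ∃ s ∈ O₁, (D.exchange h).IsDefect i s) : (D.exchange h).Separated O₁ := by
  refine hD.transfer hsub rfl rfl
    (fun i s hs t ht => sameCycle_exchange_of_mem h hne hxy hinv hy hs ht)
    (fun i s hs hds => ⟨s, hs, ?_, .refl _ _⟩) hex
  rcases hds.of_exchange h hne hxy hinv hy hs with ⟨rfl, hxs, hxs'⟩ | hds'
  exacts [(hx (hds.sameCycle hxs'.symm)).sameCycle hxs, hds']

theorem Separated.exchange_of_cls_ne (hD : D.Separated O) (h : D.Exchangeable j x y)
    (hsub : O₁ ⊆ O) (hne : x ≠ y) (hxy : (D.f j).SameCycle x y)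
    (hinv : Invariant O₁ ((D.exchange h).f j)) (hx : x ∈ O₁) (hy : y ∉ O₁)
    (hm : Y.Mergeable j (D.kind x j)) (hdx : (D.exchange h).IsDefect j x)
    (hcls : ∀ i, ∀ s ∈ O₁, D.IsDefect i s → D.cls i s ≠ D.cls j x) :
    (D.exchange h).Separated O₁ := by
  have hof := fun {i s} => IsDefect.of_exchange h hne hxy hinv hy (i := i) (s := s)
  refine ⟨fun i k s hs t ht hds hdt hst => ?_, ⟨j, x, hx, hdx⟩, fun i s hs hds => ?_⟩
  · change D.cls i s = D.cls k t at hst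
    rcases hof hs hds with ⟨rfl, hxs, hxs'⟩ | hds' <;>
      rcases hof ht hdt with ⟨rfl, hxt, hxt'⟩ | hdt'
    · exact ⟨rfl, hxs'.symm.trans hxt'⟩
    · exact absurd (hst.symm.trans (D.cls_sameCycle hxs)) (hcls k t ht hdt')
    · exact absurd (hst.trans (D.cls_sameCycle hxt)) (hcls i s hs hds')
    · obtain ⟨rfl, hst'⟩ := hD.unique i k s (hsub hs) t (hsub ht) hds' hdt' hst
      exact ⟨rfl, sameCycle_exchange_of_mem h hne hxy hinv hy hs ht hst'⟩
  · rcases hof hs hds with ⟨rfl, hxs, -⟩ | hds'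
    · change Y.Mergeable i (D.kind s i)
      rwa [D.kind_sameCycle hxs]
    · exact hD.mergeable i s (hsub hs) hds'

end Split

end Decoration

end Hypermap

namespace Hypermap

open Equiv
open Equiv.Perm hiding Disjoint

namespace Decoration

variable {F X : Type*} [Group F] [MulAction F X] {Y : LocalSystem F X} {S : Type*} [Finite S]

section Split

variable [DecidableEq S] {D : Decoration Y S} {j : Bool} {x y : S} {O O₁ O₂ : Finset S}

theorem Separated.disjoint_cls (hD : D.Separated O) (h : D.Exchangeable j x y) (hsub₁ : O₁ ⊆ O)
    (hsub₂ : O₂ ⊆ O) (hd : Disjoint O₁ O₂) (hinv : ∀ i, Invariant O₁ ((D.exchange h).f i))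
    (hxy : (D.f j).SameCycle x y) (hold : ¬ D.IsDefect j x) :
    (∀ i, ∀ s ∈ O₁, D.IsDefect i s → D.cls i s ≠ D.cls j x) ∨
      ∀ i, ∀ s ∈ O₂, D.IsDefect i s → D.cls i s ≠ D.cls j x := by
  by_contra! hcon
  obtain ⟨⟨i, s, hs, hds, hcs⟩, ⟨k, t, ht, hdt, hct⟩⟩ := hcon
  obtain ⟨rfl, hst⟩ := hD.unique i k s (hsub₁ hs) t (hsub₂ ht) hds hdt (hcs.trans hct.symm)
  refine Finset.disjoint_left.1 hd ((hinv i).mem_of_sameCycle ?_ hs) ht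
  refine (sameCycle_exchange_iff h ?_ ?_).2 hst <;> rintro rfl hsx
  exacts [hold (hds.sameCycle hsx), hold (hds.sameCycle (hsx.trans hxy.symm))]

theorem Separated.exchange_split (hD : D.Separated O) (h : D.Exchangeable j x y) (hne : x ≠ y)
    (hxy : (D.f j).SameCycle x y) (hx : x ∈ O₁) (hy : y ∈ O₂) (hd : Disjoint O₁ O₂)
    (hO : O₁ ∪ O₂ = O) (h₁ : ∀ i, Invariant O₁ ((D.exchange h).f i))
    (h₂ : ∀ i, Invariant O₂ ((D.exchange h).f i)) (hm : Y.Mergeable j (D.kind x j)) :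
    (D.exchange h).Separated O₁ ∨ (D.exchange h).Separated O₂ := by
  have hsub₁ : O₁ ⊆ O := hO ▸ Finset.subset_union_left
  have hsub₂ : O₂ ⊆ O := hO ▸ Finset.subset_union_right
  have hy₁ : y ∉ O₁ := fun hy₁ => Finset.disjoint_left.1 hd hy₁ hy
  have hx₂ : x ∉ O₂ := fun hx₂ => Finset.disjoint_left.1 hd hx hx₂
  have old₁ := hD.exchange_of_imp h hsub₁ hne hxy (h₁ j) hy₁
  have new₁ := hD.exchange_of_cls_ne h hsub₁ hne hxy (h₁ j) hx hy₁ hm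
  have old₂ := hD.exchange_of_imp h.symm hsub₂ hne.symm hxy.symm (exchange_symm h ▸ h₂ j) hx₂
  have new₂ := hD.exchange_of_cls_ne h.symm hsub₂ hne.symm hxy.symm (exchange_symm h ▸ h₂ j) hy hx₂
    (h.kind_eq ▸ hm)
  rw [exchange_symm h] at old₂ new₂
  have hleft := isDefect_iff_of_not_exchange_left h hne hxy
  have hright := isDefect_iff_of_not_exchange_right h hne hxy
  by_cases hold : D.IsDefect j x
  · by_cases hdx : (D.exchange h).IsDefect j x
    · exact Or.inl (old₁ (fun _ => hold) ⟨j, x, hx, hdx⟩)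
    · exact Or.inr (old₂ (fun _ => hold.sameCycle hxy) ⟨j, y, hy, (hleft hdx).1 hold⟩)
  by_cases hdx : (D.exchange h).IsDefect j x
  · have hdy : (D.exchange h).IsDefect j y := by
      by_contra hdy
      exact hold ((hright hdy).2 hdx)
    refine (hD.disjoint_cls h hsub₁ hsub₂ hd h₁ hxy hold).imp (new₁ hdx) fun hcls => new₂ hdy ?_
    rwa [← h.cls_eq]
  · have hdy : ¬ (D.exchange h).IsDefect j y := fun hdy => hold ((hleft hdx).2 hdy)
    obtain ⟨i, u, hu, hdu⟩ := hD.exists_defect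
    have hdu' : (D.exchange h).IsDefect i u := by
      refine (isDefect_exchange_iff h ?_ ?_).2 hdu <;> rintro rfl hs
      exacts [hold (hdu.sameCycle hs), hold (hdu.sameCycle (hs.trans hxy.symm))]
    rw [← hO, Finset.mem_union] at hu
    exact hu.imp (fun hu => old₁ (absurd · hdx) ⟨i, u, hu, hdu'⟩)
      fun hu => old₂ (absurd · hdy) ⟨i, u, hu, hdu'⟩

end Split

/-- No side is trivial, and no two consecutive sides can be merged. -/
structure Irreducible (D : Decoration Y S) (O : Finset S) : Prop where
  label_ne_one : ∀ s ∈ O, D.label s ≠ 1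
  kind_ne : ∀ i, ∀ s ∈ O, D.f i s ≠ s → Y.Mergeable (!i) (D.kind s (!i)) →
    D.kind (D.f i s) (!i) ≠ D.kind s (!i)

section Reduction

variable {D : Decoration Y S} {O : Finset S}

theorem existsSmaller_of_label_eq_one (hP : D.IsPlanar O) (hD : D.Separated O) {t : S}
    (ht : t ∈ O) (h : D.label t = 1) : ExistsSmaller Y O :=
  existsSmaller_of_isAbsorption hP hD ht
    ⟨D.label_adm, fun _ _ _ _ => rfl, fun _ _ _ _ => by rw [h, mul_one], h⟩ fun _ _ => h

theorem existsSmaller_of_corner (hP : D.IsPlanar O) (hD : D.Separated O) {i : Bool} {s w : S}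
    (hs : s ∈ O) (hw : w ∈ O) (hsw : s ≠ w) (hne : D.f i s ≠ s)
    (hcorner : D.f (!i) w = D.f i s) (hm : Y.Mergeable (!i) (D.kind s (!i)))
    (h : D.Exchangeable (!i) s w) : ExistsSmaller Y O := by
  classical
  have hc : ((D.f i)⁻¹ * D.f (!i)).SameCycle s w := by
    have hws : ((D.f i)⁻¹ * D.f (!i)) w = s := by
      rw [Perm.mul_apply, hcorner, Perm.inv_eq_iff_eq]
    exact hws ▸ (sameCycle_apply _ w).symm
  have hplanar : ∀ {C : Finset S}, Planar C (D.f i) (D.f (!i) * swap s w) →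
      (D.exchange h).IsPlanar C := fun hC => by
    rwa [isPlanar_exchange_iff, Bool.not_not]
  rcases ((D.isPlanar_iff O i).1 hP).mul_swap hs hw hsw (Or.inr hc) with
    ⟨hnot, hP'⟩ | ⟨hsc, -, O₁, O₂, hs₁, hw₂, hd, hO, hP₁, hP₂⟩
  · have hn : ¬ (D.f (!i)).SameCycle s w := fun hn => hnot ⟨hn, hc⟩
    refine existsSmaller_of_bigon (hplanar hP') (hD.exchange_of_not h hs hw hn) hs hne.symm
      fun k => ?_
    rcases eq_or_ne k (!i) with rfl | hk
    · rw [exchange_f_self, Perm.mul_apply, swap_apply_left, hcorner]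
    · rw [exchange_f_of_ne h hk, Bool.not_eq_not.1 hk]
  · refine (hD.exchange_split h hsw hsc hs₁ hw₂ hd hO (hplanar hP₁).invariant
      (hplanar hP₂).invariant hm).elim (fun hD₁ => ?_) fun hD₂ => ?_
    · exact ⟨_, O₁, Finset.card_lt_card ⟨hO ▸ Finset.subset_union_left, fun hsub =>
        Finset.disjoint_left.1 hd (hsub hw) hw₂⟩, hplanar hP₁, hD₁⟩
    · exact ⟨_, O₂, Finset.card_lt_card ⟨hO ▸ Finset.subset_union_right, fun hsub =>
        Finset.disjoint_left.1 hd hs₁ (hsub hs)⟩, hplanar hP₂, hD₂⟩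

theorem existsSmaller_of_mergeable (hP : D.IsPlanar O) (hD : D.Separated O) {i : Bool} {s : S}
    (hs : s ∈ O) (hne : D.f i s ≠ s) (hm : Y.Mergeable (!i) (D.kind s (!i)))
    (hkind : D.kind (D.f i s) (!i) = D.kind s (!i)) : ExistsSmaller Y O := by
  obtain ⟨w, hw⟩ := (D.f (!i)).surjective (D.f i s)
  by_cases hsw : s = w
  · subst hsw
    refine existsSmaller_of_bigon hP hD hs hne.symm fun k => ?_
    rcases eq_or_ne k i with rfl | hk
    exacts [rfl, Bool.eq_not.2 hk ▸ hw]
  · refine existsSmaller_of_corner hP hD hs ?_ hsw hne hw hm ⟨?_, ?_⟩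
    · exact (hP.invariant (!i)).apply_mem_iff.1 (hw ▸ hP.invariant i s hs)
    · rw [← hkind, ← hw, D.kind_f]
    · rw [← D.pos_f i, ← D.pos_f (!i), hw]

theorem exists_irreducible (hP : D.IsPlanar O) (hD : D.Separated O) :
    ∃ (D' : Decoration Y S) (O' : Finset S), D'.IsPlanar O' ∧ D'.Separated O' ∧
      D'.Irreducible O' := by
  induction hn : O.card using Nat.strong_induction_on generalizing D O with
  | _ n ih =>
  by_cases hsmall : ExistsSmaller Y O
  · obtain ⟨D', O', hcard, hP', hD'⟩ := hsmall
    exact ih _ (hn ▸ hcard) hP' hD' rfl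
  · exact ⟨D, O, hP, hD, fun s hs h => hsmall (existsSmaller_of_label_eq_one hP hD hs h),
      fun i s hs hne hm hkind => hsmall (existsSmaller_of_mergeable hP hD hs hne hm hkind)⟩

end Reduction

end Decoration

end Hypermap

namespace Dihedral

open Matrix

/-- The upper unipotent matrix with parameter `x`. -/
noncomputable def up (x : ℝ) : SpecialLinearGroup (Fin 2) ℝ := ⟨!![1, x; 0, 1], by simp⟩

/-- The lower unipotent matrix with parameter `-x`. -/
noncomputable def low (x : ℝ) : SpecialLinearGroup (Fin 2) ℝ := ⟨!![1, 0; -x, 1], by simp⟩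

/-- The rotation by a right angle, which interchanges `up x` and `low x` by conjugation. -/
noncomputable def rot : SpecialLinearGroup (Fin 2) ℝ := ⟨!![0, 1; -1, 0], by simp⟩

theorem coe_up (x : ℝ) : (up x : Matrix (Fin 2) (Fin 2) ℝ) = !![1, x; 0, 1] := rfl

theorem coe_low (x : ℝ) : (low x : Matrix (Fin 2) (Fin 2) ℝ) = !![1, 0; -x, 1] := rfl

theorem coe_rot : (rot : Matrix (Fin 2) (Fin 2) ℝ) = !![0, 1; -1, 0] := rfl

theorem up_add (x y : ℝ) : up (x + y) = up x * up y := by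
  ext i j
  fin_cases i <;> fin_cases j <;> simp [coe_up, add_comm]

theorem low_add (x y : ℝ) : low (x + y) = low x * low y := by
  ext i j
  fin_cases i <;> fin_cases j <;> simp [coe_low, add_comm]

theorem up_zpow (x : ℝ) (n : ℤ) : up x ^ n = up (n * x) := by
  let f : Multiplicative ℝ →* SpecialLinearGroup (Fin 2) ℝ :=
    MonoidHom.mk' (fun x => up x.toAdd) fun _ _ => up_add _ _
  have := map_zpow f (Multiplicative.ofAdd x) n
  rw [← ofAdd_zsmul] at this
  simpa [f] using this.symm

theorem low_zpow (x : ℝ) (n : ℤ) : low x ^ n = low (n * x) := by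
  let f : Multiplicative ℝ →* SpecialLinearGroup (Fin 2) ℝ :=
    MonoidHom.mk' (fun x => low x.toAdd) fun _ _ => low_add _ _
  have := map_zpow f (Multiplicative.ofAdd x) n
  rw [← ofAdd_zsmul] at this
  simpa [f] using this.symm

theorem rot_mul_up (x : ℝ) : rot * up x = low x * rot := by
  ext i j
  fin_cases i <;> fin_cases j <;> simp [coe_up, coe_low, coe_rot]

theorem rot_mul_low (x : ℝ) : rot * low x = up x * rot := by
  ext i j
  fin_cases i <;> fin_cases j <;> simp [coe_up, coe_low, coe_rot]

theorem rot_mul_altProd (x : ℝ) (k : ℕ) :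
    rot * altProd k (up x) (low x) = altProd k (low x) (up x) * rot ∧
    rot * altProd k (low x) (up x) = altProd k (up x) (low x) * rot := by
  induction k with
  | zero => simp [altProd]
  | succ k ih =>
    constructor
    · rw [altProd, altProd, ← mul_assoc, rot_mul_up, mul_assoc, ih.2, mul_assoc]
    · rw [altProd, altProd, ← mul_assoc, rot_mul_low, mul_assoc, ih.1, mul_assoc]

theorem altProd_mul_rot_pow (x : ℝ) (k : ℕ) :
    altProd k (up x) (low x) * rot ^ k = (up x * rot) ^ k := by
  induction k with
  | zero => simp [altProd]
  | succ k ih =>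
    rw [altProd, pow_succ', pow_succ', ← ih]
    simp only [mul_assoc]
    rw [← mul_assoc rot, (rot_mul_altProd x k).1, mul_assoc]

theorem altProd_up_low_eq (x : ℝ) (k : ℕ) :
    altProd k (up x) (low x) = (up x * rot) ^ k * (rot ^ k)⁻¹ :=
  eq_mul_inv_of_mul_eq (altProd_mul_rot_pow x k)

/-- The ratio `sin (k π / m) / sin (π / m)`, an entry of the powers of `up (twoCos m) * rot`; it is
positive for `0 < k < m` and vanishes at `k = m`. -/
noncomputable def sinRatio (m k : ℕ) : ℝ := Real.sin (k * (Real.pi / m)) / Real.sin (Real.pi / m)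

/-- The parameter `2 cos (π / m)` at which `up` and `low` satisfy the Artin relation of length
`m`. -/
noncomputable def twoCos (m : ℕ) : ℝ := 2 * Real.cos (Real.pi / m)

section

variable {m : ℕ}

theorem sin_pos (hm : 2 ≤ m) : 0 < Real.sin (Real.pi / m) := by
  have h2 : (2 : ℝ) ≤ m := by exact_mod_cast hm
  apply Real.sin_pos_of_pos_of_lt_pi
  · positivity
  · rw [div_lt_iff₀ (by positivity)]
    nlinarith [Real.pi_pos]

theorem sinRatio_zero (m : ℕ) : sinRatio m 0 = 0 := by simp [sinRatio]

theorem sinRatio_one (hm : 2 ≤ m) : sinRatio m 1 = 1 := by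
  simp [sinRatio, (sin_pos hm).ne']

theorem sinRatio_add_two (m k : ℕ) :
    sinRatio m (k + 2) = twoCos m * sinRatio m (k + 1) - sinRatio m k := by
  unfold sinRatio twoCos
  rw [← mul_div_assoc (2 * _), ← sub_div]
  congr 1
  set θ := Real.pi / m
  have e1 : ((k + 2 : ℕ) : ℝ) * θ = (k + 1 : ℕ) * θ + θ := by push_cast; ring
  have e2 : (k : ℝ) * θ = (k + 1 : ℕ) * θ - θ := by push_cast; ring
  rw [e1, e2, Real.sin_add, Real.sin_sub]
  ring

theorem sinRatio_pos (hm : 2 ≤ m) {k : ℕ} (hk : 0 < k) (hkm : k < m) : 0 < sinRatio m k := by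
  have hm' : (0 : ℝ) < m := by exact_mod_cast (by omega : 0 < m)
  have hk' : (0 : ℝ) < k := by exact_mod_cast hk
  refine div_pos (Real.sin_pos_of_pos_of_lt_pi ?_ ?_) (sin_pos hm)
  · exact mul_pos hk' (div_pos Real.pi_pos hm')
  · rw [mul_div_assoc', div_lt_iff₀ hm', mul_comm]
    exact mul_lt_mul_of_pos_left (by exact_mod_cast hkm) Real.pi_pos

theorem sinRatio_self (hm : 2 ≤ m) : sinRatio m m = 0 := by
  have h0 : (m : ℝ) ≠ 0 := by exact_mod_cast (by omega : m ≠ 0)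
  simp [sinRatio, mul_div_cancel₀ _ h0]

theorem sinRatio_self_sub_one (hm : 2 ≤ m) : sinRatio m (m - 1) = 1 := by
  have h0 : (m : ℝ) ≠ 0 := by exact_mod_cast (by omega : m ≠ 0)
  have : ((m - 1 : ℕ) : ℝ) * (Real.pi / m) = Real.pi - Real.pi / m := by
    rw [Nat.cast_sub (by omega)]
    field_simp
    push_cast; ring
  rw [sinRatio, this, Real.sin_pi_sub, div_self (sin_pos hm).ne']

theorem sinRatio_self_add_one (hm : 2 ≤ m) : sinRatio m (m + 1) = -1 := by
  obtain ⟨k, rfl⟩ : ∃ k, m = k + 1 := ⟨m - 1, by omega⟩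
  have := sinRatio_self_sub_one hm
  rw [Nat.add_sub_cancel] at this
  rw [sinRatio_add_two, sinRatio_self hm, this]
  ring

theorem up_mul_rot_pow (hm : 2 ≤ m) (k : ℕ) :
    ((up (twoCos m) * rot : Matrix (Fin 2) (Fin 2) ℝ)) ^ (k + 1) = (-1 : ℝ) ^ (k + 1) •
      !![sinRatio m (k + 2), -sinRatio m (k + 1); sinRatio m (k + 1), -sinRatio m k] := by
  have hmul : (up (twoCos m) * rot : Matrix (Fin 2) (Fin 2) ℝ) = !![-twoCos m, 1; -1, 0] := by
    simp [coe_up, coe_rot]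
  rw [hmul]
  induction k with
  | zero => simp [sinRatio_add_two m 0, sinRatio_zero, sinRatio_one hm]
  | succ k ih =>
    rw [pow_succ, ih, smul_mul_assoc, mul_fin_two, pow_succ _ (k + 1), mul_smul,
      sinRatio_add_two m (k + 1), sinRatio_add_two m k]
    refine congrArg _ ?_
    ext i j
    fin_cases i <;> fin_cases j <;> simp [mul_comm, neg_add_eq_sub]

theorem up_mul_rot_pow_self (hm : 2 ≤ m) :
    (up (twoCos m) * rot) ^ m = 1 ∨ (up (twoCos m) * rot) ^ m = -1 := by
  obtain ⟨k, rfl⟩ : ∃ k, m = k + 1 := ⟨m - 1, by omega⟩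
  have hpow := up_mul_rot_pow hm k
  have hpred := sinRatio_self_sub_one hm
  rw [Nat.add_sub_cancel] at hpred
  rw [hpred, sinRatio_self hm, sinRatio_self_add_one hm] at hpow
  have hcoe : (((up (twoCos (k + 1)) * rot) ^ (k + 1) : SpecialLinearGroup (Fin 2) ℝ) :
      Matrix (Fin 2) (Fin 2) ℝ) = (up (twoCos (k + 1)) * rot) ^ (k + 1) := by
    simp
  rw [← hcoe] at hpow
  rcases neg_one_pow_eq_or ℝ (k + 1) with hs | hs <;> rw [hs] at hpow
  · right
    ext i j
    rw [hpow]
    fin_cases i <;> fin_cases j <;> simp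
  · left
    ext i j
    rw [hpow]
    fin_cases i <;> fin_cases j <;> simp

theorem altProd_eq_of_commute {x : ℝ} {k : ℕ} (h : Commute rot ((up x * rot) ^ k)) :
    altProd k (up x) (low x) = altProd k (low x) (up x) := by
  have hcomm : Commute rot (altProd k (up x) (low x)) := by
    rw [altProd_up_low_eq]
    exact h.mul_right ((Commute.refl rot).pow_right k).inv_right
  exact mul_right_cancel (hcomm.eq.symm.trans (rot_mul_altProd x k).1)

theorem altProd_up_low (hm : 2 ≤ m) :
    altProd m (up (twoCos m)) (low (twoCos m)) = altProd m (low (twoCos m)) (up (twoCos m)) := by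
  apply altProd_eq_of_commute
  rcases up_mul_rot_pow_self hm with h | h <;> rw [h]
  exacts [Commute.one_right _, Commute.neg_one_right _]

theorem rot_sq : rot ^ 2 = -1 := by
  ext i j
  fin_cases i <;> fin_cases j <;> simp [coe_rot, sq]

theorem altProd_sq (hm : 2 ≤ m) :
    altProd m (up (twoCos m)) (low (twoCos m)) ^ 2 = 1 ∨
      altProd m (up (twoCos m)) (low (twoCos m)) ^ 2 = -1 := by
  have hcomm : Commute ((up (twoCos m) * rot) ^ m) ((rot ^ m)⁻¹) := by
    rcases up_mul_rot_pow_self hm with h | h <;> rw [h]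
    exacts [Commute.one_left _, Commute.neg_one_left _]
  have hsq : ((up (twoCos m) * rot) ^ m) ^ 2 = 1 := by
    rcases up_mul_rot_pow_self hm with h | h <;> rw [h] <;> simp
  rw [altProd_up_low_eq, hcomm.mul_pow, hsq, one_mul, inv_pow, ← pow_mul, mul_comm, pow_mul, rot_sq]
  rcases neg_one_pow_eq_or (SpecialLinearGroup (Fin 2) ℝ) m with h | h <;> rw [h]
  · exact Or.inl inv_one
  · exact Or.inr (by rw [inv_eq_iff_mul_eq_one, neg_mul_neg, one_mul])

theorem twoCos_nonneg (hm : 2 ≤ m) : 0 ≤ twoCos m := by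
  have hm' : (2 : ℝ) ≤ m := by exact_mod_cast hm
  have hle : Real.pi / m ≤ Real.pi / 2 :=
    div_le_div_of_nonneg_left Real.pi_pos.le two_pos hm'
  have hnonneg : 0 ≤ Real.pi / m := by positivity
  exact mul_nonneg two_pos.le (Real.cos_nonneg_of_mem_Icc ⟨by linarith [Real.pi_pos], hle⟩)

theorem sinRatio_nonneg (hm : 2 ≤ m) {k : ℕ} (hk : k ≤ m) : 0 ≤ sinRatio m k := by
  rcases Nat.eq_zero_or_pos k with rfl | hpos
  · rw [sinRatio_zero]
  rcases hk.eq_or_lt with rfl | hlt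
  · rw [sinRatio_self hm]
  · exact (sinRatio_pos hm hpos hlt).le

theorem twoCos_pos (hm : 3 ≤ m) : 0 < twoCos m := by
  have hpos := sinRatio_pos (m := m) (k := 2) (by omega) (by omega) (by omega)
  rwa [sinRatio_add_two, sinRatio_one (by omega), sinRatio_zero, mul_one, sub_zero] at hpos

/-- The Casoratian of a sequence `y` and `sinRatio m`. -/
noncomputable def casoratian (m : ℕ) (y : ℕ → ℝ) (k : ℕ) : ℝ :=
  y (k + 1) * sinRatio m k - sinRatio m (k + 1) * y k

theorem casoratian_mono (hm : 2 ≤ m) {y : ℕ → ℝ}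
    (hy : ∀ t, twoCos m * y (t + 1) ≤ y (t + 2) + y t) {j k : ℕ} (hjk : j ≤ k) (hk : k ≤ m) :
    casoratian m y j ≤ casoratian m y k := by
  induction k, hjk using Nat.le_induction with
  | base => rfl
  | succ k _ ih =>
    have hstep : casoratian m y (k + 1) - casoratian m y k =
        sinRatio m (k + 1) * (y (k + 2) + y k - twoCos m * y (k + 1)) := by
      rw [casoratian, casoratian, sinRatio_add_two]
      ring
    have hnonneg := mul_nonneg (sinRatio_nonneg hm hk) (sub_nonneg.2 (hy k))
    linarith [ih (by omega)]

end

/-- The continuant `K(l n₀, …, l nₜ₋₂)`, an entry of a product of `up` and `low` matrices with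
parameters `l nᵢ`. -/
noncomputable def continuant (l : ℝ) (n : ℕ → ℤ) : ℕ → ℝ
  | 0 => 0
  | 1 => 1
  | t + 2 => l * n t * continuant l n (t + 1) - continuant l n t

theorem abs_continuant_add_two {l : ℝ} (hl : 0 ≤ l) {n : ℕ → ℤ} {t : ℕ} (hn : n t ≠ 0) :
    l * |continuant l n (t + 1)| ≤ |continuant l n (t + 2)| + |continuant l n t| := by
  have hn' : (1 : ℝ) ≤ |(n t : ℝ)| := by exact_mod_cast Int.one_le_abs hn
  calc l * |continuant l n (t + 1)|
      ≤ l * |(n t : ℝ)| * |continuant l n (t + 1)| :=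
        mul_le_mul_of_nonneg_right (le_mul_of_one_le_right hl hn') (abs_nonneg _)
    _ = |continuant l n (t + 2) + continuant l n t| := by
        rw [continuant, sub_add_cancel, abs_mul, abs_mul, abs_of_nonneg hl]
    _ ≤ _ := abs_add_le _ _

theorem mul_abs_lt_of_sign_change {l a b c : ℝ} (hl : 0 ≤ l) {p q : ℤ} (hpq : p * q < 0)
    (hab : |a| < l * |b|) (hc : c = l * p * b - a) : l * |c| < |l * q * c - b| := by
  have hb : 0 < |b| := (abs_nonneg b).lt_of_ne fun h => by
    rw [← h, mul_zero] at hab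
    exact (abs_nonneg a).not_gt hab
  have hp : (1 : ℝ) ≤ |(p : ℝ)| := by
    exact_mod_cast Int.one_le_abs (left_ne_zero_of_mul hpq.ne)
  have hq : (1 : ℝ) ≤ |(q : ℝ)| := by
    exact_mod_cast Int.one_le_abs (right_ne_zero_of_mul hpq.ne)
  have hpcb : 0 < p * (c * b) := by
    have habs : p * (a * b) < |(p : ℝ)| * ((l * |b|) * |b|) := by
      calc p * (a * b) ≤ |p * (a * b)| := le_abs_self _
        _ = |(p : ℝ)| * (|a| * |b|) := by rw [abs_mul, abs_mul]
        _ < _ := by gcongr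
    have hsq : p * (c * b) = |(p : ℝ)| * (|(p : ℝ)| * ((l * |b|) * |b|)) - p * (a * b) := by
      rw [hc]
      linear_combination
        (-l * |b| ^ 2) * abs_mul_abs_self (p : ℝ) - (l * p ^ 2) * abs_mul_abs_self b
    have hle : |(p : ℝ)| * ((l * |b|) * |b|) ≤ |(p : ℝ)| * (|(p : ℝ)| * ((l * |b|) * |b|)) :=
      le_mul_of_one_le_left (by positivity) hp
    linarith
  have hqcb : (l * q * c) * b ≤ 0 := by
    have hpq' : (p : ℝ) * q < 0 := by exact_mod_cast hpq
    have hqcb : q * (c * b) ≤ 0 := by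
      by_contra! h
      nlinarith [mul_pos hpcb h, mul_self_nonneg (c * b)]
    linear_combination l * hqcb
  have hopp : |l * q * c - b| = |l * q * c| + |b| := by
    rw [sub_eq_add_neg, ← abs_neg b]
    exact abs_add_eq_add_abs_iff _ _ |>.2 <| by
      rcases mul_nonpos_iff.1 hqcb with ⟨h₁, h₂⟩ | ⟨h₁, h₂⟩
      · exact Or.inl ⟨h₁, neg_nonneg.2 h₂⟩
      · exact Or.inr ⟨h₁, neg_nonpos.2 h₂⟩
  rw [hopp, abs_mul, abs_mul, abs_of_nonneg hl]
  have hle : l * |c| ≤ l * |(q : ℝ)| * |c| :=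
    mul_le_mul_of_nonneg_right (le_mul_of_one_le_right hl hq) (abs_nonneg _)
  linarith

section

variable {m : ℕ} {n : ℕ → ℤ}

theorem sinRatio_mul_abs_continuant_le (hm : 2 ≤ m) (hn : ∀ t, n t ≠ 0) {k : ℕ} (hk : k ≤ m) :
    sinRatio m (k + 1) * |continuant (twoCos m) n k| ≤
      |continuant (twoCos m) n (k + 1)| * sinRatio m k := by
  have hmono := casoratian_mono hm (y := fun t => |continuant (twoCos m) n t|)
    (fun t => abs_continuant_add_two (twoCos_nonneg hm) (hn t)) (Nat.zero_le k) hk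
  simpa [casoratian, sinRatio_zero, continuant] using hmono

theorem continuant_ne_zero_of_lt (hm : 2 ≤ m) (hn : ∀ t, n t ≠ 0) {k : ℕ} (hk : k + 1 < m) :
    continuant (twoCos m) n (k + 1) ≠ 0 := by
  induction k with
  | zero => exact one_ne_zero
  | succ k ih =>
    intro h
    have hle := sinRatio_mul_abs_continuant_le hm hn (k := k + 1) (by omega)
    rw [h, abs_zero, zero_mul] at hle
    exact hle.not_gt
      (mul_pos (sinRatio_pos hm (by omega) hk) (abs_pos.2 (ih (by omega))))

theorem abs_continuant_lt {c : ℕ} (hn : ∀ t, n t ≠ 0) :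
    |continuant (twoCos (c + 3)) n c| <
      twoCos (c + 3) * |continuant (twoCos (c + 3)) n (c + 1)| := by
  have hm : 2 ≤ c + 3 := by omega
  have hle := sinRatio_mul_abs_continuant_le hm hn (k := c) (by omega)
  have hpos : 0 < sinRatio (c + 3) (c + 1) := sinRatio_pos hm (by omega) (by omega)
  have hlt : 0 < sinRatio (c + 3) (c + 2) := sinRatio_pos hm (by omega) (by omega)
  rw [sinRatio_add_two, sub_pos] at hlt
  have hne := abs_pos.2 (continuant_ne_zero_of_lt hm hn (k := c) (by omega))
  refine lt_of_mul_lt_mul_left (hle.trans_lt ((mul_lt_mul_of_pos_left hlt hne).trans_eq ?_)) hpos.le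
  ring

theorem continuant_ne_zero (hm : 3 ≤ m) (hn : ∀ t, n t ≠ 0) (hs : n (m - 3) * n (m - 2) < 0)
    {t : ℕ} (ht : 1 ≤ t) (htm : t ≤ 2 * m - 2) : continuant (twoCos m) n t ≠ 0 := by
  obtain ⟨c, rfl⟩ : ∃ c, m = c + 3 := ⟨m - 3, by omega⟩
  have hm2 : 2 ≤ c + 3 := by omega
  have hl := twoCos_nonneg hm2
  rcases lt_or_ge t (c + 3) with hlt | hge
  · obtain ⟨k, rfl⟩ : ∃ k, t = k + 1 := ⟨t - 1, by omega⟩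
    exact continuant_ne_zero_of_lt hm2 hn hlt
  obtain ⟨k, rfl⟩ : ∃ k, t = c + 1 + (k + 1) + 1 := ⟨t - (c + 3), by omega⟩
  set y : ℕ → ℝ := fun j => |continuant (twoCos (c + 3)) n (c + 1 + j)|
  have hmono : casoratian (c + 3) y 1 ≤ casoratian (c + 3) y (k + 1) :=
    casoratian_mono hm2 (fun j => abs_continuant_add_two hl (hn (c + 1 + j))) (by omega) (by omega)
  have hjump : twoCos (c + 3) * y 1 < y 2 :=
    mul_abs_lt_of_sign_change hl hs (abs_continuant_lt hn) rfl
  have hone : casoratian (c + 3) y 1 = y 2 - twoCos (c + 3) * y 1 := by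
    rw [casoratian, sinRatio_add_two, sinRatio_one hm2, sinRatio_zero, mul_one, mul_one, sub_zero]
  intro h
  have hzero : y (k + 2) = 0 := by rw [← abs_zero, ← h]; rfl
  have hnonpos : casoratian (c + 3) y (k + 1) ≤ 0 := by
    rw [casoratian, hzero, zero_mul, zero_sub, neg_nonpos]
    exact mul_nonneg (sinRatio_nonneg hm2 (by omega)) (abs_nonneg _)
  linarith

end

end Dihedral

theorem map_altProd {G H F : Type*} [Monoid G] [Monoid H] [FunLike F G H] [MonoidHomClass F G H]
    (f : F) (n : ℕ) (x y : G) : f (altProd n x y) = altProd n (f x) (f y) := by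
  induction n generalizing x y with
  | zero => simp [altProd]
  | succ n ih => simp [altProd, ih]

theorem altProd_self {G : Type*} [Monoid G] (n : ℕ) (x : G) : altProd n x x = x ^ n := by
  induction n with
  | zero => simp [altProd]
  | succ n ih => rw [altProd, ih, pow_succ']

namespace ArtinGroup

variable {V : Type*} {Γ : LabeledGraph V} {G : Type*} [Group G]

/-- The homomorphism out of an Artin group determined by images of the generators that satisfy
the Artin relations. -/
def lift (φ : V → G) (h : ∀ a b, Γ.graph.Adj a b →
    altProd (Γ.label a b) (φ a) (φ b) = altProd (Γ.label a b) (φ b) (φ a)) :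
    ArtinGroup Γ →* G :=
  PresentedGroup.toGroup (f := φ) (by
    rintro _ ⟨a, b, hab, rfl⟩
    rw [map_mul, map_inv, map_altProd, map_altProd, FreeGroup.lift_apply_of,
      FreeGroup.lift_apply_of, h a b hab, mul_inv_cancel])

@[simp]
theorem lift_artinGen (φ : V → G) (h) (v : V) : lift (Γ := Γ) φ h (artinGen Γ v) = φ v :=
  PresentedGroup.toGroup.of _

/-- The exponent sum homomorphism, sending every standard generator to `1`. -/
def exponentSum (Γ : LabeledGraph V) : ArtinGroup Γ →* Multiplicative ℤ :=
  lift (fun _ => Multiplicative.ofAdd 1) fun _ _ _ => rfl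

@[simp]
theorem exponentSum_artinGen (v : V) :
    exponentSum Γ (artinGen Γ v) = Multiplicative.ofAdd 1 :=
  lift_artinGen _ _ v

theorem exponentSum_artinDelta (Γ : LabeledGraph V) (a b : V) :
    exponentSum Γ (artinDelta Γ a b) = Multiplicative.ofAdd (Γ.label a b : ℤ) := by
  rw [artinDelta, map_altProd, exponentSum_artinGen, exponentSum_artinGen, altProd_self,
    ← ofAdd_nsmul, nsmul_one]

theorem eq_zero_of_artinGen_zpow_eq_one {v : V} {n : ℤ} (h : artinGen Γ v ^ n = 1) : n = 0 := by
  have hsum := congrArg (exponentSum Γ) h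
  rwa [map_zpow, exponentSum_artinGen, MonoidHom.map_one, ← ofAdd_zsmul, ofAdd_eq_one, smul_eq_mul,
    mul_one] at hsum

theorem eq_zero_of_artinDelta_sq_zpow_eq_one {a b : V} (hl : Γ.label a b ≠ 0) {n : ℤ}
    (h : (artinDelta Γ a b ^ 2) ^ n = 1) : n = 0 := by
  have hsum := congrArg (exponentSum Γ) h
  rw [map_zpow, map_pow, exponentSum_artinDelta, MonoidHom.map_one, ← ofAdd_nsmul, ← ofAdd_zsmul,
    ofAdd_eq_one] at hsum
  simpa [hl] using hsum

end ArtinGroup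

namespace LabeledGraph

variable {V : Type*} (Γ : LabeledGraph V)

/-- The label of an edge, as a function of the unordered pair of its endpoints. -/
def edgeLabel : Sym2 V → ℕ := Sym2.lift ⟨Γ.label, Γ.label_symm⟩

@[simp]
theorem edgeLabel_mk (a b : V) : Γ.edgeLabel s(a, b) = Γ.label a b := rfl

/-- The labeled graph on the same vertices whose only edge is `e` (if `e` is an edge of `Γ`). Its
Artin group is the free product of the dihedral Artin group of `e` and a free group on the other
vertices. -/
def edgeGraph (e : Sym2 V) : LabeledGraph V where
  graph :=
    { Adj := fun a b => Γ.graph.Adj a b ∧ s(a, b) = e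
      symm := ⟨fun a b h => ⟨h.1.symm, by rw [Sym2.eq_swap]; exact h.2⟩⟩
      loopless := ⟨fun a h => Γ.graph.loopless.irrefl a h.1⟩ }
  label := Γ.label
  label_symm := Γ.label_symm
  two_le_label := fun _ _ h => Γ.two_le_label h.1

/-- The homomorphism out of the Artin group of `Γ.edgeGraph s(a, b)` determined by the images of
`a` and `b`; the other vertices are sent to `1`. -/
noncomputable def edgeLift {G : Type*} [Group G] {e : Sym2 V} {a b : V} (he : e = s(a, b)) (x y : G)
    (h : altProd (Γ.edgeLabel e) x y = altProd (Γ.edgeLabel e) y x) :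
    ArtinGroup (Γ.edgeGraph e) →* G :=
  open Classical in
  ArtinGroup.lift (fun v => if v = a then x else if v = b then y else 1) (by
    subst he
    rintro c d ⟨hcd, hs⟩
    have hne := hcd.ne
    rw [edgeLabel_mk] at h
    change altProd (Γ.label c d) _ _ = altProd (Γ.label c d) _ _
    rcases Sym2.eq_iff.1 hs with ⟨rfl, rfl⟩ | ⟨rfl, rfl⟩
    · simpa [hne.symm] using h
    · rw [Γ.label_symm] at h
      simpa [hne] using h.symm)

section

variable {Γ} {G : Type*} [Group G] {e : Sym2 V} {a b : V} (he : e = s(a, b)) {x y : G}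
  (h : altProd (Γ.edgeLabel e) x y = altProd (Γ.edgeLabel e) y x)

theorem edgeLift_left : Γ.edgeLift he x y h (artinGen _ a) = x := by
  simp [edgeLift]

theorem edgeLift_right (hab : a ≠ b) : Γ.edgeLift he x y h (artinGen _ b) = y := by
  simp [edgeLift, hab.symm]

end

/-- A path in the Artin group of an edge `e`: in step `t` the position `Q t` is multiplied by the
syllable `v t ^ n t`, where `v` alternates between the endpoints of `e`. -/
structure SyllablePath (e : Sym2 V) (v : ℕ → V) (n : ℕ → ℤ)
    (Q : ℕ → ArtinGroup (Γ.edgeGraph e)) : Prop where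
  adj : ∀ t, Γ.graph.Adj (v t) (v (t + 1))
  eq_mk : ∀ t, e = s(v t, v (t + 1))
  exponent_ne_zero : ∀ t, n t ≠ 0
  step : ∀ t, Q (t + 1) = Q t * artinGen _ (v t) ^ n t

end LabeledGraph

namespace Dihedral

open LabeledGraph

variable {V : Type*} {Γ : LabeledGraph V} {e : Sym2 V} {a b : V}

/-- The representation of the Artin group of an edge by unipotent matrices. -/
noncomputable def rep (Γ : LabeledGraph V) (he : e = s(a, b)) (hab : Γ.graph.Adj a b) :
    ArtinGroup (Γ.edgeGraph e) →* Matrix.SpecialLinearGroup (Fin 2) ℝ :=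
  Γ.edgeLift he (up (twoCos (Γ.edgeLabel e))) (low (twoCos (Γ.edgeLabel e)))
    (altProd_up_low (by rw [he]; exact Γ.two_le_label hab))

theorem rep_left (he : e = s(a, b)) (hab : Γ.graph.Adj a b) :
    rep Γ he hab (artinGen _ a) = up (twoCos (Γ.edgeLabel e)) :=
  edgeLift_left he _

theorem rep_right (he : e = s(a, b)) (hab : Γ.graph.Adj a b) :
    rep Γ he hab (artinGen _ b) = low (twoCos (Γ.edgeLabel e)) :=
  edgeLift_right he _ hab.ne

theorem first_row_eq_continuant (l : ℝ) {n : ℕ → ℤ}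
    {R : ℕ → Matrix.SpecialLinearGroup (Fin 2) ℝ} (h_zero : R 0 = 1)
    (h_even : ∀ h, R (2 * h + 1) = R (2 * h) * up l ^ n (2 * h))
    (h_odd : ∀ h, R (2 * h + 2) = R (2 * h + 1) * low l ^ n (2 * h + 1)) (h : ℕ) :
    (R (2 * h) : Matrix (Fin 2) (Fin 2) ℝ) 0 0 = (-1) ^ h * continuant l n (2 * h + 1) ∧
    (R (2 * h) : Matrix (Fin 2) (Fin 2) ℝ) 0 1 = -(-1) ^ h * continuant l n (2 * h) := by
  induction h with
  | zero => simp [h_zero, continuant]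
  | succ h ih =>
    have hcont (t : ℕ) : continuant l n (t + 2) =
      l * n t * continuant l n (t + 1) - continuant l n t := rfl
    rw [mul_add, hcont (2 * h + 1), hcont (2 * h), h_odd, h_even, up_zpow, low_zpow]
    simp only [Matrix.SpecialLinearGroup.coe_mul, coe_up, coe_low, Matrix.mul_apply,
      Fin.sum_univ_two, ih.1, ih.2, pow_succ, Matrix.of_apply, Matrix.cons_val_zero,
      Matrix.cons_val_one, Matrix.cons_val_fin_one]
    constructor <;> ring

end Dihedral

namespace LabeledGraph.SyllablePath

open Dihedral

variable {V : Type*} {Γ : LabeledGraph V} {e : Sym2 V} {v : ℕ → V} {n : ℕ → ℤ}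
  {Q : ℕ → ArtinGroup (Γ.edgeGraph e)}

theorem shift (h : Γ.SyllablePath e v n Q) (c : ℕ) :
    Γ.SyllablePath e (fun t => v (c + t)) (fun t => n (c + t)) (fun t => Q (c + t)) :=
  ⟨fun t => h.adj (c + t), fun t => h.eq_mk (c + t), fun t => h.exponent_ne_zero (c + t),
    fun t => h.step (c + t)⟩

theorem vertex_add_two (h : Γ.SyllablePath e v n Q) (t : ℕ) : v (t + 2) = v t := by
  have heq := h.eq_mk (t + 1)
  rw [h.eq_mk t, Sym2.eq_swap] at heq
  exact (Sym2.congr_right.1 heq).symm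

theorem vertex_periodic (h : Γ.SyllablePath e v n Q) : Function.Periodic v 2 := h.vertex_add_two

theorem vertex_even (h : Γ.SyllablePath e v n Q) (k : ℕ) : v (2 * k) = v 0 := by
  have hk := h.vertex_periodic.nat_mul_eq k
  rwa [Nat.cast_id, mul_comm] at hk

theorem vertex_odd (h : Γ.SyllablePath e v n Q) (k : ℕ) : v (2 * k + 1) = v 1 := by
  rw [add_comm, mul_comm]
  exact h.vertex_periodic.nat_mul k 1

theorem even_of_periodic (h : Γ.SyllablePath e v n Q) {T : ℕ} (hv : Function.Periodic v T) :
    Even T := by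
  by_contra hodd
  obtain ⟨k, rfl⟩ := Nat.not_even_iff_odd.1 hodd
  have heq := hv 0
  rw [zero_add, h.vertex_odd] at heq
  exact (h.adj 0).ne heq.symm

theorem exponentSum_eq (h : Γ.SyllablePath e v n Q) (t : ℕ) :
    ArtinGroup.exponentSum _ (Q t) =
      ArtinGroup.exponentSum _ (Q 0) * Multiplicative.ofAdd (∑ i ∈ Finset.range t, n i) := by
  induction t with
  | zero => simp
  | succ t ih =>
    rw [h.step, map_mul, ih, map_zpow, ArtinGroup.exponentSum_artinGen, ← ofAdd_zsmul, mul_assoc,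
      ← ofAdd_add, Finset.sum_range_succ, smul_eq_mul, mul_one]

theorem exists_sign_change (h : Γ.SyllablePath e v n Q) {T : ℕ} (hT : 0 < T) (hQ : Q T = Q 0) :
    ∃ t, n t * n (t + 1) < 0 := by
  by_contra! hpos
  have hsign (t : ℕ) : 0 < n t * n 0 := by
    induction t with
    | zero => exact mul_self_pos.2 (h.exponent_ne_zero 0)
    | succ t ih =>
      have hlt : 0 < n t * n (t + 1) :=
        (hpos t).lt_of_ne' (mul_ne_zero (h.exponent_ne_zero t) (h.exponent_ne_zero (t + 1)))
      rcases lt_or_gt_of_ne (h.exponent_ne_zero t) with hneg | hpos'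
      · exact mul_pos_of_neg_of_neg (neg_of_mul_pos_right hlt hneg.le)
          (neg_of_mul_pos_right ih hneg.le)
      · exact mul_pos (pos_of_mul_pos_right hlt hpos'.le) (pos_of_mul_pos_right ih hpos'.le)
  have hsum := h.exponentSum_eq T
  rw [hQ, left_eq_mul, ofAdd_eq_one] at hsum
  have hlt : 0 < (∑ i ∈ Finset.range T, n i) * n 0 := by
    rw [Finset.sum_mul]
    exact Finset.sum_pos (fun i _ => hsign i) (Finset.nonempty_range_iff.2 hT.ne')
  rw [hsum, zero_mul] at hlt
  exact hlt.false

theorem label_le_of_sign_change (h : Γ.SyllablePath e v n Q) (hl : 3 ≤ Γ.edgeLabel e)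
    (hs : n (Γ.edgeLabel e - 3) * n (Γ.edgeLabel e - 2) < 0) {k : ℕ} (hk : 0 < k)
    (hQ : Q (2 * k) = Q 0) : Γ.edgeLabel e ≤ k := by
  by_contra! hlt
  have hrow := (first_row_eq_continuant (twoCos (Γ.edgeLabel e)) (n := n)
    (R := fun t => rep Γ (h.eq_mk 0) (h.adj 0) ((Q 0)⁻¹ * Q t)) (by simp)
    (fun k => by rw [h.step, h.vertex_even, ← mul_assoc, map_mul, map_zpow, rep_left])
    (fun k => by rw [h.step, h.vertex_odd, ← mul_assoc, map_mul, map_zpow, rep_right]) k).2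
  rw [hQ, inv_mul_cancel, map_one] at hrow
  have hne := continuant_ne_zero hl h.exponent_ne_zero hs (t := 2 * k) (by omega) (by omega)
  exact hne (by simpa using hrow.symm)

theorem apply_two_ne_of_label_eq_two (h : Γ.SyllablePath e v n Q) (hl : Γ.edgeLabel e = 2) :
    Q 2 ≠ Q 0 := by
  intro hQ
  let φ : ArtinGroup (Γ.edgeGraph e) →* Multiplicative ℤ :=
    Γ.edgeLift (h.eq_mk 0) (Multiplicative.ofAdd 1) 1 (by rw [hl]; simp [altProd])
  have hword := h.step 1
  rw [one_add_one_eq_two, hQ, ← zero_add 1, h.step 0, mul_assoc, left_eq_mul] at hword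
  have hφ := congrArg φ hword
  rw [map_mul, map_zpow, map_zpow, map_one, edgeLift_left, edgeLift_right _ _ (h.adj 0).ne,
    one_zpow, mul_one, ← ofAdd_zsmul, ofAdd_eq_one, smul_eq_mul, mul_one] at hφ
  exact h.exponent_ne_zero 0 hφ

theorem two_mul_label_le (h : Γ.SyllablePath e v n Q) {T : ℕ} (hT : 0 < T)
    (hv : Function.Periodic v T) (hn : Function.Periodic n T) (hQ : Function.Periodic Q T) :
    2 * Γ.edgeLabel e ≤ T := by
  have hm : 2 ≤ Γ.edgeLabel e := by rw [h.eq_mk 0]; exact Γ.two_le_label (h.adj 0)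
  obtain ⟨k, rfl⟩ := even_iff_exists_two_mul.1 (h.even_of_periodic hv)
  rcases hm.eq_or_lt with hm | hm
  · by_contra! hlt
    obtain rfl : k = 1 := by omega
    exact h.apply_two_ne_of_label_eq_two hm.symm (by simpa using hQ 0)
  obtain ⟨t, ht⟩ := h.exists_sign_change hT (by simpa using hQ 0)
  set m := Γ.edgeLabel e
  have hle : m ≤ m * (2 * k) := Nat.le_mul_of_pos_right _ hT
  have hnm := hn.nat_mul m
  rw [Nat.cast_id] at hnm
  obtain ⟨c, hc⟩ : ∃ c, c + (m - 3) = t + m * (2 * k) := ⟨_, Nat.sub_add_cancel (by omega)⟩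
  have hs : n (c + (m - 3)) * n (c + (m - 2)) < 0 := by
    rw [hc, show c + (m - 2) = t + 1 + m * (2 * k) by omega, hnm, hnm]
    exact ht
  have := (h.shift c).label_le_of_sign_change hm hs (k := k) (by omega) (hQ c)
  omega

end LabeledGraph.SyllablePath

namespace Dihedral

open LabeledGraph

variable {V : Type*} {Γ : LabeledGraph V} {e : Sym2 V} {a b : V}

theorem rep_artinGen_zpow_off_diag (he : e = s(a, b)) (hab : Γ.graph.Adj a b) {v : V}
    (hv : v ∈ e) (n : ℤ) : ∃ i j, i ≠ j ∧
      |(rep Γ he hab (artinGen _ v ^ n) : Matrix (Fin 2) (Fin 2) ℝ) i j| =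
        |n * twoCos (Γ.edgeLabel e)| := by
  rw [he, Sym2.mem_iff] at hv
  rcases hv with rfl | rfl
  · exact ⟨0, 1, zero_ne_one, by rw [map_zpow, rep_left, up_zpow]; simp [coe_up]⟩
  · exact ⟨1, 0, one_ne_zero, by rw [map_zpow, rep_right, low_zpow]; simp [coe_low]⟩

theorem rep_altProd_sq_zpow (he : e = s(a, b)) (hab : Γ.graph.Adj a b) (j : ℤ) :
    rep Γ he hab ((altProd (Γ.edgeLabel e) (artinGen _ a) (artinGen _ b) ^ 2) ^ j) = 1 ∨
      rep Γ he hab ((altProd (Γ.edgeLabel e) (artinGen _ a) (artinGen _ b) ^ 2) ^ j) = -1 := by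
  rw [map_zpow, map_pow, map_altProd, rep_left, rep_right]
  rcases altProd_sq (m := Γ.edgeLabel e) (by rw [he]; exact Γ.two_le_label hab)
    with h | h <;> rw [h]
  · exact Or.inl (one_zpow j)
  · exact (Int.even_or_odd j).imp Even.neg_one_zpow Odd.neg_one_zpow

theorem eq_zero_of_conj_artinGen_zpow (he : e = s(a, b)) (hab : Γ.graph.Adj a b)
    (hl : 3 ≤ Γ.edgeLabel e) {v : V} (hv : v ∈ e) {p : ArtinGroup (Γ.edgeGraph e)} {n j : ℤ}
    (h : p⁻¹ * artinGen _ v ^ n * p =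
      (altProd (Γ.edgeLabel e) (artinGen _ a) (artinGen _ b) ^ 2) ^ j) :
    n = 0 := by
  obtain ⟨i, k, hik, habs⟩ := rep_artinGen_zpow_off_diag he hab hv n
  have hconj := rep_altProd_sq_zpow he hab j
  rw [← h] at hconj
  have hscalar : rep Γ he hab (artinGen _ v ^ n) = 1 ∨ rep Γ he hab (artinGen _ v ^ n) = -1 := by
    rw [show artinGen _ v ^ n = p * (p⁻¹ * artinGen _ v ^ n * p) * p⁻¹ by group, map_mul, map_mul]
    rcases hconj with h | h <;> rw [h] <;> simp
  have hzero : |(n : ℝ) * twoCos (Γ.edgeLabel e)| = 0 := by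
    rw [← habs]
    rcases hscalar with h | h <;> rw [h] <;> simp [hik]
  exact_mod_cast (mul_eq_zero.1 (abs_eq_zero.1 hzero)).resolve_right (twoCos_pos hl).ne'

end Dihedral

namespace Hypermap

open Equiv
open Equiv.Perm hiding Disjoint

section Curvature

variable {S : Type*} {O : Finset S} {p q : Perm S} {s : S}

theorem cycle_apply (p : Perm S) (s : S) : cycle p (p s) = cycle p s :=
  cycle_eq_iff.2 (sameCycle_apply p s).symm

theorem cycleCount_le_ncard_image {β : Type*} (c : S → β)
    (h : ∀ s ∈ O, ∀ t ∈ O, c s = c t → p.SameCycle s t) :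
    cycleCount O p ≤ (c '' O).ncard := by
  let φ : β → Set S := fun b => {t | ∃ s ∈ O, c s = b ∧ p.SameCycle s t}
  have himage : cycle p '' O = φ '' (c '' O) := by
    rw [Set.image_image]
    refine Set.image_congr fun s hs => Set.ext fun t => ⟨fun ht => ⟨s, hs, rfl, ht⟩, ?_⟩
    rintro ⟨s', hs', hc, ht⟩
    exact (h s hs s' hs' hc.symm).trans ht
  rw [cycleCount, himage]
  exact Set.ncard_image_le (O.finite_toSet.image c)

variable [Finite S]

theorem sum_comp_perm (hO : Invariant O p) (t : S → ℚ) : ∑ s ∈ O, t (p s) = ∑ s ∈ O, t s :=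
  Finset.sum_equiv p (fun _ => hO.apply_mem_iff.symm) fun _ _ => rfl

theorem sum_inv_ncard_cycle (hO : Invariant O p) :
    ∑ s ∈ O, ((cycle p s).ncard : ℚ)⁻¹ = cycleCount O p := by
  classical
  have hcount : cycleCount O p = (O.image (cycle p)).card := by
    rw [cycleCount, ← Finset.coe_image, Set.ncard_coe_finset]
  rw [hcount, Finset.card_eq_sum_ones, Nat.cast_sum,
    ← Finset.sum_fiberwise_of_maps_to fun s hs => Finset.mem_image_of_mem (cycle p) hs]
  refine Finset.sum_congr rfl fun c hc => ?_
  obtain ⟨s, hs, rfl⟩ := Finset.mem_image.1 hc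
  have hfiber : ((O.filter fun t => cycle p t = cycle p s : Finset S) : Set S) = cycle p s := by
    ext t
    rw [Finset.mem_coe, Finset.mem_filter, cycle_eq_iff, mem_cycle, sameCycle_comm,
      and_iff_right_iff_imp]
    exact fun h => hO.mem_of_sameCycle h hs
  have hne : ((cycle p s).ncard : ℚ) ≠ 0 :=
    Nat.cast_ne_zero.2 (Set.ncard_ne_zero_of_mem (SameCycle.refl p s))
  rw [Finset.sum_congr rfl fun t ht => by rw [(Finset.mem_filter.1 ht).2], Finset.sum_const,
    ← Set.ncard_coe_finset, hfiber, nsmul_eq_mul, mul_inv_cancel₀ hne, Nat.cast_one]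

theorem exists_period (p : Perm S) (s : S) :
    ∃ T, 0 < T ∧ (p ^ T) s = s ∧ T ≤ (cycle p s).ncard := by
  have hmem : s ∈ Function.periodicPts p := p.injective.mem_periodicPts s
  refine ⟨Function.minimalPeriod p s, Function.minimalPeriod_pos_of_mem_periodicPts hmem, ?_, ?_⟩
  · rw [← Perm.iterate_eq_pow]
    exact Function.isPeriodicPt_minimalPeriod p s
  · rw [← Finset.card_range (Function.minimalPeriod p s), ← Set.ncard_coe_finset,
      Finset.coe_range, ← Function.iterate_injOn_Iio_minimalPeriod.ncard_image]
    refine Set.ncard_le_ncard ?_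
    rintro _ ⟨t, -, rfl⟩
    exact ⟨t, by simp only [zpow_natCast, Perm.iterate_eq_pow]⟩

theorem le_ncard_cycle {k : ℕ} (h : ∀ j, 0 < j → j < k → (p ^ j) s ≠ s) :
    k ≤ (cycle p s).ncard := by
  obtain ⟨T, hT, hfix, hle⟩ := exists_period p s
  exact (not_lt.1 fun hlt => h T hT hlt hfix).trans hle

theorem TrivialHolonomy.exists_walk {L : Type*} [Group L] {b : S → L}
    (h : TrivialHolonomy p b s) : ∃ T, 0 < T ∧ T ≤ (cycle p s).ncard ∧
      (Function.Periodic (fun t => (p ^ t) s) T) ∧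
      ∃ Q : ℕ → L, Function.Periodic Q T ∧ ∀ t, Q (t + 1) = Q t * b ((p ^ t) s) := by
  obtain ⟨Q, hQ⟩ := h
  obtain ⟨T, hT, hfix, hle⟩ := exists_period p s
  have hper : Function.Periodic (fun t => (p ^ t) s) T := fun t => by
    simp only [pow_add, Perm.mul_apply, hfix]
  refine ⟨T, hT, hle, hper, fun t => Q ((p ^ t) s), fun t => congrArg Q (hper t), fun t => ?_⟩
  rw [← hQ _ ⟨t, by simp only [zpow_natCast]⟩, ← Perm.mul_apply, ← pow_succ']

theorem sum_corner_nonpos (hO : Invariant O q) {w : S → ℚ} (hw : ∀ s ∈ O, w s ≤ 1 / 2)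
    (h₁ : ∀ s ∈ O, q s ≠ s) (h₂ : ∀ s ∈ O, q (q s) ≠ s)
    (h₃ : ∀ s ∈ O, q (q (q s)) = s → w s + w (q s) + w (q (q s)) ≤ 1) :
    ∑ s ∈ O, (2 * ((cycle q s).ncard : ℚ)⁻¹ - (1 - w s)) ≤ 0 := by
  set t : S → ℚ := fun s => 2 * ((cycle q s).ncard : ℚ)⁻¹ - (1 - w s) with ht
  have hle : ∀ s ∈ O, t s + t (q s) + t (q (q s)) ≤ 0 := by
    intro s hs
    simp only [ht, cycle_apply]
    by_cases htri : q (q (q s)) = s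
    · have hcard : 3 ≤ (cycle q s).ncard := le_ncard_cycle fun j h0 h3 => by
        interval_cases j
        exacts [h₁ s hs, h₂ s hs]
      have : ((cycle q s).ncard : ℚ)⁻¹ ≤ 3⁻¹ := inv_anti₀ three_pos (by exact_mod_cast hcard)
      linarith [h₃ s hs htri]
    · have hcard : 4 ≤ (cycle q s).ncard := le_ncard_cycle fun j h0 h4 => by
        interval_cases j
        exacts [h₁ s hs, h₂ s hs, htri]
      have : ((cycle q s).ncard : ℚ)⁻¹ ≤ 4⁻¹ := inv_anti₀ four_pos (by exact_mod_cast hcard)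
      linarith [hw s hs, hw _ (hO s hs), hw _ (hO _ (hO s hs))]
  have hsum := Finset.sum_nonpos hle
  rw [Finset.sum_add_distrib, Finset.sum_add_distrib, sum_comp_perm hO (fun s => t (q s)),
    sum_comp_perm hO t] at hsum
  linarith

end Curvature

namespace Decoration

variable {F X : Type*} [Group F] [MulAction F X] {Y : LocalSystem F X} {S : Type*}
  {D : Decoration Y S} {O : Finset S}

/-- The permutation whose cycles are the faces of the hypermap. -/
def corner (D : Decoration Y S) : Perm S := (D.f false)⁻¹ * D.f true

theorem f_false_corner (D : Decoration Y S) (s : S) : D.f false (D.corner s) = D.f true s :=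
  (D.f false).apply_symm_apply _

variable [Finite S]

theorem IsPlanar.invariant_corner (hP : D.IsPlanar O) : Invariant O D.corner :=
  hP.left.inv.mul hP.right

open Classical in
theorem sum_vertex_le (hP : D.IsPlanar O) {i : Bool} {w : S → ℚ}
    (hv : ∀ s ∈ O, ¬ D.IsDefect i s → 2 * ((cycle (D.f i) s).ncard : ℚ)⁻¹ ≤ w s) :
    2 * (cycleCount O (D.f i) : ℚ) - ∑ s ∈ O, w s ≤
      2 * cycleCount (O.filter (D.IsDefect i)) (D.f i) - ∑ s ∈ O.filter (D.IsDefect i), w s := by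
  have hinv : Invariant (O.filter (D.IsDefect i)) (D.f i) := fun s hs => by
    rw [Finset.mem_filter] at hs ⊢
    exact ⟨hP.invariant i s hs.1, hs.2.sameCycle (sameCycle_apply _ s)⟩
  rw [← sum_inv_ncard_cycle (hP.invariant i), ← sum_inv_ncard_cycle hinv, Finset.mul_sum,
    Finset.mul_sum, ← Finset.sum_sub_distrib, ← Finset.sum_sub_distrib,
    ← Finset.sum_filter_add_sum_filter_not O (D.IsDefect i), add_le_iff_nonpos_right]
  refine Finset.sum_nonpos fun s hs => ?_
  rw [Finset.mem_filter] at hs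
  exact sub_nonpos.2 (hv s hs.1 hs.2)

open Classical in
theorem Separated.cycleCount_defect_le (hD : D.Separated O) :
    cycleCount (O.filter (D.IsDefect false)) (D.f false) +
      cycleCount (O.filter (D.IsDefect true)) (D.f true) ≤ 2 := by
  have hle (i : Bool) : cycleCount (O.filter (D.IsDefect i)) (D.f i) ≤
      (D.cls i '' (O.filter (D.IsDefect i) : Finset S)).ncard :=
    cycleCount_le_ncard_image _ fun s hs t ht hcls => by
      rw [Finset.mem_filter] at hs ht
      exact (hD.unique i i s hs.1 t ht.1 hs.2 ht.2 hcls).2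
  have hdisj : Disjoint (D.cls false '' (O.filter (D.IsDefect false) : Finset S))
      (D.cls true '' (O.filter (D.IsDefect true) : Finset S)) := by
    rw [Set.disjoint_left]
    rintro _ ⟨s, hs, rfl⟩ ⟨t, ht, hcls⟩
    rw [Finset.mem_coe, Finset.mem_filter] at hs ht
    exact Bool.false_ne_true (hD.unique _ _ s hs.1 t ht.1 hs.2 ht.2 hcls.symm).1
  have hunion := Set.ncard_le_card (D.cls false '' (O.filter (D.IsDefect false) : Finset S) ∪
    D.cls true '' (O.filter (D.IsDefect true) : Finset S))
  rw [Set.ncard_union_eq hdisj, Nat.card_eq_fintype_card, Fintype.card_bool] at hunion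
  exact (Nat.add_le_add (hle false) (hle true)).trans hunion

/-- Gauss–Bonnet: at most two vertices are defects and all others are nonpositively curved, which
leaves some positive curvature for the faces. -/
theorem sum_face_pos (hP : D.IsPlanar O) (hD : D.Separated O) {w : Bool → S → ℚ}
    (hw : ∀ i, ∀ s ∈ O, 0 < w i s)
    (hv : ∀ i, ∀ s ∈ O, ¬ D.IsDefect i s → 2 * ((cycle (D.f i) s).ncard : ℚ)⁻¹ ≤ w i s) :
    0 < ∑ s ∈ O, (2 * ((cycle D.corner s).ncard : ℚ)⁻¹ - (2 - w false s - w true s)) := by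
  classical
  set defects : Bool → Finset S := fun i => O.filter (D.IsDefect i)
  have hnonneg (i : Bool) : 0 ≤ ∑ s ∈ defects i, w i s :=
    Finset.sum_nonneg fun s hs => (hw i s (Finset.mem_filter.1 hs).1).le
  have hpos : 0 < ∑ s ∈ defects false, w false s + ∑ s ∈ defects true, w true s := by
    obtain ⟨i, s, hs, hdef⟩ := hD.exists_defect
    have hi : 0 < ∑ s ∈ defects i, w i s :=
      Finset.sum_pos (fun s hs => hw i s (Finset.mem_filter.1 hs).1)
        ⟨s, Finset.mem_filter.2 ⟨hs, hdef⟩⟩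
    cases i
    exacts [add_pos_of_pos_of_nonneg hi (hnonneg true), add_pos_of_nonneg_of_pos (hnonneg false) hi]
  have hcount : (cycleCount (defects false) (D.f false) : ℚ) +
      cycleCount (defects true) (D.f true) ≤ 2 := by exact_mod_cast hD.cycleCount_defect_le
  have heuler : (cycleCount O (D.f false) : ℚ) + cycleCount O (D.f true) +
      cycleCount O D.corner - O.card = 2 := by
    have heq := hP.eulerChar_eq
    rw [eulerChar] at heq
    exact_mod_cast heq
  have hfalse := sum_vertex_le hP (hv false)
  have htrue := sum_vertex_le hP (hv true)
  rw [Finset.sum_sub_distrib, ← Finset.mul_sum, sum_inv_ncard_cycle hP.invariant_corner,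
    Finset.sum_sub_distrib, Finset.sum_sub_distrib, Finset.sum_const, nsmul_eq_mul]
  linarith

end Decoration

end Hypermap

namespace SyllableWord

variable {V : Type*} {v : ℕ → V} {n : ℕ → ℤ}

/-- The reduced word of the free product of copies of `ℤ` indexed by `V` whose `t`-th syllable, for
`t < T`, is `n t` in the copy indexed by `v t`. -/
def word (hv : ∀ t, v (t + 1) ≠ v t) (hn : ∀ t, n t ≠ 0) (T : ℕ) :
    Monoid.CoprodI.Word fun _ : V => Multiplicative ℤ where
  toList := (List.range T).map fun t => ⟨v t, Multiplicative.ofAdd (n t)⟩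
  ne_one := by
    intro l hl
    obtain ⟨t, -, rfl⟩ := List.mem_map.1 hl
    exact fun h => hn t (ofAdd_eq_one.1 h)
  chain_ne := by
    rw [List.isChain_iff_getElem]
    intro i hi
    simpa using (hv i).symm

theorem prod_word_succ (hv : ∀ t, v (t + 1) ≠ v t) (hn : ∀ t, n t ≠ 0) (t : ℕ) :
    (word hv hn (t + 1)).prod =
      (word hv hn t).prod * Monoid.CoprodI.of (i := v t) (Multiplicative.ofAdd (n t)) := by
  simp [Monoid.CoprodI.Word.prod, word, List.range_succ]

theorem prod_word_ne_one (hv : ∀ t, v (t + 1) ≠ v t) (hn : ∀ t, n t ≠ 0) {T : ℕ} (hT : 0 < T) :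
    (word hv hn T).prod ≠ 1 := by
  classical
  intro h
  have hempty : word hv hn T = Monoid.CoprodI.Word.empty :=
    Monoid.CoprodI.Word.equiv.symm.injective (h.trans Monoid.CoprodI.Word.prod_empty.symm)
  have hlength := congrArg (fun w => w.toList.length) hempty
  simp only [word, Monoid.CoprodI.Word.empty, List.length_map, List.length_range,
    List.length_nil] at hlength
  exact hT.ne' hlength

theorem freeGroup_ne_of_alternating {Q : ℕ → FreeGroup V} {T : ℕ} (hT : 0 < T)
    (hv : ∀ t, v (t + 1) ≠ v t) (hn : ∀ t, n t ≠ 0)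
    (hQ : ∀ t, Q (t + 1) = Q t * FreeGroup.of (v t) ^ n t) : Q T ≠ Q 0 := by
  intro h
  let φ : FreeGroup V →* Monoid.CoprodI fun _ : V => Multiplicative ℤ :=
    FreeGroup.lift fun v => Monoid.CoprodI.of (i := v) (Multiplicative.ofAdd 1)
  have hφ (t : ℕ) : φ (Q t) = φ (Q 0) * (word hv hn t).prod := by
    induction t with
    | zero => simp [word, Monoid.CoprodI.Word.prod]
    | succ t ih =>
      rw [hQ, map_mul, ih, prod_word_succ, mul_assoc, map_zpow, FreeGroup.lift_apply_of, ← map_zpow,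
        ← ofAdd_zsmul, smul_eq_mul, mul_one]
  have hprod := hφ T
  rw [h, left_eq_mul] at hprod
  exact prod_word_ne_one hv hn hT hprod

end SyllableWord

namespace ArtinSystem

open Hypermap LabeledGraph

universe u

variable {V : Type u} (Γ : LabeledGraph V)

/-- The left cosets of the cyclic subgroup generated by `z`: the positions of the sides of a
diagram, on which the free group acts from the left through the Artin group. -/
def Pos (z : ArtinGroup Γ) := ArtinGroup Γ ⧸ Subgroup.zpowers z

/-- The coset of `g`. -/
def Pos.mk (z g : ArtinGroup Γ) : Pos Γ z := QuotientGroup.mk g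

noncomputable instance (z : ArtinGroup Γ) : MulAction (FreeGroup V) (Pos Γ z) :=
  MulAction.compHom (ArtinGroup Γ ⧸ Subgroup.zpowers z) (PresentedGroup.mk Γ.artinRels)

/-- The kinds of vertices of a diagram: edges of `Γ`, and `none` for the exterior, in the colour
`false`; vertices of `Γ` in the colour `true`. -/
def Kind (V : Type u) : Bool → Type u
  | false => Option (Sym2 V)
  | true => V

/-- The group in which the labels around a vertex of a given kind are multiplied. -/
def VertexGroup : ∀ i, Kind V i → Type u
  | false, none => FreeGroup V
  | false, some e => ArtinGroup (Γ.edgeGraph e)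
  | true, _ => FreeGroup V

instance : ∀ i k, Group (VertexGroup Γ i k)
  | false, none => inferInstanceAs (Group (FreeGroup V))
  | false, some e => inferInstanceAs (Group (ArtinGroup (Γ.edgeGraph e)))
  | true, _ => inferInstanceAs (Group (FreeGroup V))

/-- The homomorphism evaluating labels in the group of a vertex. -/
def vertexHom : ∀ i k, FreeGroup V →* VertexGroup Γ i k
  | false, none => MonoidHom.id (FreeGroup V)
  | false, some e => PresentedGroup.mk (Γ.edgeGraph e).artinRels
  | true, _ => MonoidHom.id (FreeGroup V)

/-- The edge of a side whose ends have the given kinds, if it is not exterior. -/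
def edgeOf (k : ∀ i, Kind V i) : Option (Sym2 V) := k false

/-- The generator of a side whose ends have the given kinds. -/
def vertexOf (k : ∀ i, Kind V i) : V := k true

/-- A side carries a power of its generator, which lies on its edge. -/
def Adm (k : ∀ i, Kind V i) (b : FreeGroup V) : Prop :=
  (∃ n : ℤ, b = FreeGroup.of (vertexOf k) ^ n) ∧
    (b ≠ 1 → ∀ e, edgeOf k = some e → e ∈ Γ.graph.edgeSet ∧ vertexOf k ∈ e)

/-- The standard subgroup of an edge. -/
def edgeStandardSubgroup (e : Sym2 V) : Subgroup (ArtinGroup Γ) := standardSubgroup Γ {v | v ∈ e}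

/-- The vertices of kind `e₁` whose positions are cosets of elements of the subgroup of `e₁`; they
form one of the two classes that keep defects apart. -/
def IsHome (e₁ : Sym2 V) (z : ArtinGroup Γ) : ∀ i, Kind V i → Pos Γ z → Prop
  | false, k, x => k = some e₁ ∧ ∃ p ∈ edgeStandardSubgroup Γ e₁, x = Pos.mk Γ z p
  | true, _, _ => False

variable {Γ}

theorem Pos.mk_eq_iff {z g h : ArtinGroup Γ} :
    Pos.mk Γ z g = Pos.mk Γ z h ↔ ∃ j : ℤ, z ^ j = g⁻¹ * h :=
  QuotientGroup.eq.trans Subgroup.mem_zpowers_iff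

theorem Pos.smul_mk (z g : ArtinGroup Γ) (b : FreeGroup V) :
    b • Pos.mk Γ z g = Pos.mk Γ z (PresentedGroup.mk Γ.artinRels b * g) := rfl

theorem artinGen_mem_edgeStandardSubgroup {e : Sym2 V} {v : V} (h : v ∈ e) :
    artinGen Γ v ∈ edgeStandardSubgroup Γ e :=
  Subgroup.subset_closure ⟨v, h, rfl⟩

theorem Adm.one (k : ∀ i, Kind V i) : Adm Γ k 1 :=
  ⟨⟨0, (zpow_zero _).symm⟩, fun h => absurd rfl h⟩

theorem Adm.mul {k : ∀ i, Kind V i} {b c : FreeGroup V} (hb : Adm Γ k b) (hc : Adm Γ k c) :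
    Adm Γ k (b * c) := by
  obtain ⟨⟨m, rfl⟩, hb⟩ := hb
  obtain ⟨⟨n, rfl⟩, hc⟩ := hc
  refine ⟨⟨m + n, (zpow_add _ m n).symm⟩, fun hne => ?_⟩
  by_cases hb1 : FreeGroup.of (vertexOf k) ^ m = 1
  · exact hc fun hc1 => hne (by rw [hb1, hc1, one_mul])
  · exact hb hb1

theorem Adm.mk_mem {k : ∀ i, Kind V i} {b : FreeGroup V} {e : Sym2 V} (hb : Adm Γ k b)
    (hk : edgeOf k = some e) : PresentedGroup.mk Γ.artinRels b ∈ edgeStandardSubgroup Γ e := by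
  by_cases hb1 : b = 1
  · rw [hb1, map_one]
    exact one_mem _
  · obtain ⟨⟨n, rfl⟩, hmem⟩ := hb
    rw [map_zpow]
    exact zpow_mem (artinGen_mem_edgeStandardSubgroup (hmem hb1 e hk).2) n

theorem isHome_inv_smul_iff {e₁ : Sym2 V} {z : ArtinGroup Γ} (i : Bool) {k : ∀ i, Kind V i}
    {b : FreeGroup V} (hb : Adm Γ k b) (x : Pos Γ z) :
    IsHome Γ e₁ z i (k i) (b⁻¹ • x) ↔ IsHome Γ e₁ z i (k i) x := by
  cases i with
  | true => exact Iff.rfl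
  | false =>
    refine and_congr_right fun hk => ⟨?_, ?_⟩
    · rintro ⟨p, hp, h⟩
      refine ⟨_, mul_mem (hb.mk_mem hk) hp, ?_⟩
      rw [← Pos.smul_mk, ← h, smul_inv_smul]
    · rintro ⟨p, hp, rfl⟩
      refine ⟨_, mul_mem (inv_mem (hb.mk_mem hk)) hp, ?_⟩
      rw [Pos.smul_mk, map_inv]

open Classical in
/-- The local system of the diagrams over an Artin group: around a vertex of kind `e` one reads a
word in the Artin group of the edge `e`, around a generator a power of it. -/
noncomputable def system (Γ : LabeledGraph V) (e₁ : Sym2 V) (z : ArtinGroup Γ) :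
    LocalSystem (FreeGroup V) (Pos Γ z) where
  Kind := Kind V
  Local := VertexGroup Γ
  group := inferInstance
  eval := vertexHom Γ
  Adm := Adm Γ
  adm_one := Adm.one
  adm_mul _ _ _ := Adm.mul
  Mergeable
    | false, k => (k : Option (Sym2 V)) ≠ none
    | true, _ => True
  cls i k x := decide (IsHome Γ e₁ z i k x)
  cls_smul i _ _ x hb := decide_eq_decide.2 (isHome_inv_smul_iff i hb x)

open Classical in
theorem cls_eq_true_iff {e₁ : Sym2 V} {z : ArtinGroup Γ} {i : Bool} {k : (system Γ e₁ z).Kind i}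
    {x : Pos Γ z} : (system Γ e₁ z).cls i k x = true ↔ IsHome Γ e₁ z i k x :=
  decide_eq_true_iff

end ArtinSystem

namespace ArtinSystem

open Hypermap Hypermap.Decoration LabeledGraph
open Equiv.Perm (SameCycle)

universe u

variable {V : Type u} {Γ : LabeledGraph V} {S : Type*}

/-- No nontrivial power of a generator of `e` is conjugate by an element of the subgroup of `e` to a
power of `z`. -/
def Anisotropic (Γ : LabeledGraph V) (e : Sym2 V) (z : ArtinGroup Γ) : Prop :=
  ∀ p ∈ edgeStandardSubgroup Γ e, ∀ v ∈ e, ∀ n j : ℤ, p⁻¹ * artinGen Γ v ^ n * p = z ^ j → n = 0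

section LocalGroups

variable {g : Equiv.Perm S} {b : S → FreeGroup V} {s : S} {k : Kind V false}

theorem trivialHolonomy_none_iff (hk : k = (none : Option (Sym2 V))) :
    TrivialHolonomy g (fun x => vertexHom Γ false k (b x)) s ↔ TrivialHolonomy g b s := by
  subst hk; rfl

theorem trivialHolonomy_some_iff {e : Sym2 V} (hk : k = some e) :
    TrivialHolonomy g (fun x => vertexHom Γ false k (b x)) s ↔
      TrivialHolonomy g (fun x => PresentedGroup.mk (Γ.edgeGraph e).artinRels (b x)) s := by
  subst hk; rfl

theorem vertexHom_ne_one {b : FreeGroup V} {v : V} {n : ℤ} (hb : b = FreeGroup.of v ^ n)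
    (hb1 : b ≠ 1) : ∀ i k, vertexHom Γ i k b ≠ 1
  | false, none => hb1
  | true, _ => hb1
  | false, some e => by
    intro h
    have hgen : artinGen (Γ.edgeGraph e) v ^ n = 1 := by rw [hb] at h; exact h
    exact hb1 (by rw [hb, ArtinGroup.eq_zero_of_artinGen_zpow_eq_one hgen, zpow_zero])

end LocalGroups

variable {e₁ : Sym2 V} {z : ArtinGroup Γ} {D : Decoration (system Γ e₁ z) S}
  {O : Finset S} {s t : S}

theorem exists_exponents (D : Decoration (system Γ e₁ z) S) (hI : D.Irreducible O) :
    ∃ n : S → ℤ, (∀ s, D.label s = FreeGroup.of (vertexOf (D.kind s)) ^ n s) ∧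
      ∀ s ∈ O, n s ≠ 0 := by
  choose n hn using fun s => (D.label_adm s).1
  refine ⟨n, hn, fun s hs h => hI.label_ne_one s hs ?_⟩
  rw [hn, h, zpow_zero]

theorem edgeOf_f (D : Decoration (system Γ e₁ z) S) (s : S) :
    edgeOf (D.kind (D.f false s)) = edgeOf (D.kind s) :=
  D.kind_f false s

theorem vertexOf_f (D : Decoration (system Γ e₁ z) S) (s : S) :
    vertexOf (D.kind (D.f true s)) = vertexOf (D.kind s) :=
  D.kind_f true s

theorem isDefect_of_fixed (hI : D.Irreducible O) {i : Bool} (hs : s ∈ O) (h : D.f i s = s) :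
    D.IsDefect i s := by
  intro htriv
  obtain ⟨n, hn, -⟩ := exists_exponents D hI
  obtain ⟨Q, hQ⟩ := htriv
  have hfix := hQ s (.refl _ _)
  rw [h, left_eq_mul] at hfix
  exact vertexHom_ne_one (hn s) (hI.label_ne_one s hs) i (D.kind s i) hfix

theorem cls_of_fixed (hz : Anisotropic Γ e₁ z) (hI : D.Irreducible O) {i : Bool} (hs : s ∈ O)
    (h : D.f i s = s) : D.cls i s = false := by
  classical
  refine decide_eq_false ?_
  cases i with
  | true => exact id
  | false =>
    rintro ⟨hk, p, hp, hpos⟩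
    obtain ⟨n, hn, hn0⟩ := exists_exponents D hI
    have hfix := D.pos_f false s
    rw [h, eq_inv_smul_iff, hpos, Pos.smul_mk, Eq.comm, Pos.mk_eq_iff] at hfix
    obtain ⟨j, hj⟩ := hfix
    rw [hn, map_zpow, ← mul_assoc] at hj
    have hmem := ((D.label_adm s).2 (hI.label_ne_one s hs) _ hk).2
    exact hn0 s hs (hz p hp _ hmem _ _ hj.symm)

theorem vertexOf_f_false_ne (hI : D.Irreducible O) (hs : s ∈ O) (h : D.f false s ≠ s) :
    vertexOf (D.kind (D.f false s)) ≠ vertexOf (D.kind s) :=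
  hI.kind_ne false s hs h trivial

theorem fixed_unique (hz : Anisotropic Γ e₁ z) (hD : D.Separated O) (hI : D.Irreducible O)
    {i j : Bool} (hs : s ∈ O) (ht : t ∈ O) (hi : D.f i s = s) (hj : D.f j t = t) :
    i = j ∧ s = t := by
  obtain ⟨hij, hst⟩ := hD.unique i j s hs t ht (isDefect_of_fixed hI hs hi)
    (isDefect_of_fixed hI ht hj) (by rw [cls_of_fixed hz hI hs hi, cls_of_fixed hz hI ht hj])
  exact ⟨hij, hst.eq_of_left hi⟩

variable [Finite S]

theorem vertexOf_walk_ne (hP : D.IsPlanar O) (hI : D.Irreducible O) (hs : s ∈ O)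
    (hN : ¬ D.IsDefect false s) (t : ℕ) : ((D.f false) ^ t) s ∈ O ∧
      vertexOf (D.kind (((D.f false) ^ (t + 1)) s)) ≠
        vertexOf (D.kind (((D.f false) ^ t) s)) := by
  have hst : (D.f false).SameCycle s (((D.f false) ^ t) s) := ⟨t, by simp only [zpow_natCast]⟩
  have hO := hP.left.mem_of_sameCycle hst hs
  refine ⟨hO, ?_⟩
  rw [pow_succ', Equiv.Perm.mul_apply]
  exact vertexOf_f_false_ne hI hO fun hfix =>
    hN ((isDefect_of_fixed hI hO hfix).sameCycle hst.symm)

theorem edgeOf_ne_none (hP : D.IsPlanar O) (hD : D.Separated O) (hI : D.Irreducible O)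
    (hs : s ∈ O) : edgeOf (D.kind s) ≠ none := by
  intro hk
  have hN : ¬ D.IsDefect false s := fun h => hD.mergeable false s hs h hk
  obtain ⟨n, hn, hn0⟩ := exists_exponents D hI
  have hwalk := vertexOf_walk_ne hP hI hs hN
  obtain ⟨T, hT, -, -, Q, hQT, hQ⟩ :=
    ((trivialHolonomy_none_iff (Γ := Γ) hk).1 (not_not.1 hN)).exists_walk
  refine SyllableWord.freeGroup_ne_of_alternating
    (v := fun t => vertexOf (D.kind (((D.f false) ^ t) s))) hT (fun t => (hwalk t).2)
    (fun t => hn0 _ (hwalk t).1) (fun t => ?_) (by simpa using hQT 0)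
  rw [hQ, hn]

theorem two_mul_label_le (hP : D.IsPlanar O) (hI : D.Irreducible O) (hs : s ∈ O)
    (hN : ¬ D.IsDefect false s) {e : Sym2 V} (he : edgeOf (D.kind s) = some e) :
    2 * Γ.edgeLabel e ≤ (cycle (D.f false) s).ncard := by
  obtain ⟨n, hn, hn0⟩ := exists_exponents D hI
  have hwalk := vertexOf_walk_ne hP hI hs hN
  obtain ⟨T, hT, hle, hper, Q, hQT, hQ⟩ :=
    ((trivialHolonomy_some_iff (Γ := Γ) he).1 (not_not.1 hN)).exists_walk
  have hadm (t : ℕ) : e ∈ Γ.graph.edgeSet ∧ vertexOf (D.kind (((D.f false) ^ t) s)) ∈ e :=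
    (D.label_adm _).2 (hI.label_ne_one _ (hwalk t).1) e
      ((D.kind_sameCycle ⟨t, by simp only [zpow_natCast]⟩).trans he)
  have hmk (t : ℕ) := (Sym2.mem_and_mem_iff (hwalk t).2.symm).1 ⟨(hadm t).2, (hadm (t + 1)).2⟩
  have hpath : Γ.SyllablePath e (fun t => vertexOf (D.kind (((D.f false) ^ t) s)))
      (fun t => n (((D.f false) ^ t) s)) Q :=
    { adj := fun t => by have he := (hadm t).1; rwa [hmk t] at he
      eq_mk := hmk
      exponent_ne_zero := fun t => hn0 _ (hwalk t).1
      step := fun t => by rw [hQ, hn, map_zpow]; rfl }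
  exact (hpath.two_mul_label_le hT (fun t => congrArg (fun x => vertexOf (D.kind x)) (hper t))
    (fun t => congrArg n (hper t)) hQT).trans hle

end ArtinSystem

namespace ArtinSystem

open Hypermap Hypermap.Decoration LabeledGraph

universe u

variable {V : Type u} {Γ : LabeledGraph V} {S : Type*} {e₁ : Sym2 V} {z : ArtinGroup Γ}
  {D : Decoration (system Γ e₁ z) S} {O : Finset S} {s : S}

theorem edgeOf_corner (D : Decoration (system Γ e₁ z) S) (s : S) :
    edgeOf (D.kind (D.corner s)) = edgeOf (D.kind (D.f true s)) := by
  rw [← edgeOf_f D (D.corner s), f_false_corner]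

/-- The label of an edge; exterior sides, which irreducible diagrams do not have, get label `2`. -/
def labelOf (Γ : LabeledGraph V) (e : Option (Sym2 V)) : ℕ := e.elim 2 Γ.edgeLabel

theorem two_le_labelOf (hI : D.Irreducible O) (hs : s ∈ O) :
    2 ≤ labelOf Γ (edgeOf (D.kind s)) := by
  cases he : edgeOf (D.kind s) with
  | none => exact le_rfl
  | some e =>
    have hedge := ((D.label_adm s).2 (hI.label_ne_one s hs) e he).1
    induction e using Sym2.ind with
    | _ a b => exact Γ.two_le_label hedge

section Corners

variable [Finite S]

theorem fixed_of_vertexOf_corner_eq (hP : D.IsPlanar O) (hI : D.Irreducible O) (hs : s ∈ O)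
    (h : vertexOf (D.kind (D.corner s)) = vertexOf (D.kind s)) :
    D.f false (D.corner s) = D.corner s := by
  by_contra hne
  refine vertexOf_f_false_ne hI (hP.invariant_corner s hs) hne ?_
  rw [f_false_corner, vertexOf_f, h]

theorem fixed_of_edgeOf_corner_eq (hP : D.IsPlanar O) (hD : D.Separated O) (hI : D.Irreducible O)
    (hs : s ∈ O) (h : edgeOf (D.kind (D.corner s)) = edgeOf (D.kind s)) : D.f true s = s := by
  by_contra hne
  refine hI.kind_ne true s hs hne (edgeOf_ne_none hP hD hI hs) ?_
  exact (edgeOf_corner D s).symm.trans h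

theorem edgeOf_corner_eq_mk (hP : D.IsPlanar O) (hD : D.Separated O) (hI : D.Irreducible O)
    (hs : s ∈ O) (h : vertexOf (D.kind (D.corner s)) ≠ vertexOf (D.kind s)) :
    edgeOf (D.kind (D.corner s)) = some s(vertexOf (D.kind s), vertexOf (D.kind (D.corner s))) ∧
      Γ.graph.Adj (vertexOf (D.kind s)) (vertexOf (D.kind (D.corner s))) := by
  have hs' := hP.invariant_corner s hs
  obtain ⟨e, he⟩ := Option.ne_none_iff_exists'.1 (edgeOf_ne_none hP hD hI hs')
  have hright := (D.label_adm _).2 (hI.label_ne_one _ hs') e he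
  have hleft := ((D.label_adm _).2 (hI.label_ne_one _ (hP.right s hs)) e
    ((edgeOf_corner D s).symm.trans he)).2
  rw [vertexOf_f] at hleft
  have hmk := (Sym2.mem_and_mem_iff h.symm).1 ⟨hleft, hright.2⟩
  rw [hmk] at he hright
  exact ⟨he, hright.1⟩

theorem corner_ne (hz : Anisotropic Γ e₁ z) (hP : D.IsPlanar O) (hD : D.Separated O)
    (hI : D.Irreducible O) (hs : s ∈ O) : D.corner s ≠ s := by
  intro h
  have hfalse := fixed_of_vertexOf_corner_eq hP hI hs (by rw [h])
  have htrue := fixed_of_edgeOf_corner_eq hP hD hI hs (by rw [h])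
  exact Bool.false_ne_true
    (fixed_unique hz hD hI (hP.invariant_corner s hs) hs hfalse htrue).1

theorem corner_corner_ne (hz : Anisotropic Γ e₁ z) (hP : D.IsPlanar O) (hD : D.Separated O)
    (hI : D.Irreducible O) (hs : s ∈ O) : D.corner (D.corner s) ≠ s := by
  intro h
  have hs' := hP.invariant_corner s hs
  refine corner_ne hz hP hD hI hs ?_
  by_cases hv : vertexOf (D.kind (D.corner s)) = vertexOf (D.kind s)
  · have hfix := fixed_of_vertexOf_corner_eq hP hI hs hv
    have hfix' := fixed_of_vertexOf_corner_eq hP hI hs' (by rw [h, hv])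
    rw [h] at hfix'
    exact (fixed_unique hz hD hI hs' hs hfix hfix').2
  · have hedge := (edgeOf_corner_eq_mk hP hD hI hs hv).1
    have hedge' := (edgeOf_corner_eq_mk hP hD hI hs' (by rw [h]; exact Ne.symm hv)).1
    rw [h, Sym2.eq_swap] at hedge'
    have hfix := fixed_of_edgeOf_corner_eq hP hD hI hs (by rw [hedge, hedge'])
    have hfix' := fixed_of_edgeOf_corner_eq hP hD hI hs' (by rw [h, hedge, hedge'])
    exact (fixed_unique hz hD hI hs' hs hfix' hfix).2

theorem vertexOf_corner_ne_of_triangle (hz : Anisotropic Γ e₁ z) (hP : D.IsPlanar O)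
    (hD : D.Separated O) (hI : D.Irreducible O) (hs : s ∈ O)
    (h : D.corner (D.corner (D.corner s)) = s) :
    vertexOf (D.kind (D.corner s)) ≠ vertexOf (D.kind s) := by
  intro hv
  have hs' := hP.invariant_corner s hs
  have hs'' := hP.invariant_corner _ hs'
  have hfix := fixed_of_vertexOf_corner_eq hP hI hs hv
  have hv' : vertexOf (D.kind (D.corner (D.corner s))) ≠ vertexOf (D.kind (D.corner s)) :=
    fun hv' => corner_ne hz hP hD hI hs' (fixed_unique hz hD hI hs'' hs'
      (fixed_of_vertexOf_corner_eq hP hI hs' hv') hfix).2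
  have hedge' := (edgeOf_corner_eq_mk hP hD hI hs' hv').1
  have hedge := (edgeOf_corner_eq_mk hP hD hI hs'' (by rw [h, ← hv]; exact hv'.symm)).1
  rw [h, ← hv, Sym2.eq_swap] at hedge
  have hfix'' := fixed_of_edgeOf_corner_eq hP hD hI hs'' (by rw [h, hedge, hedge'])
  exact Bool.false_ne_true (fixed_unique hz hD hI hs' hs'' hfix hfix'').1

theorem triangle_inv_label_le (h2d : Γ.TwoDimensional) (hz : Anisotropic Γ e₁ z)
    (hP : D.IsPlanar O) (hD : D.Separated O) (hI : D.Irreducible O) (hs : s ∈ O)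
    (h : D.corner (D.corner (D.corner s)) = s) :
    (labelOf Γ (edgeOf (D.kind s)) : ℚ)⁻¹ + (labelOf Γ (edgeOf (D.kind (D.corner s))) : ℚ)⁻¹ +
      (labelOf Γ (edgeOf (D.kind (D.corner (D.corner s)))) : ℚ)⁻¹ ≤ 1 := by
  have hs' := hP.invariant_corner s hs
  have hs'' := hP.invariant_corner _ hs'
  have hne {t : S} (ht : t ∈ O) (htri : D.corner (D.corner (D.corner t)) = t) :=
    edgeOf_corner_eq_mk hP hD hI ht (vertexOf_corner_ne_of_triangle hz hP hD hI ht htri)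
  obtain ⟨he₁, hadj₁⟩ := hne hs h
  obtain ⟨he₂, hadj₂⟩ := hne hs' (by rw [h])
  obtain ⟨he₃, hadj₃⟩ := hne hs'' (by rw [h])
  rw [h] at he₃ hadj₃
  have htriangle := h2d _ _ _ hadj₁ hadj₂ hadj₃.symm
  simp only [he₁, he₂, he₃, labelOf, Option.elim_some, edgeLabel_mk]
  rw [Γ.label_symm (vertexOf (D.kind (D.corner (D.corner s))))]
  simp only [one_div] at htriangle
  linarith

end Corners

variable [Finite S]

theorem two_mul_inv_ncard_le (hP : D.IsPlanar O) (hD : D.Separated O) (hI : D.Irreducible O)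
    (hs : s ∈ O) (hN : ¬ D.IsDefect false s) :
    2 * ((cycle (D.f false) s).ncard : ℚ)⁻¹ ≤ (labelOf Γ (edgeOf (D.kind s)) : ℚ)⁻¹ := by
  obtain ⟨e, he⟩ := Option.ne_none_iff_exists'.1 (edgeOf_ne_none hP hD hI hs)
  have hlabel := two_le_labelOf hI hs
  have hcard := two_mul_label_le hP hI hs hN he
  rw [he, labelOf, Option.elim_some] at hlabel ⊢
  have : (0 : ℚ) < Γ.edgeLabel e := by exact_mod_cast two_pos.trans_le hlabel
  have hcard' : (2 : ℚ) * Γ.edgeLabel e ≤ (cycle (D.f false) s).ncard := by exact_mod_cast hcard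
  calc 2 * ((cycle (D.f false) s).ncard : ℚ)⁻¹ ≤ 2 * (2 * (Γ.edgeLabel e : ℚ))⁻¹ := by gcongr
    _ = (Γ.edgeLabel e : ℚ)⁻¹ := by field_simp

theorem false_of_irreducible (h2d : Γ.TwoDimensional) (hz : Anisotropic Γ e₁ z)
    (hP : D.IsPlanar O) (hD : D.Separated O) (hI : D.Irreducible O) : False := by
  let w : Bool → S → ℚ := fun i s => if i then 1 else (labelOf Γ (edgeOf (D.kind s)) : ℚ)⁻¹
  have hlabel (s : S) (hs : s ∈ O) : (2 : ℚ) ≤ labelOf Γ (edgeOf (D.kind s)) := by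
    exact_mod_cast two_le_labelOf hI hs
  have hpos := sum_face_pos hP hD (w := w)
    (fun i s hs => by
      cases i
      exacts [inv_pos.2 (two_pos.trans_le (hlabel s hs)), one_pos])
    (fun i s hs hN => by
      cases i with
      | false => exact two_mul_inv_ncard_le hP hD hI hs hN
      | true =>
        have hcard : 2 ≤ (cycle (D.f true) s).ncard := le_ncard_cycle fun j h0 h2 => by
          interval_cases j
          exact fun h => hN (isDefect_of_fixed hI hs h)
        have : ((cycle (D.f true) s).ncard : ℚ)⁻¹ ≤ 2⁻¹ :=
          inv_anti₀ two_pos (by exact_mod_cast hcard)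
        simp only [w, if_true]
        linarith)
  refine hpos.not_ge (le_of_eq_of_le (Finset.sum_congr rfl fun s _ => ?_)
    (sum_corner_nonpos hP.invariant_corner (w := w false) (fun s hs => ?_)
      (fun s hs => corner_ne hz hP hD hI hs) (fun s hs => corner_corner_ne hz hP hD hI hs)
      (fun s hs => triangle_inv_label_le h2d hz hP hD hI hs)))
  · simp only [w, Bool.false_eq_true, if_false, if_true]
    ring
  · rw [one_div]
    exact inv_anti₀ two_pos (hlabel s hs)

end ArtinSystem

namespace Hypermap

open Equiv
open Equiv.Perm hiding Disjoint

variable {S S' : Type*}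

/-! ### Joining two hypermaps -/

section Transport

variable [Finite S] [Finite S'] {p : Perm S} {p' : Perm S'} {e : S → S'} {s : S}

theorem sameCycle_map_iff (h : ∀ x, p.SameCycle s x → p' (e x) = e (p x)) {y : S'} :
    p'.SameCycle (e s) y ↔ ∃ x, p.SameCycle s x ∧ e x = y := by
  constructor
  · refine fun hy => mem_of_sameCycle (A := {y | ∃ x, p.SameCycle s x ∧ e x = y}) ?_ hy
      ⟨s, .refl _ _, rfl⟩
    rintro _ ⟨x, hx, rfl⟩
    exact ⟨p x, sameCycle_apply_right.2 hx, (h x hx).symm⟩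
  · rintro ⟨x, hx, rfl⟩
    refine (mem_of_sameCycle (A := {x | p.SameCycle s x ∧ p'.SameCycle (e s) (e x)}) ?_ hx
      ⟨.refl _ _, .refl _ _⟩).2
    rintro x ⟨hx, hex⟩
    exact ⟨sameCycle_apply_right.2 hx, by rwa [← h x hx, sameCycle_apply_right]⟩

theorem trivialHolonomy_map_iff {L : Type*} [Group L] {b : S' → L} (he : e.Injective)
    (h : ∀ x, p.SameCycle s x → p' (e x) = e (p x)) :
    TrivialHolonomy p' b (e s) ↔ TrivialHolonomy p (b ∘ e) s := by
  constructor
  · rintro ⟨Q, hQ⟩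
    refine ⟨Q ∘ e, fun x hx => ?_⟩
    rw [Function.comp_apply, ← h x hx]
    exact hQ _ ((sameCycle_map_iff h).2 ⟨x, hx, rfl⟩)
  · rintro ⟨Q, hQ⟩
    refine ⟨Function.extend e Q 1, fun y hy => ?_⟩
    obtain ⟨x, hx, rfl⟩ := (sameCycle_map_iff h).1 hy
    rw [h x hx, he.extend_apply, he.extend_apply, hQ x hx, Function.comp_apply]

theorem cycleCount_map {e : S ↪ S'} (h : ∀ x, p' (e x) = e (p x)) (O : Finset S) :
    cycleCount (O.map e) p' = cycleCount O p := by
  rw [cycleCount, cycleCount, ← Set.ncard_image_of_injective _ e.injective.image_injective,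
    Finset.coe_map, Set.image_image, Set.image_image]
  congr 1
  refine Set.image_congr fun s _ => Set.ext fun y => ?_
  exact sameCycle_map_iff (e := e) fun x _ => h x

theorem sameCycle_sumCongr_inl {t : S} (h : p.SameCycle s t) :
    (Perm.sumCongr p p').SameCycle (Sum.inl s) (Sum.inl t) :=
  (sameCycle_map_iff (p := p) (e := Sum.inl) fun _ _ => rfl).2 ⟨t, h, rfl⟩

theorem sameCycle_sumCongr_inr {s t : S'} (h : p'.SameCycle s t) :
    (Perm.sumCongr p p').SameCycle (Sum.inr s) (Sum.inr t) :=
  (sameCycle_map_iff (p := p') (e := Sum.inr) fun _ _ => rfl).2 ⟨t, h, rfl⟩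

theorem not_sameCycle_sumCongr (y : S) (y' : S') :
    ¬ (Perm.sumCongr p p').SameCycle (Sum.inl y) (Sum.inr y') := by
  intro h
  obtain ⟨x, -, hx⟩ := (sameCycle_map_iff (p := p) (e := Sum.inl) fun _ _ => rfl).1 h
  exact Sum.inl_ne_inr hx

theorem cycleCount_disjSum (O : Finset S) (O' : Finset S') :
    cycleCount (O.disjSum O') (Perm.sumCongr p p') = cycleCount O p + cycleCount O' p' := by
  rw [← cycleCount_map (p' := Perm.sumCongr p p') (e := .inl) (fun _ => rfl) O,
    ← cycleCount_map (p' := Perm.sumCongr p p') (e := .inr) (fun _ => rfl) O',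
    ← Finset.map_inl_disjUnion_map_inr]
  simp only [cycleCount, Finset.coe_disjUnion, Set.image_union]
  refine Set.ncard_union_eq ?_
  rw [Set.disjoint_left]
  rintro _ ⟨s, hs, rfl⟩ ⟨t, ht, hst⟩
  obtain ⟨y, -, rfl⟩ := Finset.mem_map.1 hs
  obtain ⟨y', -, rfl⟩ := Finset.mem_map.1 ht
  exact not_sameCycle_sumCongr y y' (cycle_eq_iff.1 hst.symm)

end Transport

section DisjSum

variable {f g : Perm S} {f' g' : Perm S'} {O : Finset S} {O' : Finset S'}

theorem Invariant.disjSum (h : Invariant O f) (h' : Invariant O' f') :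
    Invariant (O.disjSum O') (Perm.sumCongr f f') := by
  rintro (y | y) hy
  · exact Finset.inl_mem_disjSum.2 (h y (Finset.inl_mem_disjSum.1 hy))
  · exact Finset.inr_mem_disjSum.2 (h' y (Finset.inr_mem_disjSum.1 hy))

theorem IsOrbit.toLeft_eq (h : IsOrbit O f g) {A : Finset (S ⊕ S')} (hsub : A.toLeft ⊆ O)
    (hf : Invariant A (Perm.sumCongr f f')) (hg : Invariant A (Perm.sumCongr g g')) {y : S}
    (hy : Sum.inl y ∈ A) : A.toLeft = O :=
  h.eq_of_subset _ hsub ⟨y, Finset.mem_toLeft.2 hy⟩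
    (fun _ hu => Finset.mem_toLeft.2 (hf _ (Finset.mem_toLeft.1 hu)))
    fun _ hu => Finset.mem_toLeft.2 (hg _ (Finset.mem_toLeft.1 hu))

theorem IsOrbit.toRight_eq (h : IsOrbit O' f' g') {A : Finset (S ⊕ S')} (hsub : A.toRight ⊆ O')
    (hf : Invariant A (Perm.sumCongr f f')) (hg : Invariant A (Perm.sumCongr g g')) {y : S'}
    (hy : Sum.inr y ∈ A) : A.toRight = O' :=
  h.eq_of_subset _ hsub ⟨y, Finset.mem_toRight.2 hy⟩
    (fun _ hu => Finset.mem_toRight.2 (hf _ (Finset.mem_toRight.1 hu)))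
    fun _ hu => Finset.mem_toRight.2 (hg _ (Finset.mem_toRight.1 hu))

end DisjSum

section Join

variable [DecidableEq S] [DecidableEq S']

/-- The permutation of `S ⊕ S'` obtained from `p` and `p'` by merging the cycle of `x` with that
of `x'`: the preimages of `x` and `x'` exchange their images. -/
def joinPerm (p : Perm S) (p' : Perm S') (x : S) (x' : S') : Perm (S ⊕ S') :=
  Perm.sumCongr p p' * swap (Sum.inl (p⁻¹ x)) (Sum.inr (p'⁻¹ x'))

variable {p : Perm S} {p' : Perm S'} {x : S} {x' : S'}

theorem joinPerm_inl {y : S} (h : p y ≠ x) : joinPerm p p' x x' (Sum.inl y) = Sum.inl (p y) := by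
  rw [joinPerm, Perm.mul_apply, swap_apply_of_ne_of_ne _ Sum.inl_ne_inr]
  · rfl
  · rwa [Ne, Sum.inl.injEq, Perm.eq_inv_iff_eq]

theorem joinPerm_inr {y : S'} (h : p' y ≠ x') :
    joinPerm p p' x x' (Sum.inr y) = Sum.inr (p' y) := by
  rw [joinPerm, Perm.mul_apply, swap_apply_of_ne_of_ne Sum.inr_ne_inl]
  · rfl
  · rwa [Ne, Sum.inr.injEq, Perm.eq_inv_iff_eq]

theorem joinPerm_inl_of_eq {y : S} (h : p y = x) : joinPerm p p' x x' (Sum.inl y) = Sum.inr x' := by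
  rw [joinPerm, Perm.mul_apply, Perm.eq_inv_iff_eq.2 h, swap_apply_left]
  exact congrArg Sum.inr (p'.apply_symm_apply x')

theorem joinPerm_inr_of_eq {y : S'} (h : p' y = x') :
    joinPerm p p' x x' (Sum.inr y) = Sum.inl x := by
  rw [joinPerm, Perm.mul_apply, Perm.eq_inv_iff_eq.2 h, swap_apply_right]
  exact congrArg Sum.inl (p.apply_symm_apply x)

theorem elim_joinPerm {A : Type*} {F : S → A} {F' : S' → A} (h : F x = F' x') (y : S ⊕ S') :
    Sum.elim F F' (joinPerm p p' x x' y) = Sum.elim (F ∘ p) (F' ∘ p') y := by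
  obtain y | y := y
  · by_cases hy : p y = x
    · rw [joinPerm_inl_of_eq hy, Sum.elim_inr, Sum.elim_inl, Function.comp_apply, hy, h]
    · rw [joinPerm_inl hy, Sum.elim_inl, Sum.elim_inl, Function.comp_apply]
  · by_cases hy : p' y = x'
    · rw [joinPerm_inr_of_eq hy, Sum.elim_inl, Sum.elim_inr, Function.comp_apply, hy, h]
    · rw [joinPerm_inr hy, Sum.elim_inr, Sum.elim_inr, Function.comp_apply]

variable [Finite S]

theorem sameCycle_joinPerm_left {y : S} (h : p.SameCycle x y) :
    (joinPerm p p' x x').SameCycle (Sum.inl x) (Sum.inl y) := by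
  refine mem_of_sameCycle
    (A := {y | (joinPerm p p' x x').SameCycle (Sum.inl x) (Sum.inl y)}) (fun u hu => ?_) h
    (.refl _ _)
  by_cases hux : p u = x
  · rw [hux]
    exact .refl _ _
  · have := sameCycle_apply_right.2 hu
    rwa [joinPerm_inl hux] at this

variable [Finite S']

theorem sameCycle_joinPerm_right {y : S'} (h : p'.SameCycle x' y) :
    (joinPerm p p' x x').SameCycle (Sum.inl x) (Sum.inr y) := by
  have hx' : (joinPerm p p' x x').SameCycle (Sum.inl x) (Sum.inr x') := by
    have := sameCycle_apply_right.2 (sameCycle_joinPerm_left (p' := p') (x' := x')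
      (sameCycle_inv_apply p x))
    rwa [joinPerm_inl_of_eq (show p (p⁻¹ x) = x from p.apply_symm_apply x)] at this
  refine mem_of_sameCycle
    (A := {y | (joinPerm p p' x x').SameCycle (Sum.inl x) (Sum.inr y)}) (fun u hu => ?_) h hx'
  by_cases hux : p' u = x'
  · rwa [hux]
  · have := sameCycle_apply_right.2 hu
    rwa [joinPerm_inr hux] at this

theorem sameCycle_of_joinPerm {y : S ⊕ S'}
    (h : (joinPerm p p' x x').SameCycle (Sum.inl x) y) :
    Sum.elim (p.SameCycle x) (p'.SameCycle x') y := by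
  refine mem_of_sameCycle (A := {y | Sum.elim (p.SameCycle x) (p'.SameCycle x') y}) ?_ h
    (SameCycle.refl p x)
  rintro (y | y) hy
  · by_cases hyx : p y = x
    · rw [joinPerm_inl_of_eq hyx]
      exact SameCycle.refl p' x'
    · rw [joinPerm_inl hyx]
      exact sameCycle_apply_right.2 hy
  · by_cases hyx : p' y = x'
    · rw [joinPerm_inr_of_eq hyx]
      exact SameCycle.refl p x
    · rw [joinPerm_inr hyx]
      exact sameCycle_apply_right.2 hy

variable {O : Finset S} {O' : Finset S'} {f g : Perm S} {f' g' : Perm S'}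

theorem IsOrbit.join (h : IsOrbit O f g) (h' : IsOrbit O' f' g') (hx : x ∈ O) (hx' : x' ∈ O') :
    IsOrbit (O.disjSum O') (joinPerm f f' x x') (Perm.sumCongr g g') where
  nonempty := ⟨Sum.inl x, Finset.inl_mem_disjSum.2 hx⟩
  left := (h.left.disjSum h'.left).mul_swap (iff_of_true
    (Finset.inl_mem_disjSum.2 (h.left.inv x hx)) (Finset.inr_mem_disjSum.2 (h'.left.inv x' hx')))
  right := h.right.disjSum h'.right
  eq_of_subset A hA := by
    rintro hne hf hg
    obtain ⟨hl, hr⟩ := Finset.subset_disjSum.1 hA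
    have hjoin : Sum.inl (f⁻¹ x) ∈ A ↔ Sum.inr (f'⁻¹ x') ∈ A := by
      have hcycle := sameCycle_mul_swap
        (not_sameCycle_sumCongr (p := f) (p' := f') (f⁻¹ x) (f'⁻¹ x'))
      exact ⟨hf.mem_of_sameCycle hcycle, hf.mem_of_sameCycle hcycle.symm⟩
    have hf : Invariant A (Perm.sumCongr f f') := hf.of_mul_swap hjoin
    have hxO : f⁻¹ x ∈ O := h.left.inv x hx
    have hxO' : f'⁻¹ x' ∈ O' := h'.left.inv x' hx'
    rw [Finset.eq_disjSum_iff]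
    obtain ⟨y | y, hy⟩ := hne
    · have hleft := h.toLeft_eq hl hf hg hy
      rw [← hleft, Finset.mem_toLeft, hjoin] at hxO
      exact ⟨hleft, h'.toRight_eq hr hf hg hxO⟩
    · have hright := h'.toRight_eq hr hf hg hy
      rw [← hright, Finset.mem_toRight, ← hjoin] at hxO'
      exact ⟨h.toLeft_eq hl hf hg hxO', hright⟩

theorem eulerChar_join (h : Invariant O f) (h' : Invariant O' f') (hx : x ∈ O) (hx' : x' ∈ O') :
    eulerChar (O.disjSum O') (joinPerm f f' x x') (Perm.sumCongr g g') =
      eulerChar O f g + eulerChar O' f' g' - 2 := by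
  classical
  have hdisj : eulerChar (O.disjSum O') (Perm.sumCongr g g') (Perm.sumCongr f f') =
      eulerChar O g f + eulerChar O' g' f' := by
    rw [eulerChar, eulerChar, eulerChar, Perm.sumCongr_inv, Perm.sumCongr_mul, cycleCount_disjSum,
      cycleCount_disjSum, cycleCount_disjSum, Finset.card_disjSum]
    push_cast
    ring
  rw [← eulerChar_comm, joinPerm, eulerChar_mul_swap _ _
    (Finset.inl_mem_disjSum.2 (h.inv x hx)) (Finset.inr_mem_disjSum.2 (h'.inv x' hx'))
    Sum.inl_ne_inr, Perm.sumCongr_inv, Perm.sumCongr_mul, if_neg (not_sameCycle_sumCongr _ _),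
    if_neg (not_sameCycle_sumCongr _ _), hdisj, ← eulerChar_comm O,
    ← eulerChar_comm O']
  ring

theorem Planar.join (h : Planar O f g) (h' : Planar O' f' g') (hx : x ∈ O) (hx' : x' ∈ O') :
    Planar (O.disjSum O') (joinPerm f f' x x') (Perm.sumCongr g g') where
  toIsOrbit := h.toIsOrbit.join h'.toIsOrbit hx hx'
  eulerChar_eq := by
    rw [eulerChar_join h.left h'.left hx hx', h.eulerChar_eq, h'.eulerChar_eq]
    rfl

end Join

section Reads

variable {L : Type*} [Group L] {p : Perm S} {p' : Perm S'} {b : S → L} {b' : S' → L} {s : S}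
  {s' : S'} {g g' : L}

/-- The product of the labels `b` along the cycle of `p`, starting at `s`, is `g`. As for
`TrivialHolonomy` this is expressed by a potential `Q`, with a jump when the cycle returns to
`s`. -/
def Reads (p : Perm S) (b : S → L) (s : S) (g : L) : Prop :=
  ∃ Q : S → L, Q s = 1 ∧ (∀ x, p.SameCycle s x → p x ≠ s → Q (p x) = Q x * b x) ∧
    ∀ x, p x = s → Q x * b x = g

theorem Reads.map {L' : Type*} [Group L'] (φ : L →* L') (h : Reads p b s g) :
    Reads p (fun x => φ (b x)) s (φ g) := by
  obtain ⟨Q, hs, hstep, hlast⟩ := h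
  refine ⟨fun x => φ (Q x), (congrArg φ hs).trans φ.map_one, fun x hx hne => ?_, fun x hx => ?_⟩ <;>
    beta_reduce
  · rw [hstep x hx hne, map_mul]
  · rw [← hlast x hx, map_mul]

theorem Reads.of_apply_eq (h : Reads p b s g) {t : S} (ht : p t = s) :
    Reads p b t (b t * g * (b t)⁻¹) := by
  classical
  obtain ⟨Q, hs, hstep, hlast⟩ := h
  have hne {x : S} (hx : x ≠ t) : p x ≠ s := fun h => hx (p.injective (h.trans ht.symm))
  have hcycle {x : S} (hx : p.SameCycle t x) : p.SameCycle s x := by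
    rwa [← ht, sameCycle_apply_left]
  refine ⟨fun x => if x = t then 1 else b t * Q x, if_pos rfl, fun x hx hpx => ?_,
    fun x hx => ?_⟩ <;> beta_reduce
  · rcases eq_or_ne x t with rfl | hxt
    · rw [if_neg hpx, if_pos rfl, ht, hs, mul_one, one_mul]
    · rw [if_neg hpx, if_neg hxt, hstep x (hcycle hx) (hne hxt), mul_assoc]
  · rcases eq_or_ne x t with rfl | hxt
    · rw [if_pos rfl, ← hlast x ht, show Q x = 1 by rwa [← hx, ht]]
      group
    · have hxs : p.SameCycle s x := hcycle ((sameCycle_apply p x).trans (hx ▸ .refl _ _)).symm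
      rw [if_neg hxt, ← hlast t ht, ← hx, hstep x hxs (hne hxt)]
      group

theorem Reads.join [DecidableEq S] [DecidableEq S'] [Finite S] [Finite S'] (h : Reads p b s g)
    (h' : Reads p' b' s' g') :
    Reads (joinPerm p p' s s') (Sum.elim b b') (Sum.inl s) (g * g') := by
  obtain ⟨Q, hs, hstep, hlast⟩ := h
  obtain ⟨Q', hs', hstep', hlast'⟩ := h'
  refine ⟨Sum.elim Q fun y => g * Q' y, hs, ?_, ?_⟩
  · rintro (y | y) hy hne
    · by_cases hys : p y = s
      · rw [joinPerm_inl_of_eq hys, Sum.elim_inr, Sum.elim_inl, Sum.elim_inl, hs', mul_one,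
          hlast y hys]
      · rw [joinPerm_inl hys]
        exact hstep y (sameCycle_of_joinPerm hy) hys
    · have hys : p' y ≠ s' := fun hys => hne (joinPerm_inr_of_eq hys)
      rw [joinPerm_inr hys, Sum.elim_inr, Sum.elim_inr, Sum.elim_inr,
        hstep' y (sameCycle_of_joinPerm hy) hys, mul_assoc]
  · rintro (y | y) hy
    · by_cases hys : p y = s
      · exact absurd ((joinPerm_inl_of_eq hys).symm.trans hy) Sum.inr_ne_inl
      · exact absurd (Sum.inl_injective ((joinPerm_inl hys).symm.trans hy)) hys
    · by_cases hys : p' y = s'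
      · rw [Sum.elim_inr, Sum.elim_inr, mul_assoc, hlast' y hys]
      · exact absurd ((joinPerm_inr hys).symm.trans hy) Sum.inr_ne_inl

theorem Reads.trivialHolonomy_iff [Finite S] (h : Reads p b s g) :
    TrivialHolonomy p b s ↔ g = 1 := by
  obtain ⟨Q, hs, hstep, hlast⟩ := h
  have hpre : p (p⁻¹ s) = s := p.apply_symm_apply s
  constructor
  · intro ht
    have hjump := (ht.sameCycle (sameCycle_inv_apply p s)).apply_eq (Q := Q) fun u hu hne =>
      hstep u ((sameCycle_inv_apply p s).trans hu) fun h => hne (p.injective (h.trans hpre.symm))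
    rw [← hlast _ hpre, ← hjump, hpre, hs]
  · rintro rfl
    refine ⟨Q, fun x hx => ?_⟩
    by_cases hxs : p x = s
    · rw [hlast x hxs, hxs, hs]
    · exact hstep x hx hxs

end Reads

end Hypermap

namespace ArtinSystem

open Hypermap Hypermap.Decoration LabeledGraph
open Equiv.Perm (SameCycle)

universe u

variable {V : Type u} {Γ : LabeledGraph V} {e₁ : Sym2 V} {z : ArtinGroup Γ} {S S' : Type*}

/-! ### Fillings of words by planar diagrams -/

/-- The vertex of colour `i` at `s` is not the exterior. -/
def IsInner (D : Decoration (system Γ e₁ z) S) (i : Bool) (s : S) : Prop :=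
  i = false → edgeOf (D.kind s) ≠ none

theorem IsInner.sameCycle [Finite S] {D : Decoration (system Γ e₁ z) S} {i : Bool} {s t : S}
    (h : IsInner D i s) (hst : (D.f i).SameCycle s t) : IsInner D i t := by
  rintro rfl
  have hkind : edgeOf (D.kind t) = edgeOf (D.kind s) := D.kind_sameCycle hst
  rw [hkind]
  exact h rfl

/-- The vertex of colour `i` at `s` has nontrivial holonomy and is not the exterior. -/
def IsInnerDefect (D : Decoration (system Γ e₁ z) S) (i : Bool) (s : S) : Prop :=
  IsInner D i s ∧ D.IsDefect i s

/-- A planar decoration with one exterior vertex, which reads `w` from the side `s₀` at position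
`x`, and whose inner defects have pairwise different classes, `T` being the set of these classes. -/
structure IsFilling (D : Decoration (system Γ e₁ z) S) [Fintype S] (s₀ : S) (w : FreeGroup V)
    (x : Pos Γ z) (T : Set Bool) : Prop where
  planar : D.IsPlanar Finset.univ
  base : edgeOf (D.kind s₀) = none
  outer : ∀ s, edgeOf (D.kind s) = none → (D.f false).SameCycle s₀ s
  pos : D.pos s₀ = x
  reads : Reads (D.f false) D.label s₀ w
  unique : ∀ i j s t, IsInnerDefect D i s → IsInnerDefect D j t → D.cls i s = D.cls j t →
    i = j ∧ (D.f i).SameCycle s t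
  mem_iff : ∀ c, c ∈ T ↔ ∃ i s, IsInnerDefect D i s ∧ D.cls i s = c

section

variable [Fintype S] {D : Decoration (system Γ e₁ z) S} {s₀ : S} {x : Pos Γ z} {T : Set Bool}

theorem IsFilling.separated (h : IsFilling D s₀ 1 x T) (hT : T.Nonempty) :
    D.Separated Finset.univ := by
  have hinner : ∀ i s, D.IsDefect i s → IsInnerDefect D i s := by
    refine fun i s hs => ⟨?_, hs⟩
    rintro rfl hk
    exact hs ((trivialHolonomy_none_iff (Γ := Γ) hk).2
      ((h.reads.trivialHolonomy_iff.2 rfl).sameCycle (h.outer s hk)))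
  refine ⟨fun i j s _ t _ hs ht => h.unique i j s t (hinner i s hs) (hinner j t ht), ?_,
    fun i s _ hs => ?_⟩
  · obtain ⟨c, hc⟩ := hT
    obtain ⟨i, s, hs, -⟩ := (h.mem_iff c).1 hc
    exact ⟨i, s, Finset.mem_univ _, hs.2⟩
  · cases i with
    | true => exact trivial
    | false => exact (hinner false s hs).1 rfl

theorem IsFilling.rebase {w : FreeGroup V} (h : IsFilling D s₀ w x T) {t : S}
    (ht : D.f false t = s₀) :
    IsFilling D t (D.label t * w * (D.label t)⁻¹) (D.label t • x) T where
  planar := h.planar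
  base := by rw [← edgeOf_f, ht, h.base]
  outer s hs := by
    rw [← Equiv.Perm.sameCycle_apply_left, ht]
    exact h.outer s hs
  pos := by rw [← h.pos, ← ht, D.pos_f, smul_inv_smul]
  reads := h.reads.of_apply_eq ht
  unique := h.unique
  mem_iff := h.mem_iff

end

section Join

variable [DecidableEq S] [DecidableEq S'] {D : Decoration (system Γ e₁ z) S}
  {D' : Decoration (system Γ e₁ z) S'} {x : S} {x' : S'}

variable (D D') in
/-- Two decorations joined along their exterior vertices. -/
def joinDecoration (hx : edgeOf (D.kind x) = none) (hx' : edgeOf (D'.kind x') = none)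
    (hpos : D.pos x = D'.pos x') : Decoration (system Γ e₁ z) (S ⊕ S') where
  f
    | false => joinPerm (D.f false) (D'.f false) x x'
    | true => Equiv.Perm.sumCongr (D.f true) (D'.f true)
  kind := Sum.elim D.kind D'.kind
  label := Sum.elim D.label D'.label
  pos := Sum.elim D.pos D'.pos
  kind_f := by
    have hkind (k : S → ∀ i, Kind V i) (k' : S' → ∀ i, Kind V i) (i : Bool) (y : S ⊕ S') :
        Sum.elim k k' y i = Sum.elim (fun y => k y i) (fun y => k' y i) y := by
      cases y <;> rfl
    rintro (_ | _) y
    · refine (hkind _ _ _ _).trans ((elim_joinPerm (F := fun y => D.kind y false)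
        (F' := fun y => D'.kind y false) (hx.trans hx'.symm) y).trans ?_)
      obtain y | y := y
      exacts [D.kind_f false y, D'.kind_f false y]
    · obtain y | y := y
      exacts [D.kind_f true y, D'.kind_f true y]
  label_adm := Sum.rec D.label_adm D'.label_adm
  pos_f := by
    rintro (_ | _) y
    · refine (elim_joinPerm hpos y).trans ?_
      obtain y | y := y
      exacts [D.pos_f false y, D'.pos_f false y]
    · obtain y | y := y
      exacts [D.pos_f true y, D'.pos_f true y]

section

variable {hx : edgeOf (D.kind x) = none} {hx' : edgeOf (D'.kind x') = none}
  {hpos : D.pos x = D'.pos x'} {i : Bool}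

theorem joinDecoration_f_inl {y : S} (h : IsInner D i y) :
    (joinDecoration D D' hx hx' hpos).f i (Sum.inl y) = Sum.inl (D.f i y) := by
  cases i with
  | true => rfl
  | false => exact joinPerm_inl fun hy => h rfl (by rw [← edgeOf_f, hy, hx])

theorem joinDecoration_f_inr {y : S'} (h : IsInner D' i y) :
    (joinDecoration D D' hx hx' hpos).f i (Sum.inr y) = Sum.inr (D'.f i y) := by
  cases i with
  | true => rfl
  | false => exact joinPerm_inr fun hy => h rfl (by rw [← edgeOf_f, hy, hx'])

variable [Finite S] [Finite S']

theorem isInnerDefect_inl {y : S} :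
    IsInnerDefect (joinDecoration D D' hx hx' hpos) i (Sum.inl y) ↔ IsInnerDefect D i y :=
  and_congr_right fun h => not_congr (trivialHolonomy_map_iff Sum.inl_injective
    fun _ hu => joinDecoration_f_inl (IsInner.sameCycle h hu))

theorem isInnerDefect_inr {y : S'} :
    IsInnerDefect (joinDecoration D D' hx hx' hpos) i (Sum.inr y) ↔ IsInnerDefect D' i y :=
  and_congr_right fun h => not_congr (trivialHolonomy_map_iff Sum.inr_injective
    fun _ hu => joinDecoration_f_inr (IsInner.sameCycle h hu))

theorem sameCycle_inl {y t : S} (h : IsInner D i y) (ht : (D.f i).SameCycle y t) :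
    ((joinDecoration D D' hx hx' hpos).f i).SameCycle (Sum.inl y) (Sum.inl t) :=
  (sameCycle_map_iff (e := Sum.inl) fun _ hu => joinDecoration_f_inl (h.sameCycle hu)).2
    ⟨t, ht, rfl⟩

theorem sameCycle_inr {y t : S'} (h : IsInner D' i y) (ht : (D'.f i).SameCycle y t) :
    ((joinDecoration D D' hx hx' hpos).f i).SameCycle (Sum.inr y) (Sum.inr t) :=
  (sameCycle_map_iff (e := Sum.inr) fun _ hu => joinDecoration_f_inr (h.sameCycle hu)).2
    ⟨t, ht, rfl⟩

end

variable [Fintype S] [Fintype S'] {w w' : FreeGroup V} {p : Pos Γ z} {T T' : Set Bool}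

theorem IsFilling.join (h : IsFilling D x w p T) (h' : IsFilling D' x' w' p T')
    (hT : Disjoint T T') :
    IsFilling (joinDecoration D D' h.base h'.base (h.pos.trans h'.pos.symm)) (Sum.inl x) (w * w') p
      (T ∪ T') where
  planar := by
    rw [← Finset.univ_disjSum_univ]
    exact h.planar.join h'.planar (Finset.mem_univ x) (Finset.mem_univ x')
  base := h.base
  outer := by
    rintro (y | y) hy
    exacts [sameCycle_joinPerm_left (h.outer y hy), sameCycle_joinPerm_right (h'.outer y hy)]
  pos := h.pos
  reads := h.reads.join h'.reads
  unique := by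
    have hne {i j s t} (hs : IsInnerDefect D i s) (ht : IsInnerDefect D' j t) :
        D.cls i s ≠ D'.cls j t := fun hst =>
      Set.disjoint_left.1 hT ((h.mem_iff _).2 ⟨i, s, hs, rfl⟩)
        ((h'.mem_iff _).2 ⟨j, t, ht, hst.symm⟩)
    rintro i j (s | s) (t | t) hs ht hst <;>
      simp only [isInnerDefect_inl, isInnerDefect_inr] at hs ht
    · obtain ⟨rfl, hcycle⟩ := h.unique i j s t hs ht hst
      exact ⟨rfl, sameCycle_inl hs.1 hcycle⟩
    · exact (hne hs ht hst).elim
    · exact (hne ht hs hst.symm).elim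
    · obtain ⟨rfl, hcycle⟩ := h'.unique i j s t hs ht hst
      exact ⟨rfl, sameCycle_inr hs.1 hcycle⟩
  mem_iff c := by
    simp only [Set.mem_union, h.mem_iff, h'.mem_iff, Sum.exists, isInnerDefect_inl,
      isInnerDefect_inr, exists_or]
    rfl

end Join

end ArtinSystem

namespace Hypermap

open Equiv
open Equiv.Perm hiding Disjoint

variable {S S' : Type*}

section Reads

variable {L : Type*} [Group L] {p : Perm S} {b : S → L} {s : S} {g : L}

theorem Reads.embed {p' : Perm S'} {b' : S' → L} {e : S ↪ S'} (h : Reads p (b' ∘ e) s g)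
    (he : ∀ x, p' (e x) = e (p x)) [Finite S] [Finite S'] : Reads p' b' (e s) g := by
  obtain ⟨Q, hs, hstep, hlast⟩ := h
  refine ⟨Function.extend e Q 1, by rw [e.injective.extend_apply, hs], fun y hy hne => ?_,
    fun y hy => ?_⟩
  · obtain ⟨x, hx, rfl⟩ := (sameCycle_map_iff fun x _ => he x).1 hy
    rw [he, e.injective.extend_apply, e.injective.extend_apply,
      hstep x hx fun h => hne (by rw [he, h]), Function.comp_apply]
  · have hpre : p (p⁻¹ s) = s := p.apply_symm_apply s
    obtain rfl : e (p⁻¹ s) = y := p'.injective (by rw [he, hpre, hy])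
    rw [e.injective.extend_apply, ← hlast _ hpre, Function.comp_apply]

theorem Reads.inv (h : Reads p b s g) : Reads p⁻¹ (fun x => (b x)⁻¹) (p⁻¹ s) g⁻¹ := by
  obtain ⟨Q, hs, hstep, hlast⟩ := h
  have hpre (x : S) : p (p⁻¹ x) = x := p.apply_symm_apply x
  refine ⟨fun x => g⁻¹ * (Q x * b x), ?_, fun x hx hne => ?_, fun x hx => ?_⟩ <;> beta_reduce
  · rw [hlast _ (hpre s), inv_mul_cancel]
  · have hxs : p.SameCycle s (p⁻¹ x) :=
      ((sameCycle_inv_apply p s).trans (sameCycle_inv.1 hx)).trans (sameCycle_inv_apply p x)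
    have hxne : p (p⁻¹ x) ≠ s := fun h => hne (by rw [← h, hpre])
    rw [← hstep _ hxs hxne, hpre, mul_assoc, mul_inv_cancel_right]
  · obtain rfl : x = s := p⁻¹.injective hx
    rw [hs, one_mul, mul_assoc, mul_inv_cancel, mul_one]

theorem reads_one [Subsingleton S] (b : S → L) (s : S) : Reads 1 b s (b s) :=
  ⟨1, rfl, fun x _ hx => (hx (Subsingleton.elim x s)).elim,
    fun x _ => by rw [Subsingleton.elim x s, Pi.one_apply, one_mul]⟩

theorem reads_swap_bool (b : Bool → L) :
    Reads (swap false true) b false (b false * b true) := by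
  refine ⟨fun x => if x then b false else 1, rfl, ?_, ?_⟩ <;>
    rintro (_ | _) <;> simp

end Reads

theorem sameCycle_swap_bool (s t : Bool) : (swap false true).SameCycle s t := by
  cases s <;> cases t
  exacts [.refl _ _, sameCycle_apply (swap false true) false,
    sameCycle_apply (swap false true) true, .refl _ _]

section Transitive

variable [Fintype S] {p : Perm S}

theorem two_mul_cycleCount_of_involution (hinv : ∀ s, p (p s) = s) (hne : ∀ s, p s ≠ s) :
    2 * cycleCount Finset.univ p = Fintype.card S := by
  have hcycle (s : S) : cycle p s = {s, p s} := by
    refine Set.Subset.antisymm (fun t ht => mem_of_sameCycle ?_ ht (Set.mem_insert s _)) ?_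
    · rintro t (rfl | rfl)
      exacts [.inr rfl, .inl (hinv s)]
    · rintro t (rfl | rfl)
      exacts [.refl _ _, sameCycle_apply p s]
  have hsum := sum_inv_ncard_cycle (O := Finset.univ) (p := p) fun _ _ => Finset.mem_univ _
  simp only [hcycle, Set.ncard_pair (hne _).symm, Finset.sum_const, Finset.card_univ,
    nsmul_eq_mul, Nat.cast_ofNat] at hsum
  have : (2 : ℚ) * cycleCount Finset.univ p = Fintype.card S := by linarith
  exact_mod_cast this

variable [Nonempty S]

theorem planar_self (hp : ∀ s t, p.SameCycle s t) : Planar Finset.univ p p where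
  nonempty := Finset.univ_nonempty
  left _ _ := Finset.mem_univ _
  right _ _ := Finset.mem_univ _
  eq_of_subset A _ := by
    rintro ⟨s, hs⟩ hA -
    exact Finset.eq_univ_of_forall fun t => hA.mem_of_sameCycle (hp s t) hs
  eulerChar_eq := by
    rw [eulerChar, cycleCount_eq_one Finset.univ_nonempty fun s _ t _ => hp s t,
      cycleCount_of_fixed fun s _ => p.symm_apply_apply s]
    push_cast
    ring

/-- An annulus: the vertices of the first colour are two parallel copies of the cycle of `p` with
opposite orientations. -/
theorem planar_double (hp : ∀ s t, p.SameCycle s t) :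
    Planar Finset.univ (Perm.sumCongr p p⁻¹) (Equiv.sumComm S S) where
  nonempty := Finset.univ_nonempty
  left _ _ := Finset.mem_univ _
  right _ _ := Finset.mem_univ _
  eq_of_subset A _ := by
    rintro ⟨y, hy⟩ hA hflip
    have hinl : ∃ s, Sum.inl s ∈ A := by
      obtain s | s := y
      exacts [⟨s, hy⟩, ⟨s, hflip _ hy⟩]
    obtain ⟨s, hs⟩ := hinl
    have hall (t : S) : Sum.inl t ∈ A := hA.mem_of_sameCycle
      (sameCycle_sumCongr_inl (hp s t)) hs
    exact Finset.eq_univ_of_forall (Sum.rec hall fun t => hflip _ (hall t))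
  eulerChar_eq := by
    have hone : cycleCount Finset.univ p = 1 :=
      cycleCount_eq_one Finset.univ_nonempty fun s _ t _ => hp s t
    have hflip : 2 * cycleCount Finset.univ (Equiv.sumComm S S) = _ :=
      two_mul_cycleCount_of_involution (by rintro (s | s) <;> rfl)
        (by rintro (s | s) <;> simp)
    have hface : 2 * cycleCount Finset.univ ((Perm.sumCongr p p⁻¹)⁻¹ * Equiv.sumComm S S) = _ :=
      two_mul_cycleCount_of_involution (by rintro (s | s) <;> simp)
        (by rintro (s | s) <;> simp)
    rw [Fintype.card_sum] at hflip hface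
    have hsum : cycleCount Finset.univ (Perm.sumCongr p p⁻¹) = 2 := by
      rw [← Finset.univ_disjSum_univ, cycleCount_disjSum, cycleCount_inv, hone]
    rw [eulerChar, hsum, Finset.card_univ, Fintype.card_sum]
    omega

end Transitive

end Hypermap

namespace ArtinSystem

open Hypermap Hypermap.Decoration LabeledGraph
open Equiv.Perm (SameCycle)

universe u

variable {V : Type u} {Γ : LabeledGraph V} {e₁ : Sym2 V} {z : ArtinGroup Γ} {x : Pos Γ z}

section VertexFilling

variable {v : V} {m n : ℤ}

/-- Two sides around a single vertex of colour `true`, both seeing the exterior and carrying powers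
of the generator `v`. -/
noncomputable def vertexDecoration (v : V) (m n : ℤ)
    (hx : (FreeGroup.of v ^ m * FreeGroup.of v ^ n)⁻¹ • x = x) :
    Decoration (system Γ e₁ z) Bool where
  f _ := Equiv.swap false true
  kind _
    | false => (none : Option (Sym2 V))
    | true => v
  label s := FreeGroup.of v ^ (if s then n else m)
  pos s := if s then (FreeGroup.of v ^ m)⁻¹ • x else x
  kind_f _ _ := rfl
  label_adm _ := ⟨⟨_, rfl⟩, fun _ _ he => (Option.some_ne_none _ he.symm).elim⟩
  pos_f _ s := by
    rw [mul_inv_rev, mul_smul] at hx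
    cases s <;> simp [hx]

theorem of_zpow_mul_of_zpow_eq_one_iff :
    FreeGroup.of v ^ m * FreeGroup.of v ^ n = 1 ↔ m + n = 0 := by
  rw [← zpow_add]
  refine ⟨fun h => ?_, fun h => by rw [h, zpow_zero]⟩
  have hexp := congrArg (FreeGroup.lift fun _ => Multiplicative.ofAdd (1 : ℤ)) h
  rw [map_zpow, MonoidHom.map_one, FreeGroup.lift_apply_of, ← ofAdd_zsmul, ofAdd_eq_one] at hexp
  simpa using hexp

theorem isInnerDefect_vertexDecoration_iff
    {hx : (FreeGroup.of v ^ m * FreeGroup.of v ^ n)⁻¹ • x = x} {i s : Bool} :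
    IsInnerDefect (vertexDecoration (e₁ := e₁) v m n hx) i s ↔ i = true ∧ m + n ≠ 0 := by
  cases i with
  | false => exact iff_of_false (fun h => h.1 rfl rfl) fun h => Bool.false_ne_true h.1
  | true =>
    have hholonomy : TrivialHolonomy (Equiv.swap false true)
        (fun s => FreeGroup.of v ^ (if s then n else m)) s ↔ m + n = 0 :=
      (trivialHolonomy_iff_of_sameCycle (sameCycle_swap_bool s false)).trans
        ((reads_swap_bool _).trivialHolonomy_iff.trans of_zpow_mul_of_zpow_eq_one_iff)
    exact and_congr (iff_of_true (fun h => Bool.noConfusion h) rfl) (not_congr hholonomy)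

theorem isFilling_vertexDecoration (hx : (FreeGroup.of v ^ m * FreeGroup.of v ^ n)⁻¹ • x = x) :
    IsFilling (vertexDecoration (e₁ := e₁) v m n hx) false
      (FreeGroup.of v ^ m * FreeGroup.of v ^ n) x {c | m + n ≠ 0 ∧ c = false} where
  planar := planar_self sameCycle_swap_bool
  base := rfl
  outer _ _ := sameCycle_swap_bool _ _
  pos := rfl
  reads := reads_swap_bool _
  unique i j s t hs ht _ := by
    rw [isInnerDefect_vertexDecoration_iff] at hs ht
    exact ⟨hs.1.trans ht.1.symm, sameCycle_swap_bool _ _⟩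
  mem_iff c := by
    have hcls (s : Bool) : (vertexDecoration (e₁ := e₁) v m n hx).cls true s = false := by
      classical exact decide_eq_false id
    constructor
    · rintro ⟨hmn, rfl⟩
      exact ⟨true, false, isInnerDefect_vertexDecoration_iff.2 ⟨rfl, hmn⟩, hcls _⟩
    · rintro ⟨i, s, hs, rfl⟩
      obtain ⟨rfl, hmn⟩ := isInnerDefect_vertexDecoration_iff.1 hs
      exact ⟨hmn, hcls s⟩

end VertexFilling

end ArtinSystem

namespace Hypermap

open Equiv
open Equiv.Perm (SameCycle)

theorem Reads.exists_orbit {T L X : Type*} [Group L] [MulAction L X] {r : Perm T} {b : T → L}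
    {s : T} {g : L} {x : X} (h : Reads r b s g) (hr : ∀ t, r.SameCycle s t) (hx : g⁻¹ • x = x) :
    ∃ P : T → X, P s = x ∧ ∀ t, P (r t) = (b t)⁻¹ • P t := by
  obtain ⟨Q, hs, hstep, hlast⟩ := h
  have hstart : (Q s)⁻¹ • x = x := by rw [hs, inv_one, one_smul]
  refine ⟨fun t => (Q t)⁻¹ • x, hstart, fun t => ?_⟩
  beta_reduce
  rw [smul_smul, ← mul_inv_rev]
  by_cases ht : r t = s
  · rw [hlast t ht, hx, ht, hstart]
  · rw [hstep t (hr t) ht]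

end Hypermap

namespace ArtinSystem

open Equiv Hypermap Hypermap.Decoration LabeledGraph
open Equiv.Perm (SameCycle)

universe u

variable {V : Type u} {Γ : LabeledGraph V} {e₁ : Sym2 V} {z : ArtinGroup Γ}

section CyclicWord

variable {e : Sym2 V} {g h : FreeGroup V} {v : V}

/-- The word `g` is read along a single cycle of sides, each carrying a power of an endpoint of
`e`: the boundary of a vertex of kind `e`. -/
def IsCyclicWord (e : Sym2 V) (g : FreeGroup V) : Prop :=
  ∃ (T : Type) (_ : Fintype T) (_ : DecidableEq T) (r : Perm T) (s : T) (v : T → V)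
    (b : T → FreeGroup V), (∀ t, r.SameCycle s t) ∧
      (∀ t, v t ∈ e ∧ ∃ n : ℤ, b t = FreeGroup.of (v t) ^ n) ∧ Reads r b s g

theorem isCyclicWord_zpow (hv : v ∈ e) (n : ℤ) : IsCyclicWord e (FreeGroup.of v ^ n) :=
  ⟨Unit, inferInstance, inferInstance, 1, (), fun _ => v, fun _ => FreeGroup.of v ^ n,
    fun _ => .refl _ _, fun _ => ⟨hv, n, rfl⟩, reads_one _ _⟩

theorem IsCyclicWord.mul (hg : IsCyclicWord e g) (hh : IsCyclicWord e h) :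
    IsCyclicWord e (g * h) := by
  obtain ⟨T, _, _, r, s, v, b, hr, hb, hreads⟩ := hg
  obtain ⟨T', _, _, r', s', v', b', hr', hb', hreads'⟩ := hh
  exact ⟨T ⊕ T', inferInstance, inferInstance, joinPerm r r' s s', Sum.inl s, Sum.elim v v',
    Sum.elim b b', Sum.rec (fun t => sameCycle_joinPerm_left (hr t))
      fun t => sameCycle_joinPerm_right (hr' t), Sum.rec hb hb', hreads.join hreads'⟩

theorem isCyclicWord_of_mem_closure
    (hg : g ∈ Subgroup.closure (FreeGroup.of '' {v | v ∈ e})) : IsCyclicWord e g := by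
  induction hg using Subgroup.closure_induction_right with
  | one =>
    have hv := isCyclicWord_zpow e.out_fst_mem 0
    rwa [zpow_zero] at hv
  | mul_right g _ y hy ih =>
    obtain ⟨v, hv, rfl⟩ := hy
    simpa using ih.mul (isCyclicWord_zpow hv 1)
  | mul_inv_cancel g _ y hy ih =>
    obtain ⟨v, hv, rfl⟩ := hy
    simpa using ih.mul (isCyclicWord_zpow hv (-1))

end CyclicWord

section FaceFilling

variable {e : Sym2 V} {g : FreeGroup V} {T : Type*} {he : e ∈ Γ.graph.edgeSet} {r : Perm T}
  {s t : T} {v : T → V} {b : T → FreeGroup V} {P : T → Pos Γ z}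
  {hb : ∀ t, v t ∈ e ∧ ∃ n : ℤ, b t = FreeGroup.of (v t) ^ n}
  {hP : ∀ t, P (r t) = (b t)⁻¹ • P t}

/-- The kinds of the ends of a side of `faceDecoration`. -/
def faceKind (e : Sym2 V) (v : T → V) : T ⊕ T → ∀ i, Kind V i
  | .inl _, false => none
  | .inr _, false => some e
  | .inl t, true | .inr t, true => v t

/-- The annulus between the exterior, with the permutation `r`, and a vertex of kind `e`. The two
copies of `t` form a vertex of kind `v t`. -/
def faceDecoration (he : e ∈ Γ.graph.edgeSet) (r : Perm T) (v : T → V)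
    (b : T → FreeGroup V) (P : T → Pos Γ z)
    (hb : ∀ t, v t ∈ e ∧ ∃ n : ℤ, b t = FreeGroup.of (v t) ^ n)
    (hP : ∀ t, P (r t) = (b t)⁻¹ • P t) : Decoration (system Γ e₁ z) (T ⊕ T) where
  f
    | false => Perm.sumCongr r r⁻¹
    | true => Equiv.sumComm T T
  kind := faceKind e v
  label := Sum.elim b b⁻¹
  pos := Sum.elim P (P ∘ r)
  kind_f := by rintro (_ | _) (t | t) <;> rfl
  label_adm := by
    rintro (t | t) <;> obtain ⟨hv, n, hn⟩ := hb t
    · exact ⟨⟨n, hn⟩, fun _ _ h => (Option.some_ne_none _ h.symm).elim⟩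
    · refine ⟨⟨-n, (congrArg (·⁻¹) hn).trans (zpow_neg _ n).symm⟩, fun _ e' h => ?_⟩
      obtain rfl : e = e' := Option.some_injective _ h
      exact ⟨he, hv⟩
  pos_f := by
    rintro (_ | _) (t | t)
    · exact hP t
    · change P (r (r⁻¹ t)) = (b t)⁻¹⁻¹ • P (r t)
      rw [hP t, inv_inv, smul_inv_smul]
      exact congrArg P (r.apply_symm_apply t)
    · exact hP t
    · change P t = (b t)⁻¹⁻¹ • P (r t)
      rw [hP t, inv_inv, smul_inv_smul]

theorem not_isDefect_faceDecoration_true (y : T ⊕ T) :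
    ¬ (faceDecoration (e₁ := e₁) he r v b P hb hP).IsDefect true y := by
  refine not_not.2 ⟨Sum.elim 1 b, ?_⟩
  rintro (t | t) -
  · exact (one_mul (b t)).symm
  · exact (mul_inv_cancel (b t)).symm

variable [Finite T]

theorem isDefect_faceDecoration_iff (hr : ∀ t, r.SameCycle s t) (h : Reads r b s g) :
    (faceDecoration (e₁ := e₁) he r v b P hb hP).IsDefect false (Sum.inr t) ↔
      PresentedGroup.mk (Γ.edgeGraph e).artinRels g ≠ 1 := by
  have hreads : Reads (Perm.sumCongr r r⁻¹) (Sum.elim b b⁻¹) (Sum.inr (r⁻¹ s)) g⁻¹ :=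
    Reads.embed (e := .inr) h.inv fun _ => rfl
  have hcycle : (Perm.sumCongr r r⁻¹).SameCycle (Sum.inr t) (Sum.inr (r⁻¹ s)) :=
    sameCycle_sumCongr_inr (Perm.sameCycle_inv.2 ((hr t).symm.trans (hr _)))
  refine not_congr ((trivialHolonomy_iff_of_sameCycle hcycle).trans ?_)
  refine (hreads.map (PresentedGroup.mk (Γ.edgeGraph e).artinRels)).trivialHolonomy_iff.trans ?_
  rw [map_inv, inv_eq_one]

theorem isInnerDefect_faceDecoration_iff (hr : ∀ t, r.SameCycle s t) (h : Reads r b s g)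
    {i : Bool} {y : T ⊕ T} :
    IsInnerDefect (faceDecoration (e₁ := e₁) he r v b P hb hP) i y ↔
      (i = false ∧ ∃ t, y = Sum.inr t) ∧ PresentedGroup.mk (Γ.edgeGraph e).artinRels g ≠ 1 := by
  constructor
  · rintro ⟨hinner, hdefect⟩
    cases i with
    | true => exact (not_isDefect_faceDecoration_true y hdefect).elim
    | false =>
      obtain t | t := y
      · exact (hinner rfl rfl).elim
      · exact ⟨⟨rfl, t, rfl⟩, (isDefect_faceDecoration_iff hr h).1 hdefect⟩
  · rintro ⟨⟨rfl, t, rfl⟩, hg⟩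
    exact ⟨fun _ => Option.some_ne_none e, (isDefect_faceDecoration_iff hr h).2 hg⟩

end FaceFilling

theorem isFilling_faceDecoration {e : Sym2 V} {g : FreeGroup V} {T : Type*} [Fintype T]
    {he : e ∈ Γ.graph.edgeSet} {r : Perm T} {s : T} {v : T → V} {b : T → FreeGroup V}
    {P : T → Pos Γ z} {hb : ∀ t, v t ∈ e ∧ ∃ n : ℤ, b t = FreeGroup.of (v t) ^ n}
    {hP : ∀ t, P (r t) = (b t)⁻¹ • P t} (hr : ∀ t, r.SameCycle s t) (h : Reads r b s g) :
    IsFilling (faceDecoration (e₁ := e₁) he r v b P hb hP) (Sum.inl s) g (P s)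
      {c | PresentedGroup.mk (Γ.edgeGraph e).artinRels g ≠ 1 ∧
        c = (system Γ e₁ z).cls false (some e : Option (Sym2 V)) (P s)} := by
  have hcycle (t t' : T) : r.SameCycle t t' := (hr t).symm.trans (hr t')
  have hinr (t t' : T) : (Perm.sumCongr r r⁻¹).SameCycle (Sum.inr t) (Sum.inr t') :=
    sameCycle_sumCongr_inr (Perm.sameCycle_inv.2 (hcycle t t'))
  have hcls (t : T) : (faceDecoration (e₁ := e₁) he r v b P hb hP).cls false (Sum.inr t) =
      (system Γ e₁ z).cls false (some e : Option (Sym2 V)) (P s) := by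
    refine (Decoration.cls_sameCycle _ (hinr (r⁻¹ s) t)).trans ?_
    exact congrArg (fun u => (system Γ e₁ z).cls false _ (P u)) (r.apply_symm_apply s)
  have := Nonempty.intro s
  exact {
    planar := planar_double hcycle
    base := rfl
    outer := by
      rintro (t | t) ht
      · exact sameCycle_sumCongr_inl (hr t)
      · exact (Option.some_ne_none e ht).elim
    pos := rfl
    reads := Reads.embed (e := .inl) h fun _ => rfl
    unique := by
      rintro i j y y' hy hy' -
      obtain ⟨⟨rfl, t, rfl⟩, -⟩ := (isInnerDefect_faceDecoration_iff hr h).1 hy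
      obtain ⟨⟨rfl, t', rfl⟩, -⟩ := (isInnerDefect_faceDecoration_iff hr h).1 hy'
      exact ⟨rfl, hinr t t'⟩
    mem_iff c := by
      constructor
      · rintro ⟨hg, rfl⟩
        exact ⟨false, Sum.inr s, (isInnerDefect_faceDecoration_iff hr h).2 ⟨⟨rfl, s, rfl⟩, hg⟩,
          hcls s⟩
      · rintro ⟨i, y, hy, rfl⟩
        obtain ⟨⟨rfl, t, rfl⟩, hg⟩ := (isInnerDefect_faceDecoration_iff hr h).1 hy
        exact ⟨hg, hcls t⟩ }

end ArtinSystem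

namespace ArtinSystem

open Equiv Hypermap LabeledGraph

universe u

variable {V : Type u} {Γ : LabeledGraph V} {e₁ : Sym2 V} {z : ArtinGroup Γ}

/-- Some filling reads `g` from the position `p`, and `T` is the set of the classes of its inner
defects. -/
def HasFilling (e₁ : Sym2 V) (g : FreeGroup V) (p : Pos Γ z) (T : Set Bool) : Prop :=
  ∃ (S : Type) (_ : Fintype S) (_ : DecidableEq S) (D : Decoration (system Γ e₁ z) S) (s₀ : S),
    IsFilling D s₀ g p T

namespace HasFilling

variable {g g' : FreeGroup V} {p : Pos Γ z} {T T' : Set Bool}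

theorem mul (h : HasFilling e₁ g p T) (h' : HasFilling e₁ g' p T') (hT : Disjoint T T') :
    HasFilling e₁ (g * g') p (T ∪ T') := by
  obtain ⟨S, _, _, D, s, h⟩ := h
  obtain ⟨S', _, _, D', s', h'⟩ := h'
  exact ⟨_, inferInstance, inferInstance, _, _, h.join h' hT⟩

theorem mul_empty (h : HasFilling e₁ g p T) (h' : HasFilling e₁ g' p ∅) :
    HasFilling e₁ (g * g') p T := by
  simpa only [Set.union_empty] using h.mul h' (Set.disjoint_empty T)

theorem vertex (v : V) (n : ℤ) (h : (FreeGroup.of v ^ n)⁻¹ • p = p) :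
    HasFilling e₁ (FreeGroup.of v ^ n) p {c | n ≠ 0 ∧ c = false} := by
  have hfill : HasFilling e₁ (FreeGroup.of v ^ n * FreeGroup.of v ^ (0 : ℤ)) p
      {c | n + 0 ≠ 0 ∧ c = false} :=
    ⟨_, inferInstance, inferInstance, _, _,
      isFilling_vertexDecoration (by rwa [zpow_zero, mul_one])⟩
  rwa [zpow_zero, mul_one, add_zero] at hfill

theorem one [Nonempty V] (p : Pos Γ z) : HasFilling e₁ 1 p ∅ := by
  simpa using vertex (e₁ := e₁) (p := p) (Classical.arbitrary V) 0

theorem face {e : Sym2 V} (he : e ∈ Γ.graph.edgeSet)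
    (hg : g ∈ Subgroup.closure (FreeGroup.of '' {v | v ∈ e})) (h : g⁻¹ • p = p) :
    HasFilling e₁ g p {c | PresentedGroup.mk (Γ.edgeGraph e).artinRels g ≠ 1 ∧
      c = (system Γ e₁ z).cls false (some e : Option (Sym2 V)) p} := by
  obtain ⟨T, _, _, r, s, v, b, hr, hb, hreads⟩ := isCyclicWord_of_mem_closure hg
  obtain ⟨P, rfl, hP⟩ := hreads.exists_orbit hr h
  exact ⟨_, inferInstance, inferInstance, faceDecoration he r v b P hb hP, _,
    isFilling_faceDecoration hr hreads⟩

/-- A vertex reading `v ^ (-n) * v ^ n`, joined at the base point, moves the base point along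
`v ^ n`. -/
theorem conj_zpow (h : HasFilling e₁ g p T) (v : V) (n : ℤ) :
    HasFilling e₁ (FreeGroup.of v ^ n * g * (FreeGroup.of v ^ n)⁻¹) (FreeGroup.of v ^ n • p) T := by
  obtain ⟨S, _, _, D, s, h⟩ := h
  have hcancel : FreeGroup.of v ^ (-n) * FreeGroup.of v ^ n = 1 := by
    rw [← zpow_add, neg_add_cancel, zpow_zero]
  have hvertex := isFilling_vertexDecoration (e₁ := e₁) (v := v) (m := -n) (n := n) (x := p)
    (by rw [hcancel, inv_one, one_smul])
  have hjoin := (h.join hvertex (Set.disjoint_left.2 fun c _ hc => hc.1 (neg_add_cancel n))).rebase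
    (t := Sum.inr true) (joinPerm_inr_of_eq (swap_apply_right false true))
  have hfill : HasFilling e₁
      (FreeGroup.of v ^ n * (g * (FreeGroup.of v ^ (-n) * FreeGroup.of v ^ n)) *
        (FreeGroup.of v ^ n)⁻¹)
      (FreeGroup.of v ^ n • p) (T ∪ {c | -n + n ≠ 0 ∧ c = false}) :=
    ⟨_, inferInstance, inferInstance, _, _, hjoin⟩
  have hT : T ∪ {c | -n + n ≠ 0 ∧ c = false} = T := by simp
  rwa [hT, hcancel, mul_one] at hfill

theorem conj (h : HasFilling e₁ g p T) (x : FreeGroup V) :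
    HasFilling e₁ (x * g * x⁻¹) (x • p) T := by
  induction x using FreeGroup.induction_on generalizing g p with
  | C1 => simpa using h
  | of v => simpa using h.conj_zpow v 1
  | inv_of v => simpa using h.conj_zpow v (-1)
  | mul x y hx hy =>
    have := hx (hy h)
    rwa [smul_smul, show x * (y * g * y⁻¹) * x⁻¹ = x * y * g * (x * y)⁻¹ by group] at this

end HasFilling

theorem smul_eq_of_mk_eq_one {g : FreeGroup V} (hg : PresentedGroup.mk Γ.artinRels g = 1)
    (p : Pos Γ z) : g • p = p := by
  obtain ⟨x, rfl⟩ : ∃ x, Pos.mk Γ z x = p := QuotientGroup.mk_surjective p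
  rw [Pos.smul_mk, hg, one_mul]

theorem altProd_mem {G : Type*} [Group G] {H : Subgroup G} (n : ℕ) {x y : G} (hx : x ∈ H)
    (hy : y ∈ H) : altProd n x y ∈ H := by
  induction n generalizing x y with
  | zero => exact one_mem H
  | succ n ih => exact mul_mem hx (ih hy hx)

theorem exists_edge_of_mem_artinRels {r : FreeGroup V} (hr : r ∈ Γ.artinRels) :
    ∃ e ∈ Γ.graph.edgeSet, r ∈ Subgroup.closure (FreeGroup.of '' {v | v ∈ e}) ∧
      PresentedGroup.mk (Γ.edgeGraph e).artinRels r = 1 := by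
  obtain ⟨a, b, hab, rfl⟩ := hr
  have ha : FreeGroup.of a ∈ Subgroup.closure (FreeGroup.of '' {v | v ∈ s(a, b)}) :=
    Subgroup.subset_closure ⟨a, Sym2.mem_mk_left a b, rfl⟩
  have hb : FreeGroup.of b ∈ Subgroup.closure (FreeGroup.of '' {v | v ∈ s(a, b)}) :=
    Subgroup.subset_closure ⟨b, Sym2.mem_mk_right a b, rfl⟩
  exact ⟨s(a, b), hab, mul_mem (altProd_mem _ ha hb) (inv_mem (altProd_mem _ hb ha)),
    PresentedGroup.one_of_mem ⟨a, b, ⟨hab, rfl⟩, rfl⟩⟩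

namespace HasFilling

variable {g : FreeGroup V} {p : Pos Γ z}

theorem of_mk_edgeGraph_eq_one {e : Sym2 V} (he : e ∈ Γ.graph.edgeSet)
    (hg : g ∈ Subgroup.closure (FreeGroup.of '' {v | v ∈ e})) (h : g⁻¹ • p = p)
    (h1 : PresentedGroup.mk (Γ.edgeGraph e).artinRels g = 1) : HasFilling e₁ g p ∅ := by
  simpa [h1] using face (e₁ := e₁) he hg h

theorem of_isConj {r : FreeGroup V} (h : ∀ p : Pos Γ z, HasFilling e₁ r p ∅) (hg : IsConj r g)
    (p : Pos Γ z) : HasFilling e₁ g p ∅ := by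
  obtain ⟨x, rfl⟩ := isConj_iff.1 hg
  simpa only [smul_inv_smul] using (h (x⁻¹ • p)).conj x

theorem of_mem_artinRels (hg : g ∈ Γ.artinRels) (p : Pos Γ z) :
    HasFilling e₁ g p ∅ ∧ HasFilling e₁ g⁻¹ p ∅ := by
  obtain ⟨e, he, hmem, h1⟩ := exists_edge_of_mem_artinRels hg
  have hg1 : PresentedGroup.mk Γ.artinRels g = 1 := PresentedGroup.one_of_mem hg
  exact ⟨of_mk_edgeGraph_eq_one he hmem (smul_eq_of_mk_eq_one (by rw [map_inv, hg1, inv_one]) p) h1,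
    of_mk_edgeGraph_eq_one he (inv_mem hmem)
      (smul_eq_of_mk_eq_one (by rw [inv_inv, hg1]) p) (by rw [map_inv, h1, inv_one])⟩

theorem of_mk_eq_one (hg : PresentedGroup.mk Γ.artinRels g = 1) (p : Pos Γ z) :
    HasFilling e₁ g p ∅ := by
  have hV : Nonempty V := ⟨e₁.out.1⟩
  have hmem : g ∈ Subgroup.normalClosure Γ.artinRels := (QuotientGroup.eq_one_iff g).1 hg
  rw [Subgroup.normalClosure] at hmem
  clear hg
  induction hmem using Subgroup.closure_induction'' generalizing p with
  | mem g hg =>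
    obtain ⟨r, hr, hconj⟩ := Group.mem_conjugatesOfSet_iff.1 hg
    exact of_isConj (fun q => (of_mem_artinRels hr q).1) hconj p
  | inv_mem g hg =>
    obtain ⟨r, hr, hconj⟩ := Group.mem_conjugatesOfSet_iff.1 hg
    obtain ⟨x, rfl⟩ := isConj_iff.1 hconj
    exact of_isConj (fun q => (of_mem_artinRels hr q).2) (isConj_iff.2 ⟨x, by group⟩) p
  | one => exact one p
  | mul g g' _ _ ih ih' => exact (ih p).mul_empty (ih' p)

theorem false {T : Set Bool} (h2d : Γ.TwoDimensional) (hz : Anisotropic Γ e₁ z)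
    (h : HasFilling e₁ g p T) (hg : PresentedGroup.mk Γ.artinRels g = 1) (hT : T.Nonempty) :
    False := by
  have hfill := h.mul_empty (of_mk_eq_one (g := g⁻¹) (by rw [map_inv, hg, inv_one]) p)
  rw [mul_inv_cancel] at hfill
  obtain ⟨S, _, _, D, s, hD⟩ := hfill
  obtain ⟨D', O', hP, hS, hI⟩ := D.exists_irreducible hD.planar (hD.separated hT)
  exact false_of_irreducible h2d hz hP hS hI

end HasFilling

end ArtinSystem

section WordMetric

variable {G : Type*} [Group G] {S : Set G}

theorem exists_length_eq_wordLength (hS : Subgroup.closure S = ⊤) (g : G) :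
    ∃ l : List G, l.length = wordLength S g ∧ (∀ x ∈ l, x ∈ S ∨ x⁻¹ ∈ S) ∧ l.prod = g := by
  have hg : g ∈ (Subgroup.closure S).toSubmonoid := hS ▸ Subgroup.mem_top g
  rw [Subgroup.closure_toSubmonoid] at hg
  obtain ⟨l, hl, hprod⟩ := Submonoid.exists_list_of_mem_closure hg
  exact Nat.sInf_mem (s := {n | ∃ l : List G, l.length = n ∧ (∀ x ∈ l, x ∈ S ∨ x⁻¹ ∈ S) ∧
    l.prod = g}) ⟨_, l, rfl, hl, hprod⟩

theorem finite_wordLength_lt (hfin : S.Finite) (hS : Subgroup.closure S = ⊤) (r : ℝ) :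
    {g : G | (wordLength S g : ℝ) < r}.Finite := by
  have hletters : Finite ↥(S ∪ S⁻¹) := (hfin.union hfin.inv).to_subtype
  refine ((List.finite_length_lt ↥(S ∪ S⁻¹) ⌈r⌉₊).image
    fun l => (l.map Subtype.val).prod).subset fun g hg => ?_
  obtain ⟨l, hl, hlS, hprod⟩ := exists_length_eq_wordLength hS g
  lift l to List ↥(S ∪ S⁻¹) using hlS
  rw [List.length_map] at hl
  exact ⟨l, by rw [Set.mem_ofPred_eq, hl]; exact Nat.lt_ceil.2 hg, hprod⟩

/-- Pigeonhole: each `g * x ^ n` is within a fixed distance of some `k * y ^ m`, and only finitely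
many elements are available for the difference. -/
theorem CoarseParallel.exists_zpow_eq (hfin : S.Finite) (hS : Subgroup.closure S = ⊤) {g k x y : G}
    (h : CoarseParallel (wordDist S) (leftCosetSet g (Subgroup.zpowers x))
      (leftCosetSet k (Subgroup.zpowers y))) :
    ∃ n m : ℤ, n ≠ 0 ∧ x ^ n = g⁻¹ * k * y ^ m * (g⁻¹ * k)⁻¹ := by
  obtain ⟨r, h, -⟩ := h
  have hnear (n : ℤ) : ∃ m : ℤ, (g * x ^ n)⁻¹ * (k * y ^ m) ∈ {c | (wordLength S c : ℝ) < r} := by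
    obtain ⟨_, ⟨_, ⟨m, rfl⟩, rfl⟩, hm⟩ := h (g * x ^ n) ⟨x ^ n, ⟨n, rfl⟩, rfl⟩
    exact ⟨m, hm⟩
  choose m hm using hnear
  obtain ⟨i, -, j, -, hij, heq⟩ := Set.infinite_univ.exists_ne_map_eq_of_mapsTo
    (fun n _ => hm n) (finite_wordLength_lt hfin hS r)
  refine ⟨j - i, m j - m i, sub_ne_zero.2 hij.symm, ?_⟩
  have heq' : (x ^ i)⁻¹ * (g⁻¹ * k) * y ^ m i = (x ^ j)⁻¹ * (g⁻¹ * k) * y ^ m j := by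
    simpa only [mul_inv_rev, mul_assoc] using heq
  calc x ^ (j - i) = x ^ j * ((x ^ i)⁻¹ * (g⁻¹ * k) * y ^ m i) * (y ^ m i)⁻¹ * (g⁻¹ * k)⁻¹ := by
        group
    _ = g⁻¹ * k * y ^ (m j - m i) * (g⁻¹ * k)⁻¹ := by rw [heq']; group

theorem sq_zpow_eq_conj_of_zpow_eq_conj {x y c : G} {n m : ℤ} (h : x ^ n = c * y ^ m * c⁻¹) :
    (x ^ 2) ^ n = c * (y ^ 2) ^ m * c⁻¹ := by
  rw [← zpow_natCast, ← zpow_natCast, zpow_comm, h, conj_zpow, zpow_comm]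

theorem leftCosetSet_eq_of_inv_mul_mem {g k : G} {H : Subgroup G} (h : g⁻¹ * k ∈ H) :
    leftCosetSet g H = leftCosetSet k H :=
  (leftCoset_eq_iff H).2 h

end WordMetric

namespace ArtinSystem

open LabeledGraph

universe u

variable {V : Type u} {Γ : LabeledGraph V}

/-- The square of the Garside element of an edge, as an element of the free group. -/
def deltaSqWord (Γ : LabeledGraph V) (a b : V) : FreeGroup V :=
  altProd (Γ.label a b) (FreeGroup.of a) (FreeGroup.of b) ^ 2

theorem deltaSqWord_mem (Γ : LabeledGraph V) (a b : V) :
    deltaSqWord Γ a b ∈ Subgroup.closure (FreeGroup.of '' {v | v ∈ s(a, b)}) :=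
  pow_mem (altProd_mem _ (Subgroup.subset_closure (Set.mem_image_of_mem _ (Sym2.mem_mk_left a b)))
    (Subgroup.subset_closure (Set.mem_image_of_mem _ (Sym2.mem_mk_right a b)))) 2

theorem mk_deltaSqWord (Γ : LabeledGraph V) (a b : V) :
    PresentedGroup.mk Γ.artinRels (deltaSqWord Γ a b) = artinDelta Γ a b ^ 2 := by
  rw [deltaSqWord, map_pow, map_altProd]
  rfl

theorem mk_edgeGraph_deltaSqWord (Γ : LabeledGraph V) (e : Sym2 V) (a b : V) :
    PresentedGroup.mk (Γ.edgeGraph e).artinRels (deltaSqWord Γ a b) =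
      artinDelta (Γ.edgeGraph e) a b ^ 2 :=
  mk_deltaSqWord (Γ.edgeGraph e) a b

theorem edgeStandardSubgroup_eq_map (Γ : LabeledGraph V) (e : Sym2 V) :
    edgeStandardSubgroup Γ e = (Subgroup.closure (FreeGroup.of '' {v | v ∈ e})).map
      (PresentedGroup.mk Γ.artinRels) := by
  rw [MonoidHom.map_closure, Set.image_image]
  rfl

theorem edgeStandardSubgroup_mk (Γ : LabeledGraph V) (a b : V) :
    edgeStandardSubgroup Γ s(a, b) = edgeSubgroup Γ a b := by
  rw [edgeStandardSubgroup, standardSubgroup, edgeSubgroup, ← Set.image_pair]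
  congr 2
  ext v
  exact Sym2.mem_iff

theorem artinDelta_sq_zpow_mem (Γ : LabeledGraph V) (a b : V) (n : ℤ) :
    (artinDelta Γ a b ^ 2) ^ n ∈ edgeStandardSubgroup Γ s(a, b) := by
  rw [edgeStandardSubgroup_eq_map, ← mk_deltaSqWord]
  exact zpow_mem (Subgroup.mem_map_of_mem _ (deltaSqWord_mem Γ a b)) n

theorem anisotropic_one (Γ : LabeledGraph V) (e : Sym2 V) : Anisotropic Γ e 1 := by
  intro p _ v _ n j h
  rw [one_zpow] at h
  exact ArtinGroup.eq_zero_of_artinGen_zpow_eq_one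
    ((MulAut.conj p⁻¹).injective (by simpa using h))

theorem mk_edgeGraph_eq_one (h2d : Γ.TwoDimensional) {e : Sym2 V} (he : e ∈ Γ.graph.edgeSet)
    {g : FreeGroup V} (hg : g ∈ Subgroup.closure (FreeGroup.of '' {v | v ∈ e}))
    (h : PresentedGroup.mk Γ.artinRels g = 1) :
    PresentedGroup.mk (Γ.edgeGraph e).artinRels g = 1 := by
  by_contra hne
  exact (HasFilling.face he hg (smul_eq_of_mk_eq_one (by rw [map_inv, h, inv_one])
    (Pos.mk Γ 1 1))).false h2d (anisotropic_one Γ e) h ⟨_, hne, rfl⟩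

theorem anisotropic_artinDelta_sq_zpow (h2d : Γ.TwoDimensional) {a b : V} (hab : Γ.graph.Adj a b)
    (hl : 3 ≤ Γ.label a b) (m : ℤ) : Anisotropic Γ s(a, b) ((artinDelta Γ a b ^ 2) ^ m) := by
  intro p hp v hv n j h
  rw [edgeStandardSubgroup_eq_map] at hp
  obtain ⟨q, hq, rfl⟩ := hp
  have hedge : PresentedGroup.mk (Γ.edgeGraph s(a, b)).artinRels
      (q⁻¹ * FreeGroup.of v ^ n * q * (deltaSqWord Γ a b ^ (m * j))⁻¹) = 1 := by
    refine mk_edgeGraph_eq_one h2d hab ?_ ?_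
    · exact mul_mem (mul_mem (mul_mem (inv_mem hq)
        (zpow_mem (Subgroup.subset_closure (Set.mem_image_of_mem _ hv)) n)) hq)
        (inv_mem (zpow_mem (deltaSqWord_mem Γ a b) _))
    · rw [map_mul, map_inv, map_zpow, mk_deltaSqWord, mul_inv_eq_one, zpow_mul, ← h, map_mul,
        map_mul, map_inv, map_zpow]
      rfl
  rw [map_mul, map_inv, mul_inv_eq_one, map_mul, map_mul, map_inv, map_zpow, map_zpow,
    mk_edgeGraph_deltaSqWord] at hedge
  exact Dihedral.eq_zero_of_conj_artinGen_zpow rfl hab hl hv hedge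

section Conjugate

variable {a b : V} {n : ℤ} {h : ArtinGroup Γ} {w : FreeGroup V}

theorem smul_mk_inv_of_conj {z : ArtinGroup Γ}
    (hw : PresentedGroup.mk Γ.artinRels w = h⁻¹ * z * h) :
    w • Pos.mk Γ z h⁻¹ = Pos.mk Γ z h⁻¹ := by
  rw [Pos.smul_mk, hw, Pos.mk_eq_iff]
  exact ⟨-1, by group⟩

/-- A filling of `w⁻¹` without defects of the home class, carried to the home position by `h` and
joined to the face reading `Δ ^ (2 * n)`, would leave a single defect in that class. -/
theorem not_hasFilling_of_conj (h2d : Γ.TwoDimensional) (hab : Γ.graph.Adj a b)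
    (hl : 3 ≤ Γ.label a b) (hn : n ≠ 0) {T : Set Bool}
    (hw : PresentedGroup.mk Γ.artinRels w = h⁻¹ * (artinDelta Γ a b ^ 2) ^ n * h)
    (hT : true ∉ T) :
    ¬ HasFilling s(a, b) w⁻¹ (Pos.mk Γ ((artinDelta Γ a b ^ 2) ^ n) h⁻¹) T := by
  intro hfill
  obtain ⟨k, rfl⟩ := PresentedGroup.mk_surjective Γ.artinRels h
  set z := (artinDelta Γ a b ^ 2) ^ n
  have hdelta : PresentedGroup.mk Γ.artinRels (deltaSqWord Γ a b ^ n) = z := by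
    rw [map_zpow, mk_deltaSqWord]
  have hne : PresentedGroup.mk (Γ.edgeGraph s(a, b)).artinRels (deltaSqWord Γ a b ^ n) ≠ 1 := by
    rw [map_zpow, mk_edgeGraph_deltaSqWord]
    exact mt (ArtinGroup.eq_zero_of_artinDelta_sq_zpow_eq_one (Γ := Γ.edgeGraph s(a, b))
      (show Γ.label a b ≠ 0 by omega)) hn
  have hface := HasFilling.face (e₁ := s(a, b)) (p := Pos.mk Γ z 1) hab
    (zpow_mem (deltaSqWord_mem Γ a b) n) (by
      rw [Pos.smul_mk, map_inv, hdelta, Pos.mk_eq_iff]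
      exact ⟨1, by group⟩)
  have hhome : (system Γ s(a, b) z).cls false (some s(a, b) : Option (Sym2 V))
      (Pos.mk Γ z 1) = true :=
    cls_eq_true_iff.2 ⟨rfl, 1, one_mem _, rfl⟩
  have hcarried := hfill.conj k
  rw [Pos.smul_mk, mul_inv_cancel] at hcarried
  rw [hhome] at hface
  have hdisj : Disjoint {c | PresentedGroup.mk (Γ.edgeGraph s(a, b)).artinRels
      (deltaSqWord Γ a b ^ n) ≠ 1 ∧ c = true} T := by
    rw [Set.disjoint_left]
    rintro _ ⟨-, rfl⟩
    exact hT
  refine (hface.mul hcarried hdisj).false h2d (anisotropic_artinDelta_sq_zpow h2d hab hl n) ?_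
    ⟨true, .inl ⟨hne, rfl⟩⟩
  rw [map_mul, hdelta, map_mul, map_mul, map_inv, map_inv, hw]
  group

theorem eq_and_mem_of_conj (h2d : Γ.TwoDimensional) (hab : Γ.graph.Adj a b)
    (hl : 3 ≤ Γ.label a b) (hn : n ≠ 0) {e : Sym2 V} (he : e ∈ Γ.graph.edgeSet)
    (hwe : w ∈ Subgroup.closure (FreeGroup.of '' {v | v ∈ e}))
    (hw : PresentedGroup.mk Γ.artinRels w = h⁻¹ * (artinDelta Γ a b ^ 2) ^ n * h) :
    e = s(a, b) ∧ h ∈ edgeStandardSubgroup Γ s(a, b) := by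
  by_contra hne
  refine not_hasFilling_of_conj h2d hab hl hn hw ?_
    (HasFilling.face he (inv_mem hwe) (by rw [inv_inv, smul_mk_inv_of_conj hw]))
  rintro ⟨-, hcls⟩
  obtain ⟨heq, p, hp, hpos⟩ := cls_eq_true_iff.1 hcls.symm
  refine hne ⟨Option.some_injective _ heq, ?_⟩
  obtain ⟨j, hj⟩ := Pos.mk_eq_iff.1 hpos
  rw [inv_inv] at hj
  rw [eq_mul_inv_of_mul_eq hj.symm]
  exact mul_mem (zpow_mem (artinDelta_sq_zpow_mem Γ a b n) j) (inv_mem hp)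

theorem artinGen_zpow_ne_conj (h2d : Γ.TwoDimensional) (hab : Γ.graph.Adj a b)
    (hl : 3 ≤ Γ.label a b) (hn : n ≠ 0) (v : V) (k : ℤ) :
    artinGen Γ v ^ k ≠ h⁻¹ * (artinDelta Γ a b ^ 2) ^ n * h := by
  intro hv
  have hw : PresentedGroup.mk Γ.artinRels (FreeGroup.of v ^ k) =
      h⁻¹ * (artinDelta Γ a b ^ 2) ^ n * h := (map_zpow _ _ _).trans hv
  refine not_hasFilling_of_conj h2d hab hl hn hw (T := {c | -k ≠ 0 ∧ c = false})
    (fun hT => Bool.noConfusion hT.2) ?_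
  rw [← zpow_neg]
  exact HasFilling.vertex v (-k) (by rw [zpow_neg, inv_inv, smul_mk_inv_of_conj hw])

end Conjugate

end ArtinSystem

namespace ArtinGroup

variable {V : Type*} [Finite V] {Γ : LabeledGraph V} {a b : V} {g k : ArtinGroup Γ}

theorem exists_zpow_eq_of_coarseParallel {x y : ArtinGroup Γ}
    (h : CoarseParallel (artinDist Γ) (leftCosetSet g (Subgroup.zpowers x))
      (leftCosetSet k (Subgroup.zpowers y))) :
    ∃ n m : ℤ, n ≠ 0 ∧ x ^ n = g⁻¹ * k * y ^ m * (g⁻¹ * k)⁻¹ :=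
  CoarseParallel.exists_zpow_eq (Set.finite_range _) (PresentedGroup.closure_range_of _) h

theorem leftCosetSet_eq_of_coarseParallel (h2d : Γ.TwoDimensional) (hab : Γ.graph.Adj a b)
    (hl : 3 ≤ Γ.label a b) {c d : V} (hcd : Γ.graph.Adj c d)
    (h : CoarseParallel (artinDist Γ) (leftCosetSet g (Subgroup.zpowers (artinDelta Γ a b)))
      (leftCosetSet k (Subgroup.zpowers (artinDelta Γ c d)))) :
    leftCosetSet g (edgeSubgroup Γ a b) = leftCosetSet k (edgeSubgroup Γ c d) := by
  obtain ⟨n, m, hn, hnm⟩ := exists_zpow_eq_of_coarseParallel h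
  have hconj : PresentedGroup.mk Γ.artinRels (ArtinSystem.deltaSqWord Γ c d ^ m) =
      (g⁻¹ * k)⁻¹ * (artinDelta Γ a b ^ 2) ^ n * (g⁻¹ * k) := by
    rw [map_zpow, ArtinSystem.mk_deltaSqWord, sq_zpow_eq_conj_of_zpow_eq_conj hnm]
    group
  obtain ⟨hedge, hmem⟩ := ArtinSystem.eq_and_mem_of_conj h2d hab hl hn (e := s(c, d)) hcd
    (zpow_mem (ArtinSystem.deltaSqWord_mem Γ c d) m) hconj
  rw [← ArtinSystem.edgeStandardSubgroup_mk, ← ArtinSystem.edgeStandardSubgroup_mk, hedge]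
  exact leftCosetSet_eq_of_inv_mul_mem hmem

theorem not_coarseParallel_artinGen_artinDelta (h2d : Γ.TwoDimensional) (hab : Γ.graph.Adj a b)
    (hl : 3 ≤ Γ.label a b) (v : V) :
    ¬ CoarseParallel (artinDist Γ) (leftCosetSet k (Subgroup.zpowers (artinGen Γ v)))
      (leftCosetSet g (Subgroup.zpowers (artinDelta Γ a b))) := by
  intro h
  obtain ⟨n, m, hn, hnm⟩ := exists_zpow_eq_of_coarseParallel h
  have hm : m ≠ 0 := by
    rintro rfl
    exact hn (eq_zero_of_artinGen_zpow_eq_one (by simpa using hnm))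
  refine ArtinSystem.artinGen_zpow_ne_conj h2d hab hl hm v (2 * n) (h := (k⁻¹ * g)⁻¹) ?_
  rw [zpow_mul, inv_inv]
  exact sq_zpow_eq_conj_of_zpow_eq_conj hnm

end ArtinGroup

theorem parallel_diamond_lines_same_block_general {V : Type*} [Finite V]
    (Γ : LabeledGraph V) (h2d : Γ.TwoDimensional)
    (a₁ b₁ a₂ b₂ : V) (h₁ : Γ.graph.Adj a₁ b₁) (h₂ : Γ.graph.Adj a₂ b₂)
    (hl₁ : 3 ≤ Γ.label a₁ b₁) (g₁ g₂ : ArtinGroup Γ) :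
    (CoarseParallel (artinDist Γ)
        (leftCosetSet g₁ (Subgroup.zpowers (artinDelta Γ a₁ b₁)))
        (leftCosetSet g₂ (Subgroup.zpowers (artinDelta Γ a₂ b₂))) →
      leftCosetSet g₁ (edgeSubgroup Γ a₁ b₁) = leftCosetSet g₂ (edgeSubgroup Γ a₂ b₂)) ∧
    ∀ (a : V) (g : ArtinGroup Γ),
      ¬ CoarseParallel (artinDist Γ)
          (leftCosetSet g (Subgroup.zpowers (artinGen Γ a)))
          (leftCosetSet g₁ (Subgroup.zpowers (artinDelta Γ a₁ b₁))) :=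
  ⟨ArtinGroup.leftCosetSet_eq_of_coarseParallel h2d h₁ hl₁ h₂,
    fun a _ => ArtinGroup.not_coarseParallel_artinGen_artinDelta h2d h₁ hl₁ a⟩

/-- In a `2`-dimensional Artin group, parallel diamond lines lie in
the same block: if `g₁⟨Δ_{e₁}⟩` and `g₂⟨Δ_{e₂}⟩` (labels `≥ 3`) are at finite
Hausdorff distance then `g₁ A_{e₁} = g₂ A_{e₂}`; moreover no coset `g⟨a⟩` of a vertex
cyclic subgroup is at finite Hausdorff distance from `g₁⟨Δ_{e₁}⟩`. -/
theorem parallel_diamond_lines_same_block {V : Type*} [Finite V]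
    (Γ : LabeledGraph V) (h2d : Γ.TwoDimensional)
    (a₁ b₁ a₂ b₂ : V) (h₁ : Γ.graph.Adj a₁ b₁) (h₂ : Γ.graph.Adj a₂ b₂)
    (hl₁ : 3 ≤ Γ.label a₁ b₁) (hl₂ : 3 ≤ Γ.label a₂ b₂)
    (g₁ g₂ : ArtinGroup Γ) :
    (CoarseParallel (artinDist Γ)
        (leftCosetSet g₁ (Subgroup.zpowers (artinDelta Γ a₁ b₁)))
        (leftCosetSet g₂ (Subgroup.zpowers (artinDelta Γ a₂ b₂))) →
      leftCosetSet g₁ (edgeSubgroup Γ a₁ b₁) = leftCosetSet g₂ (edgeSubgroup Γ a₂ b₂)) ∧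
    ∀ (a : V) (g : ArtinGroup Γ),
      ¬ CoarseParallel (artinDist Γ)
          (leftCosetSet g (Subgroup.zpowers (artinGen Γ a)))
          (leftCosetSet g₁ (Subgroup.zpowers (artinDelta Γ a₁ b₁))) :=
  parallel_diamond_lines_same_block_general Γ h2d a₁ b₁ a₂ b₂ h₁ h₂ hl₁ g₁ g₂
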